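/- (Posterior concentration for nonparametric logistic regression.) Let a ≥ 1, d ∈ ℕ, β > 0, K ≥ 1, F ≥ 1 and ν ∈ [0,1). Suppose (X_i, Y_i), i = 1, …, n, are i.i.d. with X ∼ P_X supported on X ⊆ [−a,a]^d and Y | X ∼ Bernoulli(φ(f_0(X))), where φ(z) = (1 + e^{−z})^{−1}, f_0 ∈ H_d^β(K) and ‖f_0‖_∞ ≤ F. Consider the Bayesian model Y_i ∼ Bernoulli(φ(T_F ∘ f_{θ,ρν}(X_i))) where f_{θ,ρν} is a Leaky-ReLU DNN with architecture (L_n, (d, r_n, …, r_n, 1)), L_n = ⌈C_L log n⌉ and r_n = ⌈C_r n^{d/(2(2β+d))}⌉ for the constants C_L, C_r of the bounded-parameter approximation theorem, with a prior Π_θ on ℝ^{T_n} satisfying Assumption 1. Then for ε_n = n^{−β/(2β+d)} (log n)^γ with γ > 2 and any sequence M_n → ∞, the posterior mass Π_n( θ : ‖φ ∘ T_F ∘ f_{θ,ρν} − φ ∘ f_0‖_{2,P_X} > M_n ε_n | D^{(n)} ) converges to 0 in probability under the law P_0^n of the training data. -/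

import Mathlib

open MeasureTheory ProbabilityTheory Filter
open scoped ENNReal NNReal

noncomputable section

/-- Leaky-ReLU activation. -/
def lrelu (ν x : ℝ) : ℝ := max x (ν * x)

/-- A fully connected Leaky-ReLU network with input dimension `d` and hidden width `r`:
a first affine layer `ℝ^d → ℝ^r`, a list of inner affine layers `ℝ^r → ℝ^r`, and an
output affine layer `ℝ^r → ℝ`.  Each affine layer except the last is followed by the
componentwise Leaky-ReLU activation.  The number of hidden layers (the depth) is
`hid.length + 1`. -/
structure LNet (d r : ℕ) where
  W0 : Fin r → Fin d → ℝ
  b0 : Fin r → ℝ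
  hid : List ((Fin r → Fin r → ℝ) × (Fin r → ℝ))
  Wout : Fin r → ℝ
  bout : ℝ

/-- Evaluation of a Leaky-ReLU network. -/
def LNet.eval (ν : ℝ) {d r : ℕ} (net : LNet d r) (x : Fin d → ℝ) : ℝ :=
  let h := net.hid.foldl
    (fun (h : Fin r → ℝ) p => fun i => lrelu ν ((∑ j, p.1 i j * h j) + p.2 i))
    (fun i => lrelu ν ((∑ j, net.W0 i j * x j) + net.b0 i))
  (∑ i, net.Wout i * h i) + net.bout

/-- All weights and biases of the network are bounded by `B` in absolute value. -/
def LNet.bounded {d r : ℕ} (net : LNet d r) (B : ℝ) : Prop :=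
  (∀ i j, |net.W0 i j| ≤ B) ∧ (∀ i, |net.b0 i| ≤ B) ∧
  (∀ p ∈ net.hid, (∀ i j, |p.1 i j| ≤ B) ∧ (∀ i, |p.2 i| ≤ B)) ∧
  (∀ i, |net.Wout i| ≤ B) ∧ |net.bout| ≤ B

/-- Membership in the class `F_{ρν}^{DNN}(L, r, B)` of Leaky-ReLU networks with
architecture `(L, (d, r, …, r, 1))` and all parameters bounded by `B`. -/
def memDNN (ν : ℝ) (d L r : ℕ) (B : ℝ) (f : (Fin d → ℝ) → ℝ) : Prop :=
  ∃ net : LNet d r, net.hid.length + 1 = L ∧ net.bounded B ∧ ∀ x, f x = net.eval ν x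

/-- The cube `[−a,a]^d`. -/
def cube (a : ℝ) (d : ℕ) : Set (Fin d → ℝ) := {x | ∀ i, x i ∈ Set.Icc (-a) a}

/-- Partial derivative of `f : ℝ^d → ℝ` in coordinate `i`. -/
def pder {d : ℕ} (i : Fin d) (f : (Fin d → ℝ) → ℝ) : (Fin d → ℝ) → ℝ :=
  fun x => fderiv ℝ f x (Pi.single i 1)

/-- Multi-index partial derivative `∂^α f = ∂_1^{α 1} ⋯ ∂_d^{α d} f`. -/
def pderm {d : ℕ} (α : Fin d → ℕ) (f : (Fin d → ℝ) → ℝ) : (Fin d → ℝ) → ℝ :=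
  (List.finRange d).foldr (fun i g => (pder i)^[α i] g) f

/-- Membership in the Hölder ball `H_d^β(K)` on `[−a,a]^d`: `f` is `⌊β⌋`-times
continuously differentiable and there are bounds `S α` on `|∂^α f|` over the cube for all
multi-indices with `|α|₁ < β`, and Hölder constants `H α` for `∂^α f` (with exponent
`β − ⌊β⌋`, with respect to the sup-norm) for all multi-indices with `|α|₁ = ⌊β⌋`, whose
total sum is at most `K`. -/
def memHolder (a : ℝ) (d : ℕ) (β K : ℝ) (f : (Fin d → ℝ) → ℝ) : Prop :=
  ContDiff ℝ (⌊β⌋₊ : ℕ∞) f ∧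
  ∃ S H : (Fin d → Fin (⌊β⌋₊ + 1)) → ℝ,
    (∀ α : Fin d → Fin (⌊β⌋₊ + 1), ((∑ i, (α i : ℕ) : ℕ) : ℝ) < β →
      ∀ x ∈ cube a d, |pderm (fun i => (α i : ℕ)) f x| ≤ S α) ∧
    (∀ α : Fin d → Fin (⌊β⌋₊ + 1), (∑ i, (α i : ℕ)) = ⌊β⌋₊ →
      ∀ x₁ ∈ cube a d, ∀ x₂ ∈ cube a d, x₁ ≠ x₂ →
        |pderm (fun i => (α i : ℕ)) f x₁ - pderm (fun i => (α i : ℕ)) f x₂| ≤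
          H α * ‖x₁ - x₂‖ ^ (β - (⌊β⌋₊ : ℝ))) ∧
    (∑ α ∈ Finset.univ.filter
        (fun α : Fin d → Fin (⌊β⌋₊ + 1) => ((∑ i, (α i : ℕ) : ℕ) : ℝ) < β), S α) +
      (∑ α ∈ Finset.univ.filter
        (fun α : Fin d → Fin (⌊β⌋₊ + 1) => (∑ i, (α i : ℕ)) = ⌊β⌋₊), H α) ≤ K

/-- Index type for the parameters `θ` of a DNN with architecture `(L, (d, r, …, r, 1))`:
first-layer weights and biases, the `L−1` inner-layer weight matrices and bias vectors,
and the output-layer weights and bias.  Its cardinality is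
`T = (d+1)r + (L−1)(r+1)r + (r+1)`. -/
abbrev ParamIdx (d r L : ℕ) : Type :=
  (Fin r × Fin d) ⊕ Fin r ⊕ (Fin (L - 1) × Fin r × Fin r) ⊕ (Fin (L - 1) × Fin r) ⊕
    Fin r ⊕ Unit

/-- The Leaky-ReLU network with architecture `(L, (d, r, …, r, 1))` determined by the
parameter vector `θ`. -/
def netOfParams (ν : ℝ) (d r L : ℕ) (θ : ParamIdx d r L → ℝ) (x : Fin d → ℝ) : ℝ :=
  let h0 : Fin r → ℝ := fun i =>
    lrelu ν ((∑ j, θ (Sum.inl (i, j)) * x j) + θ (Sum.inr (Sum.inl i)))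
  let h : Fin r → ℝ := (List.finRange (L - 1)).foldl
    (fun h l => fun i =>
      lrelu ν ((∑ j, θ (Sum.inr (Sum.inr (Sum.inl (l, i, j)))) * h j) +
        θ (Sum.inr (Sum.inr (Sum.inr (Sum.inl (l, i))))))) h0
  (∑ i, θ (Sum.inr (Sum.inr (Sum.inr (Sum.inr (Sum.inl i))))) * h i) +
    θ (Sum.inr (Sum.inr (Sum.inr (Sum.inr (Sum.inr ())))))

/-- Truncation operator `T_F(x) = min(max(x, −F), F)`. -/
def trunc (F x : ℝ) : ℝ := min (max x (-F)) F

/-- The Gaussian density with mean `m` and variance `s`, evaluated at `y`. -/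
def gpdf (m s y : ℝ) : ℝ :=
  (Real.sqrt (2 * Real.pi * s))⁻¹ * Real.exp (-((y - m) ^ 2) / (2 * s))

/-- The joint law of `(X, Y)` where `X ∼ P_X` and `Y | X ∼ N(f₀(X), v)`. -/
def gaussRegLaw (d : ℕ) (PX : Measure (Fin d → ℝ)) (f₀ : (Fin d → ℝ) → ℝ) (v : ℝ≥0) :
    Measure ((Fin d → ℝ) × ℝ) :=
  PX.bind fun x => (gaussianReal (f₀ x) v).map fun y => (x, y)

/-- Posterior mass of the set `A` under prior `prior` and likelihood `lik`. -/
def postMass {α : Type*} [MeasurableSpace α] (prior : Measure α) (lik : α → ℝ)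
    (A : Set α) : ℝ≥0∞ :=
  (∫⁻ p in A, ENNReal.ofReal (lik p) ∂prior) / ∫⁻ p, ENNReal.ofReal (lik p) ∂prior

/-- The `L²(P_X)` distance `‖g − h‖_{2,P_X}`. -/
def l2dist (d : ℕ) (PX : Measure (Fin d → ℝ)) (g h : (Fin d → ℝ) → ℝ) : ℝ :=
  Real.sqrt (∫ x, (g x - h x) ^ 2 ∂PX)

/-- The Gaussian regression likelihood of `(θ, σ²)` given the data `D`. -/
def gaussLik (ν F : ℝ) (d r L : ℕ) {n : ℕ} (D : Fin n → (Fin d → ℝ) × ℝ)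
    (p : (ParamIdx d r L → ℝ) × ℝ) : ℝ :=
  ∏ i, gpdf (trunc F (netOfParams ν d r L p.1 (D i).1)) p.2 (D i).2

/-- The sigmoid function `φ(z) = (1 + e^{−z})⁻¹`. -/
def sigmoid (z : ℝ) : ℝ := (1 + Real.exp (-z))⁻¹

/-- The Bernoulli distribution on `ℝ` with success probability `p` (mass `p` at `1` and
`1 − p` at `0`). -/
def bern (p : ℝ) : Measure ℝ :=
  ENNReal.ofReal p • Measure.dirac 1 + ENNReal.ofReal (1 - p) • Measure.dirac 0

/-- The joint law of `(X, Y)` where `X ∼ P_X` and `Y | X ∼ Bernoulli(φ(f₀(X)))`. -/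
def logisticLaw (d : ℕ) (PX : Measure (Fin d → ℝ)) (f₀ : (Fin d → ℝ) → ℝ) :
    Measure ((Fin d → ℝ) × ℝ) :=
  PX.bind fun x => (bern (sigmoid (f₀ x))).map fun y => (x, y)

/-- The logistic-regression (Bernoulli) likelihood of `θ` given the data `D`. -/
def bernLik (ν F : ℝ) (d r L : ℕ) {n : ℕ} (D : Fin n → (Fin d → ℝ) × ℝ)
    (θ : ParamIdx d r L → ℝ) : ℝ :=
  ∏ i, sigmoid (trunc F (netOfParams ν d r L θ (D i).1)) ^ (D i).2 *
    (1 - sigmoid (trunc F (netOfParams ν d r L θ (D i).1))) ^ (1 - (D i).2)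

/-- The depth `L_n = ⌈C_L log n⌉` of the Bayesian model. -/
def Ldepth (CL : ℝ) (n : ℕ) : ℕ := ⌈CL * Real.log n⌉₊

/-- The width `r_n = ⌈C_r n^{d/(2(2β+d))}⌉` of the Bayesian model. -/
def rwidth (Cr β : ℝ) (d n : ℕ) : ℕ :=
  ⌈Cr * (n : ℝ) ^ ((d : ℝ) / (2 * (2 * β + d)))⌉₊

/-
Posterior contraction by tests, without a sieve. On finitely many inputs, every hidden layer is a
piecewise polynomial function of the parameters whose number of pieces is multiplied, from one layer
to the next, by at most the number of sign patterns of the pre-activations, and Warren's theorem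
bounds the number of sign patterns. Comparing the network with a grid of thresholds in `[-F, F]`
therefore produces few patterns, uniformly over all of `ℝ^T`. Functions that are far apart in
`L²(P_X)` are told apart by these patterns at some `n` points, because `n` random points do it with
positive probability; so the truncated networks have small `L²(P_X)` covers without any bound on
their parameters.

The test of `p₀` against `p` rejects for large values of `∑ᵢ (Yᵢ − p₀(Xᵢ)) (p(Xᵢ) − p₀(Xᵢ))`, and
both of its error probabilities are exponentially small in `n ‖p − p₀‖²`. The evidence is bounded
below through the prior mass of a box around the parameters of a network approximating `f₀`. A
network is Lipschitz in its bounded parameters with a constant of order `n ^ O(L)`, so the negative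
logarithm of that mass, like the logarithm of the covering number, is `O(n ε_n²)`.
-/

section PolynomialMaps

open MvPolynomial

variable {σ K : Type*} [Fintype σ]

theorem finrank_restrictDegree [CommRing K] [Nontrivial K] (k : ℕ) :
    Module.finrank K (restrictDegree σ K k) = (k + 1) ^ Fintype.card σ := by
  have exponents : {m : σ →₀ ℕ | ∀ i, m i ≤ k} ≃ (σ → Fin (k + 1)) :=
    { toFun := fun m i => ⟨m.1 i, Nat.lt_succ_of_le (m.2 i)⟩
      invFun := fun α => ⟨Finsupp.equivFunOnFinite.symm fun i => α i,
        fun i => Nat.le_of_lt_succ (α i).2⟩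
      left_inv := fun m => Subtype.ext (Finsupp.ext fun _ => rfl)
      right_inv := fun α => rfl }
  rw [restrictDegree, Module.finrank_eq_nat_card_basis (basisRestrictSupport K _),
    Nat.card_congr exponents]
  simp [Nat.card_fun, Nat.card_eq_fintype_card]

variable [Field K]

theorem not_linearIndependent_of_totalDegree_le {ι : Type*} [Fintype ι] {k : ℕ}
    {w : ι → MvPolynomial σ K} (hw : ∀ i, (w i).totalDegree ≤ k)
    (hcard : (k + 1) ^ Fintype.card σ < Fintype.card ι) : ¬ LinearIndependent K w := by
  intro h
  have : Module.Finite K (restrictDegree σ K k) :=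
    Module.finite_of_finrank_pos (by rw [finrank_restrictDegree]; positivity)
  let w' (i : ι) : restrictDegree σ K k := ⟨w i,
    restrictTotalDegree_le_restrictDegree _ _ _ ((mem_restrictTotalDegree _ _ _).2 (hw i))⟩
  have independent : LinearIndependent K w' := h.of_comp (restrictDegree σ K k).subtype
  have hle := independent.fintype_card_le_finrank
  rw [finrank_restrictDegree] at hle
  exact hle.not_gt hcard

/-- The exponent vector of a monomial whose individual degrees are at most `J`. -/
def boundedExponent {J : ℕ} (α : σ → Fin (J + 1)) : σ →₀ ℕ :=
  Finsupp.equivFunOnFinite.symm fun i => α i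

theorem boundedExponent_injective {J : ℕ} :
    Function.Injective (boundedExponent : (σ → Fin (J + 1)) → σ →₀ ℕ) := fun α α' h => by
  simpa [boundedExponent, funext_iff, Fin.ext_iff] using h

-- There are more products `u ^ j * ∏ P s ^ α s` with all exponents at most `J` than the dimension
-- of the space containing them; a linear relation among them is the relation sought.
theorem exists_annihilating_polynomial_of_totalDegree_le {E : ℕ} (P : σ → MvPolynomial σ K)
    (hP : ∀ i, (P i).totalDegree ≤ E) (u : MvPolynomial σ K) (hu : u.totalDegree ≤ 1) :
    ∃ A : Polynomial (MvPolynomial σ K), A ≠ 0 ∧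
      A.natDegree ≤ (1 + Fintype.card σ * E) ^ Fintype.card σ ∧
      A.eval₂ (eval₂Hom C P) u = 0 := by
  classical
  obtain ⟨T, hT⟩ : ∃ T, T = Fintype.card σ := ⟨_, rfl⟩
  obtain ⟨J, hJ⟩ : ∃ J, J = (1 + T * E) ^ T := ⟨_, rfl⟩
  rw [← hT, ← hJ]
  let w : Fin (J + 1) × (σ → Fin (J + 1)) → MvPolynomial σ K :=
    fun i => u ^ (i.1 : ℕ) * ∏ s, P s ^ (i.2 s : ℕ)
  have w_degree (i) : (w i).totalDegree ≤ J + T * (J * E) := by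
    have hu_pow : (u ^ (i.1 : ℕ)).totalDegree ≤ J * 1 :=
      (totalDegree_pow _ _).trans (Nat.mul_le_mul i.1.is_le hu)
    have hP_pow : ∀ s ∈ Finset.univ, (P s ^ (i.2 s : ℕ)).totalDegree ≤ J * E := fun s _ =>
      (totalDegree_pow _ _).trans (Nat.mul_le_mul (i.2 s).is_le (hP s))
    have hprod := (totalDegree_finsetProd _ _).trans (Finset.sum_le_card_nsmul _ _ _ hP_pow)
    rw [Finset.card_univ, ← hT, smul_eq_mul] at hprod
    exact (totalDegree_mul _ _).trans (by linarith)
  have dim_lt : (J + T * (J * E) + 1) ^ T < (J + 1) * (J + 1) ^ T :=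
    calc (J + T * (J * E) + 1) ^ T ≤ ((J + 1) * (1 + T * E)) ^ T :=
          Nat.pow_le_pow_left (by nlinarith) _
      _ = J * (J + 1) ^ T := by rw [mul_pow, ← hJ, mul_comm]
      _ < (J + 1) * (J + 1) ^ T := Nat.mul_lt_mul_of_pos_right J.lt_succ_self (by positivity)
  obtain ⟨c, hc, ⟨j₀, α₀⟩, hc₀⟩ := Fintype.not_linearIndependent_iff.1 <|
    not_linearIndependent_of_totalDegree_le w_degree (by simpa [← hT] using dim_lt)
  refine ⟨∑ i, Polynomial.monomial i.1 (monomial (boundedExponent i.2) (c i)),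
    fun hzero => hc₀ ?_, Polynomial.natDegree_sum_le_of_forall_le _ _ fun i _ =>
      (Polynomial.natDegree_monomial_le _).trans i.1.is_le, ?_⟩
  · have hcoeff := congrArg (fun q => coeff (boundedExponent α₀) (Polynomial.coeff q j₀)) hzero
    simpa [Polynomial.finsetSum_coeff, Polynomial.coeff_monomial, Fintype.sum_prod_type,
      boundedExponent_injective.eq_iff, Fin.val_inj, apply_ite, coeff_sum, coeff_monomial]
      using hcoeff
  · rw [Polynomial.eval₂_finsetSum, ← hc]
    refine Finset.sum_congr rfl fun i _ => ?_
    rw [Polynomial.eval₂_monomial, eval₂Hom_monomial,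
      Finsupp.prod_fintype _ _ (fun _ => pow_zero _), MvPolynomial.smul_eq_C_mul]
    simp only [w, boundedExponent, Finsupp.equivFunOnFinite_symm_apply_apply]
    ring

theorem exists_separating_linearForms (σ K : Type*) [Fintype σ] [Field K] [Infinite K] (N : ℕ) :
    ∃ U : Finset (σ → K), ∀ s : Finset (σ → K), s.card = N → ∃ c ∈ U, Set.InjOn (c ⬝ᵥ ·) s := by
  classical
  obtain ⟨t, ht⟩ := Infinite.exists_subset_card_eq K (N * N * Fintype.card σ + 1)
  let e := Fintype.equivFin σ
  refine ⟨t.image fun z i => z ^ (e i : ℕ), fun s hs => ?_⟩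
  let difference (p : (σ → K) × (σ → K)) : Polynomial K :=
    ∑ i, Polynomial.monomial (e i) (p.1 i - p.2 i)
  have difference_degree (p) : (difference p).natDegree ≤ Fintype.card σ :=
    Polynomial.natDegree_sum_le_of_forall_le _ _ fun i _ =>
      (Polynomial.natDegree_monomial_le _).trans (e i).2.le
  have difference_ne_zero {p} (hp : p.1 ≠ p.2) : difference p ≠ 0 := fun hzero => hp <| by
    ext i
    have hcoeff := congrArg (fun q => Polynomial.coeff q (e i)) hzero
    simpa [difference, Polynomial.finsetSum_coeff, Polynomial.coeff_monomial, Fin.val_inj,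
      sub_eq_zero] using hcoeff
  let bad : Finset K := (s ×ˢ s).biUnion fun p => (difference p).roots.toFinset
  have bad_card : bad.card < t.card := by
    rw [ht, Nat.lt_succ_iff, ← hs, ← Finset.card_product]
    exact Finset.card_biUnion_le_card_mul _ _ _ fun p _ => (Multiset.toFinset_card_le _).trans
      ((Polynomial.card_roots' _).trans (difference_degree p))
  obtain ⟨z, hzt, hz⟩ := Finset.exists_mem_notMem_of_card_lt_card bad_card
  refine ⟨_, Finset.mem_image_of_mem _ hzt, fun x hx y hy hxy => ?_⟩
  by_contra hne
  refine hz (Finset.mem_biUnion.2 ⟨(x, y), Finset.mk_mem_product hx hy, ?_⟩)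
  rw [Multiset.mem_toFinset, Polynomial.mem_roots (difference_ne_zero hne)]
  simpa [difference, Polynomial.eval_finsetSum, Polynomial.eval_monomial, dotProduct, mul_comm,
    sub_mul, Finset.sum_sub_distrib, sub_eq_zero] using hxy

-- On the fiber over a generic `v`, a linear form separating the points is a root of one univariate
-- polynomial of controlled degree.
theorem le_pow_of_card_fiber [Infinite K] {N E : ℕ} (P : σ → MvPolynomial σ K)
    (hP : ∀ i, (P i).totalDegree ≤ E) {S : Set K} (hS : S.Infinite)
    (hN : ∀ v : σ → K, (∀ i, v i ∈ S) →
      ∃ s : Finset (σ → K), s.card = N ∧ ∀ y ∈ s, ∀ i, eval y (P i) = v i) :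
    N ≤ (1 + Fintype.card σ * E) ^ Fintype.card σ := by
  classical
  obtain ⟨U, hU⟩ := exists_separating_linearForms σ K N
  let form (c : σ → K) : MvPolynomial σ K := ∑ i, C (c i) * X i
  have form_degree (c) : (form c).totalDegree ≤ 1 :=
    (totalDegree_finsetSum _ _).trans <| Finset.sup_le fun i _ =>
      (totalDegree_mul _ _).trans (by rw [totalDegree_C, totalDegree_X])
  choose Q Q_ne Q_degree Q_annihilates using
    fun c => exists_annihilating_polynomial_of_totalDegree_le P hP (form c) (form_degree c)
  obtain ⟨v, hvS, hv⟩ : ∃ v : σ → K, (∀ i, v i ∈ S) ∧ ∀ c ∈ U, eval v (Q c).leadingCoeff ≠ 0 := by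
    by_contra! hcon
    have hprod : ∏ c ∈ U, (Q c).leadingCoeff = 0 :=
      funext_set (fun _ => S) (fun _ => hS) fun v hv => by
        obtain ⟨c, hc, hzero⟩ := hcon v fun i => hv i (Set.mem_univ i)
        rw [map_prod, map_zero, Finset.prod_eq_zero hc hzero]
    obtain ⟨c, -, hc⟩ := Finset.prod_eq_zero_iff.1 hprod
    exact Q_ne c (Polynomial.leadingCoeff_eq_zero.1 hc)
  obtain ⟨s, rfl, hs⟩ := hN v hvS
  obtain ⟨c, hcU, hinj⟩ := hU s rfl
  let q := (Q c).map (eval v)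
  have q_ne : q ≠ 0 := fun h => hv c hcU <| by
    simpa [q] using congrArg (fun p => Polynomial.coeff p (Q c).natDegree) h
  have q_root (y) (hy : y ∈ s) : c ⬝ᵥ y ∈ q.roots.toFinset := by
    have hzero := congrArg (eval y) (Q_annihilates c)
    have eval_comp : (eval y).comp (eval₂Hom C P) = eval v := by
      ext <;> simp [hs y hy]
    rw [Polynomial.hom_eval₂, eval_comp, map_zero] at hzero
    rw [Multiset.mem_toFinset, Polynomial.mem_roots q_ne, Polynomial.IsRoot, Polynomial.eval_map]
    simpa [form, dotProduct] using hzero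
  calc s.card = (s.image (c ⬝ᵥ ·)).card := (Finset.card_image_of_injOn hinj).symm
    _ ≤ q.roots.toFinset.card := Finset.card_le_card (Finset.image_subset_iff.2 q_root)
    _ ≤ q.natDegree := (Multiset.toFinset_card_le _).trans (Polynomial.card_roots' _)
    _ ≤ _ := (Polynomial.natDegree_map_le).trans (Q_degree c)

end PolynomialMaps

section SignPatterns

open MvPolynomial

theorem totalDegree_pderiv_le {σ R : Type*} [CommSemiring R] (i : σ) (p : MvPolynomial σ R) :
    (pderiv i p).totalDegree ≤ p.totalDegree := by
  classical
  conv_lhs => rw [p.as_sum, map_sum]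
  refine (totalDegree_finsetSum _ _).trans (Finset.sup_le fun m hm => ?_)
  rw [pderiv_monomial]
  refine (totalDegree_monomial_le _ _).trans (le_trans ?_ (le_totalDegree hm))
  exact Finsupp.sum_le_sum_index tsub_le_self (fun _ _ => monotone_id) (fun _ _ => rfl)

theorem hasFDerivAt_eval {σ 𝕜 : Type*} [Fintype σ] [NontriviallyNormedField 𝕜]
    (p : MvPolynomial σ 𝕜) (y : σ → 𝕜) :
    HasFDerivAt (fun x => eval x p)
      (∑ i, eval y (pderiv i p) • (ContinuousLinearMap.proj i : (σ → 𝕜) →L[𝕜] 𝕜)) y := by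
  classical
  induction p using MvPolynomial.induction_on with
  | C a =>
    simpa only [eval_C] using (hasFDerivAt_const (𝕜 := 𝕜) a y).congr_fderiv
      (ContinuousLinearMap.ext fun x => by simp)
  | add p q hp hq =>
    simpa only [map_add] using (hp.fun_add hq).congr_fderiv
      (ContinuousLinearMap.ext fun x => by simp [add_mul, Finset.sum_add_distrib])
  | mul_X p j hp =>
    have hX : HasFDerivAt (fun x : σ → 𝕜 => x j) (ContinuousLinearMap.proj j) y :=
      (ContinuousLinearMap.proj (R := 𝕜) (φ := fun _ : σ => 𝕜) j).hasFDerivAt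
    simpa only [map_mul, eval_X] using (hp.fun_mul hX).congr_fderiv
      (ContinuousLinearMap.ext fun x => by
        simp [pderiv_X, Pi.single_apply, apply_ite, mul_add, Finset.sum_add_distrib,
          Finset.mul_sum, mul_comm, mul_left_comm])

-- The maximum of `g - ℓ` over the compact closure of `U` is positive up to an error small with `ℓ`,
-- whereas `g` vanishes on the frontier; so this maximum is attained inside `U`.
theorem eventually_exists_fderiv_eq_of_pos {E : Type*} [NormedAddCommGroup E] [NormedSpace ℝ E]
    [ProperSpace E] {g : E → ℝ} (hg : Differentiable ℝ g) {U : Set E} (hU : IsOpen U)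
    (hbounded : Bornology.IsBounded U) (hfrontier : ∀ y ∈ frontier U, g y = 0)
    {x : E} (hxU : x ∈ U) (hgx : 0 < g x) :
    ∀ᶠ ℓ in nhds (0 : E →L[ℝ] ℝ), ∃ y ∈ U, fderiv ℝ g y = ℓ := by
  obtain ⟨R, hR⟩ := hbounded.closure.subset_closedBall x
  have small : ∀ᶠ ℓ in nhds (0 : E →L[ℝ] ℝ), ‖ℓ‖ * R < g x :=
    (by fun_prop : Continuous fun ℓ : E →L[ℝ] ℝ => ‖ℓ‖ * R).continuousAt.eventually_lt_const
      (by simpa using hgx)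
  filter_upwards [small] with ℓ hℓ
  have hdiff : Differentiable ℝ fun y => g y - ℓ y := hg.sub ℓ.differentiable
  obtain ⟨y, hy, hmax⟩ := (Metric.isCompact_of_isClosed_isBounded isClosed_closure
    hbounded.closure).exists_isMaxOn ⟨x, subset_closure hxU⟩ hdiff.continuous.continuousOn
  have hyU : y ∈ U := by
    by_contra hyU
    have gy_zero : g y = 0 := hfrontier y (hU.frontier_eq ▸ ⟨hy, hyU⟩)
    have value_le : g x - ℓ x ≤ g y - ℓ y := hmax (subset_closure hxU)
    have slope_le : ℓ (x - y) ≤ ‖ℓ‖ * R := (le_abs_self _).trans <| (ℓ.le_opNorm _).trans <|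
      mul_le_mul_of_nonneg_left (by simpa [dist_eq_norm, norm_sub_rev] using hR hy) (norm_nonneg ℓ)
    rw [map_sub] at slope_le
    linarith
  have hcritical : fderiv ℝ (fun y => g y - ℓ y) y = 0 :=
    (hmax.isLocalMax (Filter.mem_of_superset (hU.mem_nhds hyU) subset_closure)).fderiv_eq_zero
  rw [fderiv_fun_sub (hg y) ℓ.differentiableAt, ℓ.fderiv, sub_eq_zero] at hcritical
  exact ⟨y, hyU, hcritical⟩

theorem eventually_exists_fderiv_eq {E : Type*} [NormedAddCommGroup E] [NormedSpace ℝ E]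
    [ProperSpace E] {g : E → ℝ} (hg : Differentiable ℝ g) {U : Set E} (hU : IsOpen U)
    (hbounded : Bornology.IsBounded U) (hfrontier : ∀ y ∈ frontier U, g y = 0)
    {x : E} (hxU : x ∈ U) (hgx : g x ≠ 0) :
    ∀ᶠ ℓ in nhds (0 : E →L[ℝ] ℝ), ∃ y ∈ U, fderiv ℝ g y = ℓ := by
  rcases hgx.lt_or_gt with hneg | hpos
  · have h := eventually_exists_fderiv_eq_of_pos hg.neg hU hbounded
      (fun y hy => by simp [hfrontier y hy]) hxU (by simpa using hneg)
    rw [← neg_zero] at h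
    filter_upwards [(continuous_neg.tendsto (0 : E →L[ℝ] ℝ)).eventually h] with ℓ ⟨y, hyU, hy⟩
    exact ⟨y, hyU, by simpa only [fderiv_neg, neg_inj] using hy⟩
  · exact eventually_exists_fderiv_eq_of_pos hg hU hbounded hfrontier hxU hpos

theorem eventually_exists_eval_pderiv_eq {σ : Type*} [Finite σ] (G : MvPolynomial σ ℝ)
    {U : Set (σ → ℝ)} (hU : IsOpen U)
    (hbounded : Bornology.IsBounded U) (hfrontier : ∀ y ∈ frontier U, eval y G = 0)
    {x : σ → ℝ} (hxU : x ∈ U) (hGx : eval x G ≠ 0) :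
    ∀ᶠ v in nhds (0 : σ → ℝ), ∃ y ∈ U, ∀ i, eval y (pderiv i G) = v i := by
  classical
  have := Fintype.ofFinite σ
  let toDual (v : σ → ℝ) : (σ → ℝ) →L[ℝ] ℝ := ∑ i, v i • ContinuousLinearMap.proj i
  have toDual_tendsto : Tendsto toDual (nhds 0) (nhds 0) := by
    simpa [toDual] using (by fun_prop : Continuous toDual).tendsto 0
  have toDual_single (v : σ → ℝ) (i : σ) : toDual v (Pi.single i 1) = v i := by
    simp [toDual, Pi.single_apply]
  filter_upwards [toDual_tendsto.eventually <| eventually_exists_fderiv_eq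
    (fun y => (hasFDerivAt_eval G y).differentiableAt) hU hbounded hfrontier hxU hGx]
    with v ⟨y, hyU, hy⟩
  rw [(hasFDerivAt_eval G y).fderiv] at hy
  exact ⟨y, hyU, fun i => by
    simpa only [toDual_single] using (toDual_single _ i).symm.trans (DFunLike.congr_fun hy _)⟩

variable {σ ι : Type*} [Fintype σ]

/-- The open part of the ball of radius `√R` on which every `f i` has the same strict sign as at
`x`. -/
def signCell (f : ι → MvPolynomial σ ℝ) (R : ℝ) (x : σ → ℝ) : Set (σ → ℝ) :=
  {y | ∑ i, y i ^ 2 < R ∧ ∀ i, 0 < eval x (f i) * eval y (f i)}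

/-- A polynomial vanishing on the boundary of every `signCell f R x`. -/
def cellBoundary [Fintype ι] (f : ι → MvPolynomial σ ℝ) (R : ℝ) : MvPolynomial σ ℝ :=
  (C R - ∑ i, X i ^ 2) * ∏ i, f i

theorem eval_cellBoundary [Fintype ι] (f : ι → MvPolynomial σ ℝ) (R : ℝ) (x : σ → ℝ) :
    eval x (cellBoundary f R) = (R - ∑ i, x i ^ 2) * ∏ i, eval x (f i) := by
  simp [cellBoundary]

theorem totalDegree_cellBoundary_le [Fintype ι] {D : ℕ} {f : ι → MvPolynomial σ ℝ}
    (hf : ∀ i, (f i).totalDegree ≤ D) (R : ℝ) :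
    (cellBoundary f R).totalDegree ≤ Fintype.card ι * D + 2 := by
  have hprod : (∏ i, f i).totalDegree ≤ Fintype.card ι * D :=
    (totalDegree_finsetProd _ _).trans <| by
      simpa using Finset.sum_le_card_nsmul Finset.univ _ D fun i _ => hf i
  have hball : (C R - ∑ i : σ, X i ^ 2 : MvPolynomial σ ℝ).totalDegree ≤ 2 :=
    (totalDegree_sub _ _).trans <| max_le ((totalDegree_C R).trans_le zero_le) <|
      (totalDegree_finsetSum _ _).trans <| Finset.sup_le fun i _ => by simp
  exact (totalDegree_mul _ _).trans (by linarith)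

theorem isOpen_signCell [Finite ι] (f : ι → MvPolynomial σ ℝ) (R : ℝ) (x : σ → ℝ) :
    IsOpen (signCell f R x) := by
  have hf (i) : Continuous fun y => eval y (f i) := (f i).continuous_eval
  simp only [signCell, Set.ofPred_and, Set.ofPred_forall]
  exact (isOpen_lt (by fun_prop) continuous_const).inter
    (isOpen_iInter_of_finite fun i => isOpen_lt continuous_const ((hf i).const_mul _))

theorem isBounded_signCell (f : ι → MvPolynomial σ ℝ) (R : ℝ) (x : σ → ℝ) :
    Bornology.IsBounded (signCell f R x) := by
  refine (Metric.isBounded_closedBall (x := (0 : σ → ℝ)) (r := R + 1)).subset fun y hy => ?_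
  have norm_bound (i) : |y i| ≤ R + 1 := by
    have := Finset.single_le_sum (f := fun i => y i ^ 2) (fun i _ => sq_nonneg _)
      (Finset.mem_univ i)
    exact abs_le_of_sq_le_sq (by nlinarith [hy.1, sq_nonneg (y i)])
      (by nlinarith [hy.1, sq_nonneg (y i)])
  have hR : 0 ≤ R + 1 := by
    linarith [hy.1, Finset.sum_nonneg fun i (_ : i ∈ Finset.univ) => sq_nonneg (y i)]
  simpa [pi_norm_le_iff_of_nonneg hR] using norm_bound

theorem eval_eq_zero_of_mem_frontier_signCell [Fintype ι] (f : ι → MvPolynomial σ ℝ) (R : ℝ)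
    {x : σ → ℝ} (hx : ∀ i, eval x (f i) ≠ 0) {y : σ → ℝ} (hy : y ∈ frontier (signCell f R x)) :
    eval y (cellBoundary f R) = 0 := by
  have hf (i) : Continuous fun y => eval y (f i) := (f i).continuous_eval
  let closedCell := {y : σ → ℝ | ∑ i, y i ^ 2 ≤ R ∧ ∀ i, 0 ≤ eval x (f i) * eval y (f i)}
  have closed : IsClosed closedCell := by
    simp only [closedCell, Set.ofPred_and, Set.ofPred_forall]
    exact (isClosed_le (by fun_prop) continuous_const).inter
      (isClosed_iInter fun i => isClosed_le continuous_const ((hf i).const_mul _))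
  have hsub : signCell f R x ⊆ closedCell := fun z hz => ⟨hz.1.le, fun i => (hz.2 i).le⟩
  rw [(isOpen_signCell f R x).frontier_eq] at hy
  obtain ⟨hball, hsign⟩ := closure_minimal hsub closed hy.1
  by_contra hne
  simp only [eval_cellBoundary, mul_eq_zero, Finset.prod_eq_zero_iff, Finset.mem_univ, true_and,
    not_or, not_exists, sub_eq_zero] at hne
  exact hy.2 ⟨hball.lt_of_ne (Ne.symm hne.1), fun i => (hsign i).lt_of_ne
    (mul_ne_zero (hx i) (hne.2 i)).symm⟩

/-- Warren's bound on the number of sign patterns of `m` polynomials of degree at most `D` in `T`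
variables. -/
def signPatternBound (T m D : ℕ) : ℕ := (1 + T * (m * D + 2)) ^ T

variable [Fintype ι] {D : ℕ} (f : ι → MvPolynomial σ ℝ)

-- Every sign cell contains a preimage of each small `v` under the gradient of the
-- product of all `f i` and `R - ∑ X i ^ 2`, so Bezout bounds the number of cells.
theorem ncard_strict_sign_patterns_le (hf : ∀ i, (f i).totalDegree ≤ D) :
    ((fun x i => 0 < eval x (f i)) '' {x | ∀ i, eval x (f i) ≠ 0}).ncard ≤
      signPatternBound (Fintype.card σ) (Fintype.card ι) D := by
  classical
  let patterns := (fun x i => 0 < eval x (f i)) '' {x | ∀ i, eval x (f i) ≠ 0}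
  have : Fintype patterns := Fintype.ofFinite _
  choose x hx hx_pattern using fun p : patterns => p.2
  obtain ⟨b, hb⟩ := (Set.finite_range fun p => ∑ i, x p i ^ 2).bddAbove
  have norm_lt (p) : ∑ i, x p i ^ 2 < b + 1 := (hb ⟨p, rfl⟩).trans_lt (lt_add_one b)
  let G := cellBoundary f (b + 1)
  have preimages : ∀ᶠ v in nhds (0 : σ → ℝ), ∀ p,
      ∃ y ∈ signCell f (b + 1) (x p), ∀ i, eval y (pderiv i G) = v i :=
    eventually_all.2 fun p => eventually_exists_eval_pderiv_eq G (isOpen_signCell f _ _)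
      (isBounded_signCell f _ _) (fun y => eval_eq_zero_of_mem_frontier_signCell f _ (hx p))
      (x := x p) ⟨norm_lt p, fun i => mul_self_pos.2 (hx p i)⟩ <| by
        simp [G, eval_cellBoundary, Finset.prod_eq_zero_iff, hx p _, (sub_pos.2 (norm_lt p)).ne']
  obtain ⟨ε, hε, hball⟩ := Metric.eventually_nhds_iff_ball.1 preimages
  refine le_pow_of_card_fiber (fun i => pderiv i G)
    (fun i => (totalDegree_pderiv_le i G).trans (totalDegree_cellBoundary_le hf _))
    (infinite_of_mem_nhds (0 : ℝ) (Metric.ball_mem_nhds 0 hε)) fun v hv => ?_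
  choose y hy_cell hy_grad using hball v <| by
    simpa [pi_norm_lt_iff hε] using hv
  refine ⟨Finset.univ.image y, ?_, Finset.forall_mem_image.2 fun p _ => hy_grad p⟩
  have y_injective : Function.Injective y := fun p q hpq => Subtype.ext <| by
    rw [← hx_pattern p, ← hx_pattern q]
    ext i
    have hp := (hy_cell p).2 i
    have hq := (hy_cell q).2 i
    rw [hpq] at hp
    rcases pos_and_pos_or_neg_and_neg_of_mul_pos hp with ⟨h₁, h₂⟩ | ⟨h₁, h₂⟩
    · simp only [h₁, pos_of_mul_pos_left hq h₂.le]
    · simp only [h₁.not_gt, (neg_of_mul_pos_left hq h₂.le).not_gt]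
  rw [Finset.card_image_of_injective _ y_injective, Finset.card_univ, ← Nat.card_eq_fintype_card,
    Nat.card_coe_set_eq]

theorem ncard_sign_patterns_le (hf : ∀ i, (f i).totalDegree ≤ D) :
    (Set.range fun x i => 0 ≤ eval x (f i)).ncard ≤
      signPatternBound (Fintype.card σ) (Fintype.card ι) D := by
  choose x hx using fun p : Set.range fun x i => 0 ≤ eval x (f i) => p.2
  have gap : ∀ᶠ ζ in nhdsWithin (0 : ℝ) (Set.Ioi 0),
      ∀ p i, eval (x p) (f i) < 0 → eval (x p) (f i) < -ζ := by
    refine eventually_all.2 fun p => eventually_all.2 fun i => ?_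
    by_cases hneg : eval (x p) (f i) < 0
    · filter_upwards [Ioo_mem_nhdsGT (neg_pos.2 hneg)] with ζ hζ _ using lt_neg.1 hζ.2
    · exact Eventually.of_forall fun _ h => absurd h hneg
  obtain ⟨ζ, hζ, hζ_pos⟩ := (gap.and self_mem_nhdsWithin).exists
  replace hζ_pos : 0 < ζ := hζ_pos
  refine le_trans (Set.ncard_le_ncard ?_ (Set.toFinite _)) <|
    ncard_strict_sign_patterns_le (fun i => f i + C ζ) fun i =>
      (totalDegree_add _ _).trans (max_le (hf i) (by simp))
  intro p hp
  refine ⟨x ⟨p, hp⟩, fun i hzero => ?_, ?_⟩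
  · have hi := hζ ⟨p, hp⟩ i
    rw [map_add, eval_C] at hzero
    linarith [hi (by linarith)]
  · refine (funext fun i => propext ?_ : _ = _).trans (hx ⟨p, hp⟩)
    have hi := hζ ⟨p, hp⟩ i
    simp only [map_add, eval_C]
    exact ⟨fun h => not_lt.1 fun hneg => by linarith [hi hneg], fun h => by linarith⟩

end SignPatterns

theorem lrelu_of_nonneg {ν x : ℝ} (hν : ν ≤ 1) (hx : 0 ≤ x) : lrelu ν x = x :=
  max_eq_left (mul_le_of_le_one_left hx hν)

theorem lrelu_of_nonpos {ν x : ℝ} (hν : ν ≤ 1) (hx : x ≤ 0) : lrelu ν x = ν * x :=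
  max_eq_right (by nlinarith)

section PiecewisePolynomials

open MvPolynomial

theorem signPatternBound_pos (T m D : ℕ) : 0 < signPatternBound T m D := by
  unfold signPatternBound
  positivity

theorem signPatternBound_mono (T : ℕ) {m m' D D' : ℕ} (hm : m ≤ m') (hD : D ≤ D') :
    signPatternBound T m D ≤ signPatternBound T m' D' := by
  unfold signPatternBound
  gcongr

variable {σ κ κ' ι : Type*} {N D : ℕ} {h : (σ → ℝ) → κ → ℝ}

/-- `h` agrees at every point with one of at most `N` tuples of polynomials of degree at most
`D`. The regions on which a given tuple is used are left implicit. -/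
def IsPiecewisePoly (N D : ℕ) (h : (σ → ℝ) → κ → ℝ) : Prop :=
  ∃ S : Finset (κ → MvPolynomial σ ℝ), S.card ≤ N ∧ (∀ q ∈ S, ∀ k, (q k).totalDegree ≤ D) ∧
    ∀ θ, ∃ q ∈ S, ∀ k, h θ k = eval θ (q k)

namespace IsPiecewisePoly

theorem const (c : κ → ℝ) : IsPiecewisePoly 1 0 fun (_ : σ → ℝ) => c :=
  ⟨{fun k => C (c k)}, by simp, by simp, fun θ => ⟨_, Finset.mem_singleton_self _, by simp⟩⟩

theorem mono {N' D' : ℕ} (hh : IsPiecewisePoly N D h) (hN : N ≤ N') (hD : D ≤ D') :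
    IsPiecewisePoly N' D' h :=
  let ⟨S, hS, hdeg, heval⟩ := hh
  ⟨S, hS.trans hN, fun q hq k => (hdeg q hq k).trans hD, heval⟩

theorem sub_const (hh : IsPiecewisePoly N D h) (g : κ' → κ) (t : κ' → ℝ) :
    IsPiecewisePoly N D fun θ k => h θ (g k) - t k := by
  classical
  obtain ⟨S, hS, hdeg, heval⟩ := hh
  refine ⟨S.image fun q k => q (g k) - C (t k), Finset.card_image_le.trans hS, ?_, fun θ => ?_⟩
  · exact Finset.forall_mem_image.2 fun q hq k =>
      (totalDegree_sub_C_le _ _).trans (hdeg q hq _)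
  · obtain ⟨q, hq, hθ⟩ := heval θ
    exact ⟨_, Finset.mem_image_of_mem _ hq, by simp [hθ]⟩

theorem affine [Fintype ι] (hh : IsPiecewisePoly N D h) (g : κ' → ι → κ) (w : κ' → ι → σ)
    (b : κ' → σ) :
    IsPiecewisePoly N (D + 1) fun θ k => (∑ j, θ (w k j) * h θ (g k j)) + θ (b k) := by
  classical
  obtain ⟨S, hS, hdeg, heval⟩ := hh
  refine ⟨S.image fun q k => (∑ j, X (w k j) * q (g k j)) + X (b k),
    Finset.card_image_le.trans hS, ?_, fun θ => ?_⟩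
  · refine Finset.forall_mem_image.2 fun q hq k => (totalDegree_add _ _).trans (max_le ?_ ?_)
    · refine (totalDegree_finsetSum _ _).trans (Finset.sup_le fun j _ => ?_)
      exact (totalDegree_mul _ _).trans (by
        rw [totalDegree_X, add_comm]; exact Nat.add_le_add_right (hdeg q hq _) 1)
    · rw [totalDegree_X]
      exact Nat.le_add_left 1 D
  · obtain ⟨q, hq, hθ⟩ := heval θ
    exact ⟨_, Finset.mem_image_of_mem _ hq, by simp [hθ]⟩

variable [Fintype σ] [Fintype κ]

theorem lrelu (hh : IsPiecewisePoly N D h) {ν : ℝ} (hν : ν ≤ 1) :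
    IsPiecewisePoly (N * signPatternBound (Fintype.card σ) (Fintype.card κ) D) D
      fun θ k => lrelu ν (h θ k) := by
  classical
  obtain ⟨S, hS, hdeg, heval⟩ := hh
  let patterns (q : κ → MvPolynomial σ ℝ) : Finset (κ → Prop) :=
    (Set.range fun θ k => 0 ≤ eval θ (q k)).toFinite.toFinset
  let branch (q : κ → MvPolynomial σ ℝ) (s : κ → Prop) (k : κ) : MvPolynomial σ ℝ :=
    if s k then q k else ν • q k
  have card_patterns (q) (hq : q ∈ S) : ((patterns q).image (branch q)).card ≤
      signPatternBound (Fintype.card σ) (Fintype.card κ) D :=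
    Finset.card_image_le.trans <| by
      rw [← Set.ncard_eq_toFinset_card]
      exact ncard_sign_patterns_le q (hdeg q hq)
  refine ⟨S.biUnion fun q => (patterns q).image (branch q), ?_, ?_, fun θ => ?_⟩
  · exact (Finset.card_biUnion_le_card_mul _ _ _ card_patterns).trans
      (Nat.mul_le_mul_right _ hS)
  · simp only [Finset.mem_biUnion, Finset.mem_image]
    rintro _ ⟨q, hq, s, -, rfl⟩ k
    by_cases hs : s k
    · simpa [branch, hs] using hdeg q hq k
    · simpa [branch, hs] using (totalDegree_smul_le ν (q k)).trans (hdeg q hq k)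
  · obtain ⟨q, hq, hθ⟩ := heval θ
    refine ⟨branch q fun k => 0 ≤ eval θ (q k), Finset.mem_biUnion.2 ⟨q, hq,
      Finset.mem_image_of_mem _ ((Set.Finite.mem_toFinset _).2 ⟨θ, rfl⟩)⟩, fun k => ?_⟩
    by_cases hs : 0 ≤ eval θ (q k)
    · simp only [hθ, branch, hs, if_true, lrelu_of_nonneg hν hs]
    · simp only [hθ, branch, hs, if_false, smul_eval, lrelu_of_nonpos hν (not_le.1 hs).le]

theorem ncard_sign_patterns_le (hh : IsPiecewisePoly N D h) :
    (Set.range fun θ k => 0 ≤ h θ k).ncard ≤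
      N * signPatternBound (Fintype.card σ) (Fintype.card κ) D := by
  classical
  obtain ⟨S, hS, hdeg, heval⟩ := hh
  let patterns (q : κ → MvPolynomial σ ℝ) : Finset (κ → Prop) :=
    (Set.range fun θ k => 0 ≤ eval θ (q k)).toFinite.toFinset
  have subset : (Set.range fun θ k => 0 ≤ h θ k) ⊆ (S.biUnion patterns : Finset (κ → Prop)) := by
    rintro _ ⟨θ, rfl⟩
    obtain ⟨q, hq, hθ⟩ := heval θ
    simp only [hθ]
    exact Finset.mem_biUnion.2 ⟨q, hq, (Set.Finite.mem_toFinset _).2 ⟨θ, rfl⟩⟩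
  calc (Set.range fun θ k => 0 ≤ h θ k).ncard ≤ (S.biUnion patterns).card := by
        rw [← Set.ncard_coe_finset]
        exact Set.ncard_le_ncard subset (Finset.finite_toSet _)
    _ ≤ S.card * signPatternBound (Fintype.card σ) (Fintype.card κ) D :=
        Finset.card_biUnion_le_card_mul _ _ _ fun q hq => by
          rw [← Set.ncard_eq_toFinset_card]
          exact _root_.ncard_sign_patterns_le q (hdeg q hq)
    _ ≤ _ := Nat.mul_le_mul_right _ hS

end IsPiecewisePoly

end PiecewisePolynomials

section HiddenLayers

variable (ν : ℝ) (d r L : ℕ)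

/-- The activations of the hidden layer reached after the inner layers in `ls`. -/
def hiddenState (ls : List (Fin (L - 1))) (θ : ParamIdx d r L → ℝ) (x : Fin d → ℝ) :
    Fin r → ℝ :=
  ls.foldl
    (fun h l i => lrelu ν ((∑ j, θ (Sum.inr (Sum.inr (Sum.inl (l, i, j)))) * h j) +
      θ (Sum.inr (Sum.inr (Sum.inr (Sum.inl (l, i)))))))
    fun i => lrelu ν ((∑ j, θ (Sum.inl (i, j)) * x j) + θ (Sum.inr (Sum.inl i)))

theorem hiddenState_concat (ls : List (Fin (L - 1))) (l : Fin (L - 1)) (θ : ParamIdx d r L → ℝ)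
    (x : Fin d → ℝ) :
    hiddenState ν d r L (ls ++ [l]) θ x = fun i =>
      lrelu ν ((∑ j, θ (Sum.inr (Sum.inr (Sum.inl (l, i, j)))) * hiddenState ν d r L ls θ x j) +
        θ (Sum.inr (Sum.inr (Sum.inr (Sum.inl (l, i)))))) := by
  simp [hiddenState, List.foldl_append]

theorem netOfParams_eq_hiddenState (θ : ParamIdx d r L → ℝ) (x : Fin d → ℝ) :
    netOfParams ν d r L θ x =
      (∑ i, θ (Sum.inr (Sum.inr (Sum.inr (Sum.inr (Sum.inl i))))) *
        hiddenState ν d r L (List.finRange (L - 1)) θ x i) +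
      θ (Sum.inr (Sum.inr (Sum.inr (Sum.inr (Sum.inr ()))))) := rfl

variable {ν}

theorem isPiecewisePoly_hiddenState (hν : ν ≤ 1) {n m D : ℕ} (x : Fin n → Fin d → ℝ)
    (hm : n * r ≤ m) (ls : List (Fin (L - 1))) (hD : ls.length + 1 ≤ D) :
    IsPiecewisePoly (signPatternBound (Fintype.card (ParamIdx d r L)) m D ^ (ls.length + 1))
      (ls.length + 1) fun θ (k : Fin n × Fin r) => hiddenState ν d r L ls θ (x k.1) k.2 := by
  induction ls using List.reverseRecOn with
  | nil =>
    refine (((IsPiecewisePoly.const fun k : Fin n × Fin d => x k.1 k.2).affine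
      (fun (k : Fin n × Fin r) j => (k.1, j)) (fun k j => Sum.inl (k.2, j))
      (fun k => Sum.inr (Sum.inl k.2))).lrelu hν).mono ?_ le_rfl
    simpa using signPatternBound_mono _ hm hD
  | append_singleton ls l ih =>
    rw [List.length_append, List.length_singleton] at hD ⊢
    simp only [hiddenState_concat]
    refine (((ih (by lia)).affine (fun (k : Fin n × Fin r) j => (k.1, j))
      (fun k j => Sum.inr (Sum.inr (Sum.inl (l, k.2, j))))
      (fun k => Sum.inr (Sum.inr (Sum.inr (Sum.inl (l, k.2)))))).lrelu hν).mono ?_ le_rfl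
    rw [pow_succ _ (ls.length + 1)]
    exact Nat.mul_le_mul_left _ (signPatternBound_mono _ (by simpa using hm) hD)

theorem ncard_threshold_patterns_le (hν : ν ≤ 1) {n : ℕ} {κ : Type*} [Fintype κ]
    (x : Fin n → Fin d → ℝ) (t : κ → ℝ) :
    (Set.range fun θ (k : Fin n × κ) => t k.2 ≤ netOfParams ν d r L θ (x k.1)).ncard ≤
      signPatternBound (Fintype.card (ParamIdx d r L)) (n * (r + Fintype.card κ)) (L + 2) ^
        (L + 2) := by
  have hidden := isPiecewisePoly_hiddenState d r L hν (m := n * (r + Fintype.card κ))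
    (D := L + 2) x (by gcongr; lia) (List.finRange (L - 1)) (by rw [List.length_finRange]; lia)
  rw [List.length_finRange] at hidden
  have output := hidden.affine (κ' := Fin n) (fun i j => (i, j))
    (fun _ j => Sum.inr (Sum.inr (Sum.inr (Sum.inr (Sum.inl j)))))
    (fun _ => Sum.inr (Sum.inr (Sum.inr (Sum.inr (Sum.inr ())))))
  have count := (output.sub_const Prod.fst fun k : Fin n × κ => t k.2).ncard_sign_patterns_le
  simp only [sub_nonneg] at count
  refine count.trans ?_
  rw [Fintype.card_prod, Fintype.card_fin]
  calc _ ≤ _ * signPatternBound _ (n * (r + Fintype.card κ)) (L + 2) :=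
        Nat.mul_le_mul_left _ (signPatternBound_mono _ (by gcongr; lia) (by lia))
    _ = signPatternBound _ (n * (r + Fintype.card κ)) (L + 2) ^ (L - 1 + 1 + 1) :=
        (pow_succ _ _).symm
    _ ≤ _ := Nat.pow_le_pow_right (signPatternBound_pos _ _ _) (by lia)

end HiddenLayers

theorem sigmoid_eq_real_sigmoid : sigmoid = Real.sigmoid := rfl

theorem lipschitzWith_sigmoid : LipschitzWith 1 sigmoid := by
  rw [sigmoid_eq_real_sigmoid]
  refine lipschitzWith_of_nnnorm_deriv_le differentiable_sigmoid fun x => ?_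
  have hpos := Real.sigmoid_pos x
  have hlt := Real.sigmoid_lt_one x
  rw [← NNReal.coe_le_coe, coe_nnnorm, Real.deriv_sigmoid, Real.norm_eq_abs,
    abs_of_nonneg (mul_nonneg hpos.le (by linarith)), NNReal.coe_one]
  nlinarith

theorem trunc_le (F x : ℝ) : trunc F x ≤ F := min_le_right _ _

theorem neg_le_trunc {F : ℝ} (hF : 0 ≤ F) (x : ℝ) : -F ≤ trunc F x :=
  le_min (le_max_right _ _) (by linarith)

theorem trunc_of_abs_le {F x : ℝ} (h : |x| ≤ F) : trunc F x = x := by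
  obtain ⟨hneg, hpos⟩ := abs_le.1 h
  rw [trunc, max_eq_left hneg, min_eq_left hpos]

theorem lipschitzWith_trunc (F : ℝ) : LipschitzWith 1 (trunc F) :=
  (LipschitzWith.id.max_const (-F)).min_const F

/-- The success probability `φ ∘ T_F ∘ f` that the Bayesian model assigns to the regression
function `f`. -/
def successProb {X : Type*} (F : ℝ) (f : X → ℝ) (x : X) : ℝ := sigmoid (trunc F (f x))

section SuccessProb

variable {X : Type*} {F : ℝ}

theorem successProb_mem_Ioo (F : ℝ) (f : X → ℝ) (x : X) :
    successProb F f x ∈ Set.Ioo (0 : ℝ) 1 :=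
  ⟨Real.sigmoid_pos _, Real.sigmoid_lt_one _⟩

theorem successProb_mem_Icc (hF : 0 ≤ F) (f : X → ℝ) (x : X) :
    successProb F f x ∈ Set.Icc (sigmoid (-F)) (1 - sigmoid (-F)) := by
  have hneg : 1 - sigmoid (-F) = sigmoid F := by
    rw [sigmoid_eq_real_sigmoid, Real.sigmoid_neg, sub_sub_cancel]
  rw [hneg]
  exact ⟨Real.sigmoid_monotone (neg_le_trunc hF _), Real.sigmoid_monotone (trunc_le _ _)⟩

theorem successProb_of_abs_le {f : X → ℝ} {x : X} (h : |f x| ≤ F) :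
    successProb F f x = sigmoid (f x) := by
  rw [successProb, trunc_of_abs_le h]

theorem abs_successProb_sub_le_trunc (F : ℝ) (f g : X → ℝ) (x y : X) :
    |successProb F f x - successProb F g y| ≤ |trunc F (f x) - trunc F (g y)| := by
  simpa [Real.dist_eq] using! lipschitzWith_sigmoid.dist_le_mul (trunc F (f x)) (trunc F (g y))

theorem abs_successProb_sub_le (F : ℝ) (f g : X → ℝ) (x y : X) :
    |successProb F f x - successProb F g y| ≤ |f x - g y| :=
  (abs_successProb_sub_le_trunc F f g x y).trans <| by
    simpa [Real.dist_eq] using! (lipschitzWith_trunc F).dist_le_mul (f x) (g y)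

theorem measurable_successProb [MeasurableSpace X] (F : ℝ) {f : X → ℝ} (hf : Measurable f) :
    Measurable (successProb F f) :=
  (lipschitzWith_sigmoid.continuous.comp (lipschitzWith_trunc F).continuous).measurable.comp hf

end SuccessProb

section SeparatingPoints

variable {X ι : Type*} [MeasurableSpace X] (PX : Measure X) [IsProbabilityMeasure PX]

theorem integrable_sq_of_abs_le_one {u : X → ℝ} (hu : Measurable u) (hu1 : ∀ x, |u x| ≤ 1) :
    Integrable (fun x => u x ^ 2) PX :=
  Integrable.of_bound (hu.pow_const 2).aestronglyMeasurable 1 <| Eventually.of_forall fun x => by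
    rw [norm_pow]; exact pow_le_one₀ (norm_nonneg _) (hu1 x)

theorem integral_sq_le_sq_add_measureReal {u : X → ℝ} (hu : Measurable u)
    (hu1 : ∀ x, |u x| ≤ 1) (h : ℝ) :
    ∫ x, u x ^ 2 ∂PX ≤ h ^ 2 + PX.real {x | h < |u x|} := by
  have hm : MeasurableSet {x | h < |u x|} := measurableSet_lt measurable_const hu.abs
  have hind : Integrable ({x | h < |u x|}.indicator (1 : X → ℝ)) PX :=
    (integrable_const (1 : ℝ)).indicator hm
  have hpointwise : ∀ x, u x ^ 2 ≤ h ^ 2 + {x | h < |u x|}.indicator (1 : X → ℝ) x := by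
    intro x
    by_cases hx : h < |u x|
    · have hsq : u x ^ 2 ≤ 1 := (sq_le_one_iff_abs_le_one _).2 (hu1 x)
      rw [Set.indicator_of_mem (by exact hx), Pi.one_apply]
      linarith [sq_nonneg h]
    · rw [Set.indicator_of_notMem (by exact hx), add_zero]
      exact sq_le_sq.2 ((not_lt.1 hx).trans (le_abs_self h))
  calc ∫ x, u x ^ 2 ∂PX
      ≤ ∫ x, (h ^ 2 + {x | h < |u x|}.indicator (1 : X → ℝ) x) ∂PX :=
        integral_mono (integrable_sq_of_abs_le_one PX hu hu1) ((integrable_const _).add hind)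
          hpointwise
    _ = h ^ 2 + PX.real {x | h < |u x|} := by
        rw [integral_add (integrable_const _) hind, integral_indicator_one hm]
        simp

theorem measureReal_abs_le_le_exp {u : X → ℝ} (hu : Measurable u) (hu1 : ∀ x, |u x| ≤ 1) {h : ℝ}
    (hh : 4 * h ^ 2 ≤ ∫ x, u x ^ 2 ∂PX) :
    PX.real {x | |u x| ≤ h} ≤ Real.exp (-(3 * h ^ 2)) := by
  have hcompl : PX.real {x | h < |u x|} = 1 - PX.real {x | |u x| ≤ h} := by
    rw [← probReal_compl_eq_one_sub (measurableSet_le hu.abs measurable_const)]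
    congr 1
    ext x
    simp
  linarith [integral_sq_le_sq_add_measureReal PX hu hu1 h, Real.add_one_le_exp (-(3 * h ^ 2))]

theorem exists_forall_exists_notMem (s : Finset ι) (B : ι → Set X) {q : ℝ} {n : ℕ}
    (hB : ∀ j ∈ s, PX.real (B j) ≤ q) (hs : (s.card : ℝ) * q ^ n < 1) :
    ∃ x : Fin n → X, ∀ j ∈ s, ∃ i, x i ∉ B j := by
  let P : Measure (Fin n → X) := Measure.pi fun _ => PX
  have hunion : P.real (⋃ j ∈ s, Set.univ.pi fun _ => B j) < 1 := by
    calc P.real (⋃ j ∈ s, Set.univ.pi fun _ => B j)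
        ≤ ∑ j ∈ s, P.real (Set.univ.pi fun _ => B j) := measureReal_biUnion_finset_le _ _
      _ = ∑ j ∈ s, PX.real (B j) ^ n := by
          simp [P, measureReal_def, Measure.pi_pi]
      _ ≤ ∑ _j ∈ s, q ^ n :=
          Finset.sum_le_sum fun j hj => pow_le_pow_left₀ measureReal_nonneg (hB j hj) n
      _ < 1 := by simpa using hs
  obtain ⟨x, hx⟩ : ∃ x, x ∉ ⋃ j ∈ s, Set.univ.pi fun _ : Fin n => B j := by
    by_contra! hall
    rw [Set.eq_univ_of_forall hall, probReal_univ] at hunion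
    exact lt_irrefl _ hunion
  exact ⟨x, by simpa using hx⟩

theorem exists_separating_points {p : ι → X → ℝ} (hpm : ∀ θ, Measurable (p θ))
    (hp : ∀ θ θ' x, |p θ x - p θ' x| ≤ 1) (S : Finset ι) {h : ℝ} {n : ℕ}
    (hS : (S : Set ι).Pairwise fun θ θ' => 4 * h ^ 2 < ∫ x, (p θ x - p θ' x) ^ 2 ∂PX)
    (hc : (S.card : ℝ) ^ 2 * Real.exp (-(3 * (n * h ^ 2))) < 1) :
    ∃ x : Fin n → X, (S : Set ι).Pairwise fun θ θ' => ∃ i, h < |p θ (x i) - p θ' (x i)| := by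
  classical
  have hsmall : ∀ q ∈ S.offDiag,
      PX.real {x | |p q.1 x - p q.2 x| ≤ h} ≤ Real.exp (-(3 * h ^ 2)) := by
    intro q hq
    obtain ⟨h₁, h₂, hne⟩ := Finset.mem_offDiag.1 hq
    exact measureReal_abs_le_le_exp PX ((hpm _).sub (hpm _)) (hp _ _) (hS h₁ h₂ hne).le
  have hcard : (S.offDiag.card : ℝ) * Real.exp (-(3 * h ^ 2)) ^ n < 1 := by
    have hexp : Real.exp (-(3 * h ^ 2)) ^ n = Real.exp (-(3 * (n * h ^ 2))) := by
      rw [← Real.exp_nat_mul]; ring_nf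
    have hsq : (S.offDiag.card : ℝ) ≤ (S.card : ℝ) ^ 2 := by
      rw [Finset.offDiag_card, sq]
      exact_mod_cast Nat.sub_le _ _
    rw [hexp]
    exact lt_of_le_of_lt (by gcongr) hc
  obtain ⟨x, hx⟩ := exists_forall_exists_notMem PX S.offDiag _ hsmall hcard
  refine ⟨x, fun θ hθ θ' hθ' hne => ?_⟩
  simpa using hx (θ, θ') (Finset.mem_offDiag.2 ⟨hθ, hθ', hne⟩)

end SeparatingPoints

section CoveringNumber

theorem lt_of_trunc_lt {F y t : ℝ} (ht : t ≤ F) (h : trunc F y < t) : y < t := by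
  contrapose! h
  exact le_min (h.trans (le_max_left _ _)) ht

theorem le_of_le_trunc {F y t : ℝ} (ht : -F < t) (h : t ≤ trunc F y) : t ≤ y :=
  (le_max_iff.1 (le_min_iff.1 h).1).resolve_right (not_le.2 ht)

theorem exists_grid_point_between {F h y z : ℝ} (hF : 0 ≤ F) (hh : 0 < h)
    (hyz : h < trunc F z - trunc F y) :
    ∃ j : Fin (⌊2 * F / h⌋₊ + 1), y < -F + (j : ℕ) * h ∧ -F + (j : ℕ) * h ≤ z := by
  have hz := trunc_le F z
  have hz₀ : 0 ≤ trunc F z + F := by linarith [neg_le_trunc hF z]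
  have hy := neg_le_trunc hF y
  have hle : ⌊(trunc F z + F) / h⌋₊ ≤ ⌊2 * F / h⌋₊ := by
    gcongr
    linarith
  have hfloor := Nat.floor_le (div_nonneg hz₀ hh.le)
  have hfloor' := Nat.lt_floor_add_one ((trunc F z + F) / h)
  rw [le_div_iff₀ hh] at hfloor
  rw [div_lt_iff₀ hh] at hfloor'
  exact ⟨⟨⌊(trunc F z + F) / h⌋₊, by omega⟩, lt_of_trunc_lt (F := F) (by simp only; linarith)
    (by simp only; linarith), le_of_le_trunc (F := F) (by simp only; linarith)
    (by simp only; linarith)⟩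

theorem sq_mul_exp_lt_one {N V : ℝ} (hN : 0 ≤ N) (hNV : N ≤ Real.exp V + 1) (hV : 2 ≤ V) :
    N ^ 2 * Real.exp (-(3 * V)) < 1 := by
  have hexp : 4 < Real.exp V := calc
    (4 : ℝ) < Real.exp 1 ^ 2 := by nlinarith [Real.exp_one_gt_d9]
    _ = Real.exp 2 := by rw [← Real.exp_nat_mul]; norm_num
    _ ≤ Real.exp V := Real.exp_le_exp.2 hV
  rw [Real.exp_neg, ← div_eq_mul_inv, div_lt_one (Real.exp_pos _)]
  calc N ^ 2 ≤ (2 * Real.exp V) ^ 2 := by gcongr; linarith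
    _ = 4 * Real.exp V ^ 2 := by ring
    _ < Real.exp V * Real.exp V ^ 2 := by gcongr
    _ = Real.exp (3 * V) := by
        rw [← pow_succ', ← Real.exp_nat_mul]; norm_num

variable {X Θ : Type*} [MeasurableSpace X] (PX : Measure X) [IsProbabilityMeasure PX]
  {F h : ℝ} {n : ℕ} {f : Θ → X → ℝ}

-- At suitable points, separated functions have different threshold patterns.
theorem card_le_exp_of_separated (hfm : ∀ θ, Measurable (f θ)) (hF : 0 ≤ F) (hh : 0 < h)
    (hn : 2 ≤ n * h ^ 2)
    (hpat : ∀ x : Fin n → X, ((Set.range fun θ (k : Fin n × Fin (⌊2 * F / h⌋₊ + 1)) =>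
      -F + (k.2 : ℕ) * h ≤ f θ (x k.1)).ncard : ℝ) ≤ Real.exp (n * h ^ 2))
    (S : Finset Θ) (hS : (S : Set Θ).Pairwise fun θ θ' =>
      4 * h ^ 2 < ∫ x, (successProb F (f θ) x - successProb F (f θ') x) ^ 2 ∂PX) :
    (S.card : ℝ) ≤ Real.exp (n * h ^ 2) := by
  by_contra! hlarge
  obtain ⟨S', hS'S, hS'card⟩ :=
    Finset.exists_subset_card_eq (Nat.succ_le_of_lt ((Nat.floor_lt (Real.exp_pos _).le).2 hlarge))
  have hdiff : ∀ θ θ' x, |successProb F (f θ) x - successProb F (f θ') x| ≤ 1 := by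
    intro θ θ' x
    obtain ⟨h₀, h₁⟩ := successProb_mem_Ioo F (f θ) x
    obtain ⟨h₀', h₁'⟩ := successProb_mem_Ioo F (f θ') x
    exact abs_le.2 ⟨by linarith, by linarith⟩
  have hcard : (S'.card : ℝ) ≤ Real.exp (n * h ^ 2) + 1 := by
    rw [hS'card, Nat.cast_succ]
    gcongr
    exact Nat.floor_le (Real.exp_pos _).le
  obtain ⟨x, hx⟩ := exists_separating_points PX (fun θ => measurable_successProb F (hfm θ)) hdiff S'
    (hS.mono (Finset.coe_subset.2 hS'S)) (sq_mul_exp_lt_one (Nat.cast_nonneg _) hcard hn)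
  have hinj : Set.InjOn (fun θ (k : Fin n × Fin (⌊2 * F / h⌋₊ + 1)) =>
      -F + (k.2 : ℕ) * h ≤ f θ (x k.1)) S' := by
    intro θ hθ θ' hθ' hpattern
    by_contra hne
    obtain ⟨i, hi⟩ := hx hθ hθ' hne
    rcases lt_abs.1 (hi.trans_le (abs_successProb_sub_le_trunc F _ _ _ _)) with hlt | hlt
    · obtain ⟨j, hj, hj'⟩ := exists_grid_point_between hF hh hlt
      exact hj.not_ge ((congrFun hpattern (i, j)).mp hj')
    · obtain ⟨j, hj, hj'⟩ := exists_grid_point_between hF hh (by rwa [neg_sub] at hlt)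
      exact hj.not_ge ((congrFun hpattern (i, j)).mpr hj')
  have hpatterns : (S'.card : ℝ) ≤ Real.exp (n * h ^ 2) := by
    refine le_trans ?_ (hpat x)
    rw [← Set.ncard_coe_finset, ← hinj.ncard_image, Nat.cast_le]
    exact Set.ncard_le_ncard (Set.image_subset_range _ _) (Set.toFinite _)
  rw [hS'card, Nat.cast_succ] at hpatterns
  exact absurd hpatterns (not_le.2 (Nat.lt_floor_add_one _))

theorem exists_finset_isCover_of_card_le {R : SetRel Θ Θ} [R.IsRefl] [R.IsSymm] {N : ℕ}
    (hR : ∀ S : Finset Θ, R.IsSeparated (S : Set Θ) → S.card ≤ N) (A : Set Θ) :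
    ∃ S : Finset Θ, (S : Set Θ) ⊆ A ∧ S.card ≤ N ∧ R.IsCover A (S : Set Θ) := by
  classical
  let cards : Set ℕ :=
    {k | ∃ S : Finset Θ, (S : Set Θ) ⊆ A ∧ R.IsSeparated (S : Set Θ) ∧ S.card = k}
  have hbdd : BddAbove cards := ⟨N, by rintro _ ⟨S, -, hS, rfl⟩; exact hR S hS⟩
  obtain ⟨S, hSA, hS, hcard⟩ : sSup cards ∈ cards :=
    Nat.sSup_mem ⟨0, ∅, by simp, by simp, rfl⟩ hbdd
  refine ⟨S, hSA, hR S hS, .of_maximal_isSeparated ⟨⟨hSA, hS⟩, fun M ⟨hMA, hM⟩ hSM y hy => ?_⟩⟩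
  by_contra hyS
  have hins : ((insert y S : Finset Θ) : Set Θ) ⊆ M := by
    rw [Finset.coe_insert]
    exact Set.insert_subset hy hSM
  have hle : (insert y S).card ≤ S.card :=
    hcard ▸ le_csSup hbdd ⟨insert y S, hins.trans hMA, hM.mono_right hins, rfl⟩
  rw [Finset.card_insert_of_notMem hyS] at hle
  omega

theorem exists_finset_successProb_cover (hfm : ∀ θ, Measurable (f θ)) (hF : 0 ≤ F) (hh : 0 < h)
    (hn : 2 ≤ n * h ^ 2)
    (hpat : ∀ x : Fin n → X, ((Set.range fun θ (k : Fin n × Fin (⌊2 * F / h⌋₊ + 1)) =>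
      -F + (k.2 : ℕ) * h ≤ f θ (x k.1)).ncard : ℝ) ≤ Real.exp (n * h ^ 2))
    (A : Set Θ) :
    ∃ S : Finset Θ, (S : Set Θ) ⊆ A ∧ (S.card : ℝ) ≤ Real.exp (n * h ^ 2) ∧ ∀ θ ∈ A, ∃ θ' ∈ S,
      ∫ x, (successProb F (f θ) x - successProb F (f θ') x) ^ 2 ∂PX ≤ 4 * h ^ 2 := by
  let R : SetRel Θ Θ :=
    {q | ∫ x, (successProb F (f q.1) x - successProb F (f q.2) x) ^ 2 ∂PX ≤ 4 * h ^ 2}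
  have hrefl : R.IsRefl := ⟨fun θ => by
    simpa [R] using (mul_nonneg zero_le_four (sq_nonneg h))⟩
  have hsymm : R.IsSymm := ⟨fun θ θ' hq => by
    simpa only [R, Set.mem_ofPred_eq, sub_sq_comm] using hq⟩
  obtain ⟨S, hSA, hcard, hcover⟩ := exists_finset_isCover_of_card_le (R := R) (fun S hS =>
    Nat.le_floor (card_le_exp_of_separated PX hfm hF hh hn hpat S
      (hS.imp fun _ _ hsep => not_le.1 hsep))) A
  exact ⟨S, hSA, (Nat.cast_le.2 hcard).trans (Nat.floor_le (Real.exp_pos _).le),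
    fun θ hθ => hcover hθ⟩

end CoveringNumber

section BernoulliRegression

variable {X : Type*} [MeasurableSpace X]

/-- The joint law of `(X, Y)` where `X ∼ P_X` and `Y | X ∼ Bernoulli(p₀(X))`. -/
def bernoulliRegLaw (PX : Measure X) (p₀ : X → ℝ) : Measure (X × ℝ) :=
  PX.bind fun x => (bern (p₀ x)).map fun y => (x, y)

/-- The law of `n` independent observations from `bernoulliRegLaw PX p₀`. -/
def bernoulliSampleLaw (PX : Measure X) (p₀ : X → ℝ) (n : ℕ) : Measure (Fin n → X × ℝ) :=
  Measure.pi fun _ => bernoulliRegLaw PX p₀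

theorem map_prodMk_bern (p : ℝ) (x : X) :
    (bern p).map (fun y => (x, y)) = ENNReal.ofReal p • Measure.dirac (x, (1 : ℝ)) +
      ENNReal.ofReal (1 - p) • Measure.dirac (x, (0 : ℝ)) := by
  have hm : Measurable fun y : ℝ => (x, y) := measurable_prodMk_left
  rw [bern, Measure.map_add _ _ hm, Measure.map_smul, Measure.map_smul, Measure.map_dirac' hm,
    Measure.map_dirac' hm]

variable {PX : Measure X} {p₀ : X → ℝ}

theorem lintegral_bernoulliRegLaw (hp₀ : Measurable p₀) {g : X × ℝ → ℝ≥0∞} (hg : Measurable g) :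
    ∫⁻ z, g z ∂(bernoulliRegLaw PX p₀) =
      ∫⁻ x, (ENNReal.ofReal (p₀ x) * g (x, 1) + ENNReal.ofReal (1 - p₀ x) * g (x, 0)) ∂PX := by
  have hkernel : Measurable fun x => (bern (p₀ x)).map fun y => (x, y) := by
    refine Measure.measurable_of_measurable_coe _ fun s hs => ?_
    simp only [map_prodMk_bern, Measure.add_apply, Measure.smul_apply, smul_eq_mul,
      Measure.dirac_apply' _ hs]
    have hslice (y : ℝ) : Measurable fun x : X => s.indicator (1 : X × ℝ → ℝ≥0∞) (x, y) :=
      (measurable_one.indicator hs).comp measurable_prodMk_right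
    exact (hp₀.ennreal_ofReal.mul (hslice 1)).add
      ((measurable_const.sub hp₀).ennreal_ofReal.mul (hslice 0))
  rw [bernoulliRegLaw, Measure.lintegral_bind hkernel.aemeasurable hg.aemeasurable]
  refine lintegral_congr fun x => ?_
  rw [map_prodMk_bern, lintegral_add_measure, lintegral_smul_measure, lintegral_smul_measure,
    lintegral_dirac' _ hg, lintegral_dirac' _ hg, smul_eq_mul, smul_eq_mul]

theorem isProbabilityMeasure_bernoulliRegLaw [IsProbabilityMeasure PX] (hp₀ : Measurable p₀)
    (h₀ : ∀ x, p₀ x ∈ Set.Ioo (0 : ℝ) 1) : IsProbabilityMeasure (bernoulliRegLaw PX p₀) := by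
  refine ⟨?_⟩
  rw [← lintegral_one, lintegral_bernoulliRegLaw hp₀ measurable_const]
  have hsum (x : X) : ENNReal.ofReal (p₀ x) * 1 + ENNReal.ofReal (1 - p₀ x) * 1 = 1 := by
    rw [mul_one, mul_one, ← ENNReal.ofReal_add (h₀ x).1.le (sub_nonneg.2 (h₀ x).2.le),
      add_sub_cancel, ENNReal.ofReal_one]
  simp only [hsum, lintegral_one, measure_univ]

theorem isProbabilityMeasure_bernoulliSampleLaw [IsProbabilityMeasure PX] (hp₀ : Measurable p₀)
    (h₀ : ∀ x, p₀ x ∈ Set.Ioo (0 : ℝ) 1) (n : ℕ) :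
    IsProbabilityMeasure (bernoulliSampleLaw PX p₀ n) := by
  have := isProbabilityMeasure_bernoulliRegLaw (PX := PX) hp₀ h₀
  exact inferInstanceAs (IsProbabilityMeasure (Measure.pi fun _ => bernoulliRegLaw PX p₀))

theorem lintegral_pi_prod_eq_pow {Z : Type*} [MeasurableSpace Z] (μ : Measure Z)
    [IsProbabilityMeasure μ] (n : ℕ) {g : Z → ℝ≥0∞} (hg : Measurable g) :
    ∫⁻ D, ∏ i, g (D i) ∂(Measure.pi fun _ : Fin n => μ) = (∫⁻ z, g z ∂μ) ^ n := by
  have hindep : iIndepFun (fun (i : Fin n) (D : Fin n → Z) => g (D i))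
      (Measure.pi fun _ : Fin n => μ) :=
    iIndepFun_pi (X := fun _ => g) fun _ => hg.aemeasurable
  have hmarginal (i : Fin n) :
      ∫⁻ D : Fin n → Z, g (D i) ∂(Measure.pi fun _ : Fin n => μ) = ∫⁻ z, g z ∂μ :=
    (measurePreserving_eval (fun _ : Fin n => μ) i).lintegral_comp hg
  rw [lintegral_prod_eq_prod_lintegral_of_indepFun Finset.univ
    (fun (i : Fin n) (D : Fin n → Z) => g (D i)) hindep fun i => hg.comp (measurable_pi_apply i)]
  simp only [hmarginal, Finset.prod_const, Finset.card_univ, Fintype.card_fin]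

theorem lintegral_sample_prod_le_exp [IsProbabilityMeasure PX] (hp₀ : Measurable p₀)
    (h₀ : ∀ x, p₀ x ∈ Set.Ioo (0 : ℝ) 1) {g : X × ℝ → ℝ} (hg : Measurable g) (hg₀ : ∀ z, 0 ≤ g z)
    {w : X → ℝ} (hw : Integrable w PX)
    (hgw : ∀ᵐ x ∂PX, p₀ x * g (x, 1) + (1 - p₀ x) * g (x, 0) ≤ 1 + w x) {c : ℝ}
    (hc : ∫ x, w x ∂PX ≤ c) (n : ℕ) :
    ∫⁻ D, ∏ i, ENNReal.ofReal (g (D i)) ∂(bernoulliSampleLaw PX p₀ n) ≤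
      ENNReal.ofReal (Real.exp (n * c)) := by
  have := isProbabilityMeasure_bernoulliRegLaw (PX := PX) hp₀ h₀
  have hmean (x : X) : 0 ≤ p₀ x * g (x, 1) ∧ 0 ≤ (1 - p₀ x) * g (x, 0) :=
    ⟨mul_nonneg (h₀ x).1.le (hg₀ _), mul_nonneg (sub_nonneg.2 (h₀ x).2.le) (hg₀ _)⟩
  have hw₁ : 0 ≤ᵐ[PX] fun x => 1 + w x := hgw.mono fun x hx =>
    (add_nonneg (hmean x).1 (hmean x).2).trans hx
  have hone : ∫⁻ z, ENNReal.ofReal (g z) ∂(bernoulliRegLaw PX p₀) ≤ ENNReal.ofReal (Real.exp c) :=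
    calc ∫⁻ z, ENNReal.ofReal (g z) ∂(bernoulliRegLaw PX p₀)
        ≤ ∫⁻ x, ENNReal.ofReal (1 + w x) ∂PX := by
          rw [lintegral_bernoulliRegLaw hp₀ hg.ennreal_ofReal]
          refine lintegral_mono_ae (hgw.mono fun x hx => ?_)
          rw [← ENNReal.ofReal_mul (h₀ x).1.le, ← ENNReal.ofReal_mul (sub_nonneg.2 (h₀ x).2.le),
            ← ENNReal.ofReal_add (hmean x).1 (hmean x).2]
          exact ENNReal.ofReal_le_ofReal hx
      _ = ENNReal.ofReal (1 + ∫ x, w x ∂PX) := by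
          have hint : Integrable (fun x => 1 + w x) PX := (integrable_const 1).add hw
          rw [← ofReal_integral_eq_lintegral_ofReal hint hw₁, integral_add (integrable_const 1) hw]
          simp
      _ ≤ ENNReal.ofReal (Real.exp c) :=
          ENNReal.ofReal_le_ofReal (by linarith [Real.add_one_le_exp c])
  rw [bernoulliSampleLaw, lintegral_pi_prod_eq_pow _ n hg.ennreal_ofReal, Real.exp_nat_mul,
    ENNReal.ofReal_pow (Real.exp_pos _).le]
  gcongr

theorem bernoulli_exp_le {p q u : ℝ} (hp : p ∈ Set.Ioo (0 : ℝ) 1) (hq : q ∈ Set.Ioo (0 : ℝ) 1)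
    (hu : |u| ≤ 1) :
    q * Real.exp ((1 - p) * u) + (1 - q) * Real.exp ((0 - p) * u) ≤ 1 + (q - p) * u + u ^ 2 := by
  obtain ⟨hp₀, hp₁⟩ := hp
  obtain ⟨hq₀, hq₁⟩ := hq
  have hquad (y : ℝ) (hy : |y| ≤ 1) : Real.exp (y * u) ≤ 1 + y * u + (y * u) ^ 2 := by
    have hyu : |y * u| ≤ 1 := by rw [abs_mul]; exact mul_le_one₀ hy (abs_nonneg _) hu
    linarith [(abs_le.1 (Real.abs_exp_sub_one_sub_id_le hyu)).2]
  have hvar : q * (1 - p) ^ 2 + (1 - q) * p ^ 2 ≤ 1 := by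
    nlinarith [mul_pos hp₀ (sub_pos.2 hp₁)]
  calc q * Real.exp ((1 - p) * u) + (1 - q) * Real.exp ((0 - p) * u)
      ≤ q * (1 + (1 - p) * u + ((1 - p) * u) ^ 2) +
          (1 - q) * (1 + (0 - p) * u + ((0 - p) * u) ^ 2) := by
        have hone := hquad (1 - p) (abs_le.2 ⟨by linarith, by linarith⟩)
        have hzero := hquad (0 - p) (abs_le.2 ⟨by linarith, by linarith⟩)
        have : 0 ≤ 1 - q := by linarith
        gcongr
    _ = 1 + (q - p) * u + (q * (1 - p) ^ 2 + (1 - q) * p ^ 2) * u ^ 2 := by ring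
    _ ≤ 1 + (q - p) * u + u ^ 2 := by
        gcongr
        exact mul_le_of_le_one_left (sq_nonneg u) hvar

end BernoulliRegression

section Tests

variable {X Θ : Type*} {n : ℕ}

/-- The Bernoulli density `q(x)^y (1 − q(x))^{1 − y}` of one observation `(x, y)` under the success
probability function `q`. -/
def bernoulliDensity (q : X → ℝ) (z : X × ℝ) : ℝ :=
  q z.1 ^ z.2 * (1 - q z.1) ^ (1 - z.2)

/-- The Bernoulli likelihood of the success probability function `q` given the data `D`. -/
def bernoulliLikelihood (q : X → ℝ) (D : Fin n → X × ℝ) : ℝ :=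
  ∏ i, bernoulliDensity q (D i)

/-- The likelihood ratio of the success probability functions `q` and `p₀`. -/
def likelihoodRatio (p₀ q : X → ℝ) (D : Fin n → X × ℝ) : ℝ :=
  ∏ i, bernoulliDensity q (D i) / bernoulliDensity p₀ (D i)

/-- The statistic `∑ᵢ (Yᵢ − p₀(Xᵢ)) u(Xᵢ)`, which tests `p₀` against `p₀ + u`. -/
def residualStatistic (p₀ u : X → ℝ) (D : Fin n → X × ℝ) : ℝ :=
  ∑ i, ((D i).2 - p₀ (D i).1) * u (D i).1

theorem bernoulliDensity_one (q : X → ℝ) (x : X) : bernoulliDensity q (x, 1) = q x := by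
  simp [bernoulliDensity]

theorem bernoulliDensity_zero (q : X → ℝ) (x : X) : bernoulliDensity q (x, 0) = 1 - q x := by
  simp [bernoulliDensity]

variable {p₀ q r u v : X → ℝ}

theorem bernoulliDensity_pos (hq : ∀ x, q x ∈ Set.Ioo (0 : ℝ) 1) (z : X × ℝ) :
    0 < bernoulliDensity q z :=
  mul_pos (Real.rpow_pos_of_pos (hq _).1 _) (Real.rpow_pos_of_pos (sub_pos.2 (hq _).2) _)

theorem bernoulliLikelihood_pos (hq : ∀ x, q x ∈ Set.Ioo (0 : ℝ) 1) (D : Fin n → X × ℝ) :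
    0 < bernoulliLikelihood q D :=
  Finset.prod_pos fun _ _ => bernoulliDensity_pos hq _

theorem likelihoodRatio_pos (h₀ : ∀ x, p₀ x ∈ Set.Ioo (0 : ℝ) 1)
    (hq : ∀ x, q x ∈ Set.Ioo (0 : ℝ) 1) (D : Fin n → X × ℝ) : 0 < likelihoodRatio p₀ q D :=
  Finset.prod_pos fun _ _ => div_pos (bernoulliDensity_pos hq _) (bernoulliDensity_pos h₀ _)

theorem likelihoodRatio_self (h₀ : ∀ x, p₀ x ∈ Set.Ioo (0 : ℝ) 1) (D : Fin n → X × ℝ) :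
    likelihoodRatio p₀ p₀ D = 1 :=
  Finset.prod_eq_one fun _ _ => div_self (bernoulliDensity_pos h₀ _).ne'

theorem bernoulliLikelihood_mul_likelihoodRatio (h₀ : ∀ x, p₀ x ∈ Set.Ioo (0 : ℝ) 1)
    (q : X → ℝ) (D : Fin n → X × ℝ) :
    bernoulliLikelihood p₀ D * likelihoodRatio p₀ q D = bernoulliLikelihood q D := by
  rw [bernoulliLikelihood, likelihoodRatio, ← Finset.prod_mul_distrib]
  exact Finset.prod_congr rfl fun i _ => mul_div_cancel₀ _ (bernoulliDensity_pos h₀ (D i)).ne'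

theorem residualStatistic_const_mul (p₀ u : X → ℝ) (c : ℝ) (D : Fin n → X × ℝ) :
    residualStatistic p₀ (fun x => c * u x) D = c * residualStatistic p₀ u D := by
  simp only [residualStatistic, Finset.mul_sum, mul_left_comm]

variable [MeasurableSpace X] [MeasurableSpace Θ]

theorem measurable_bernoulliDensity {p : Θ → X → ℝ} (hp : Measurable (Function.uncurry p)) :
    Measurable fun z : Θ × (X × ℝ) => bernoulliDensity (p z.1) z.2 := by
  have : Measurable fun z : Θ × (X × ℝ) => p z.1 z.2.1 :=
    hp.comp (measurable_fst.prodMk (measurable_fst.comp measurable_snd))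
  unfold bernoulliDensity
  fun_prop

theorem measurable_likelihoodRatio (hp₀ : Measurable p₀) {p : Θ → X → ℝ}
    (hp : Measurable (Function.uncurry p)) :
    Measurable fun z : Θ × (Fin n → X × ℝ) => likelihoodRatio p₀ (p z.1) z.2 := by
  refine Finset.measurable_prod _ fun i _ => ?_
  have hcoord : Measurable fun z : Θ × (Fin n → X × ℝ) => (z.1, z.2 i) :=
    measurable_fst.prodMk ((measurable_pi_apply i).comp measurable_snd)
  exact ((measurable_bernoulliDensity hp).comp hcoord).div
    ((measurable_bernoulliDensity (p := fun _ : Θ => p₀) (hp₀.comp measurable_snd)).comp hcoord)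

theorem measurable_residualStatistic (hp₀ : Measurable p₀) (hu : Measurable u) :
    Measurable fun D : Fin n → X × ℝ => residualStatistic p₀ u D := by
  unfold residualStatistic
  fun_prop

variable {PX : Measure X} [IsProbabilityMeasure PX]

theorem lintegral_likelihoodRatio_mul_exp_residualStatistic_le (hp₀ : Measurable p₀)
    (h₀ : ∀ x, p₀ x ∈ Set.Ioo (0 : ℝ) 1) (hqm : Measurable q) (hq : ∀ x, q x ∈ Set.Ioo (0 : ℝ) 1)
    (hv : Measurable v) (hv₁ : ∀ x, |v x| ≤ 1) {w : X → ℝ} (hw : Integrable w PX)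
    (hvw : ∀ x, (q x - p₀ x) * v x + v x ^ 2 ≤ w x) {c : ℝ} (hc : ∫ x, w x ∂PX ≤ c) (n : ℕ) :
    ∫⁻ D, ENNReal.ofReal (likelihoodRatio p₀ q D * Real.exp (residualStatistic p₀ v D))
        ∂(bernoulliSampleLaw PX p₀ n) ≤ ENNReal.ofReal (Real.exp (n * c)) := by
  let g (z : X × ℝ) : ℝ := bernoulliDensity q z / bernoulliDensity p₀ z *
    Real.exp ((z.2 - p₀ z.1) * v z.1)
  have hg : Measurable g := by
    unfold g bernoulliDensity
    fun_prop
  have hg₀ (z : X × ℝ) : 0 ≤ g z :=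
    mul_nonneg (div_pos (bernoulliDensity_pos hq z) (bernoulliDensity_pos h₀ z)).le
      (Real.exp_pos _).le
  have hmean (x : X) : p₀ x * g (x, 1) + (1 - p₀ x) * g (x, 0) ≤ 1 + w x := by
    have hp := (h₀ x).1.ne'
    have hp' := (sub_pos.2 (h₀ x).2).ne'
    simp only [g, bernoulliDensity_one, bernoulliDensity_zero]
    calc _ = q x * Real.exp ((1 - p₀ x) * v x) + (1 - q x) * Real.exp ((0 - p₀ x) * v x) := by
          field_simp
      _ ≤ 1 + (q x - p₀ x) * v x + v x ^ 2 := bernoulli_exp_le (h₀ x) (hq x) (hv₁ x)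
      _ ≤ 1 + w x := by linarith [hvw x]
  refine (lintegral_congr fun D => ?_).trans_le
    (lintegral_sample_prod_le_exp hp₀ h₀ hg hg₀ hw (ae_of_all _ hmean) hc n)
  rw [← ENNReal.ofReal_prod_of_nonneg fun i _ => hg₀ (D i), Finset.prod_mul_distrib,
    ← Real.exp_sum, likelihoodRatio, residualStatistic]

theorem measure_lt_residualStatistic_le (hp₀ : Measurable p₀)
    (h₀ : ∀ x, p₀ x ∈ Set.Ioo (0 : ℝ) 1) (hu : Measurable u) (hu₁ : ∀ x, |u x| ≤ 1) (n : ℕ) :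
    bernoulliSampleLaw PX p₀ n {D | n * (∫ x, u x ^ 2 ∂PX) / 2 < residualStatistic p₀ u D} ≤
      ENNReal.ofReal (Real.exp (-(n * (∫ x, u x ^ 2 ∂PX) / 16))) := by
  set s := ∫ x, u x ^ 2 ∂PX
  have hmgf : ∫⁻ D, ENNReal.ofReal (Real.exp (1 / 4 * residualStatistic p₀ u D))
      ∂(bernoulliSampleLaw PX p₀ n) ≤ ENNReal.ofReal (Real.exp (n * (s / 16))) := by
    have h := lintegral_likelihoodRatio_mul_exp_residualStatistic_le hp₀ h₀ hp₀ h₀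
      (v := fun x => 1 / 4 * u x) (hu.const_mul _)
      (fun x => by rw [abs_mul]; norm_num; linarith [hu₁ x])
      ((integrable_sq_of_abs_le_one PX hu hu₁).div_const 16)
      (fun x => by linarith [sq_nonneg (u x)]) (integral_div _ _).le n
    simpa only [likelihoodRatio_self h₀, one_mul, residualStatistic_const_mul] using h
  have hexp : {D : Fin n → X × ℝ | n * s / 2 < residualStatistic p₀ u D} ⊆
      {D | ENNReal.ofReal (Real.exp (n * s / 8)) ≤
        ENNReal.ofReal (Real.exp (1 / 4 * residualStatistic p₀ u D))} := fun D hD => by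
    refine ENNReal.ofReal_le_ofReal (Real.exp_le_exp.2 ?_)
    linarith [Set.mem_ofPred_eq ▸ hD]
  have hmeas : Measurable fun D : Fin n → X × ℝ =>
      ENNReal.ofReal (Real.exp (1 / 4 * residualStatistic p₀ u D)) :=
    ((measurable_residualStatistic hp₀ hu).const_mul _).exp.ennreal_ofReal
  refine (measure_mono hexp).trans ((meas_ge_le_lintegral_div hmeas.aemeasurable
    (ENNReal.ofReal_pos.2 (Real.exp_pos _)).ne' ENNReal.ofReal_ne_top).trans
    (ENNReal.div_le_of_le_mul (hmgf.trans_eq ?_)))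
  rw [← ENNReal.ofReal_mul (Real.exp_pos _).le, ← Real.exp_add]
  ring_nf

theorem setLIntegral_likelihoodRatio_le (hp₀ : Measurable p₀)
    (h₀ : ∀ x, p₀ x ∈ Set.Ioo (0 : ℝ) 1) (hqm : Measurable q) (hq : ∀ x, q x ∈ Set.Ioo (0 : ℝ) 1)
    (hrm : Measurable r) (hr : ∀ x, r x ∈ Set.Ioo (0 : ℝ) 1) {s : ℝ}
    (hs : ∫ x, (r x - p₀ x) ^ 2 ∂PX = s) (hqr : ∫ x, (q x - r x) ^ 2 ∂PX ≤ s / 16) (n : ℕ) :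
    ∫⁻ D in {D | residualStatistic p₀ (fun x => r x - p₀ x) D ≤ n * s / 2},
        ENNReal.ofReal (likelihoodRatio p₀ q D) ∂(bernoulliSampleLaw PX p₀ n) ≤
      ENNReal.ofReal (Real.exp (-(n * s / 64))) := by
  have hdist {f g : X → ℝ} (hf : ∀ x, f x ∈ Set.Ioo (0 : ℝ) 1) (hg : ∀ x, g x ∈ Set.Ioo (0 : ℝ) 1)
      (x : X) : |f x - g x| ≤ 1 := by
    rw [abs_le]
    constructor <;> linarith [(hf x).1, (hf x).2, (hg x).1, (hg x).2]
  have hint_rp : Integrable (fun x => (r x - p₀ x) ^ 2) PX :=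
    integrable_sq_of_abs_le_one PX (hrm.sub hp₀) (hdist hr h₀)
  have hint_qr : Integrable (fun x => (q x - r x) ^ 2) PX :=
    integrable_sq_of_abs_le_one PX (hqm.sub hrm) (hdist hq hr)
  have hmgf := lintegral_likelihoodRatio_mul_exp_residualStatistic_le hp₀ h₀ hqm hq
    (v := fun x => -1 / 8 * (r x - p₀ x)) (w := fun x => (q x - r x) ^ 2 * (1 / 4) -
      (r x - p₀ x) ^ 2 * (6 / 64)) (c := -(5 / 64) * s) ((hrm.sub hp₀).const_mul _)
    (fun x => by rw [abs_mul]; norm_num; linarith [hdist hr h₀ x])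
    ((hint_qr.mul_const _).sub (hint_rp.mul_const _))
    (fun x => by linarith [sq_nonneg (4 * (q x - r x) + (r x - p₀ x))])
    (by
      rw [integral_sub (hint_qr.mul_const _) (hint_rp.mul_const _), integral_mul_const,
        integral_mul_const]
      linarith) n
  have hset : MeasurableSet {D : Fin n → X × ℝ |
      residualStatistic p₀ (fun x => r x - p₀ x) D ≤ n * s / 2} :=
    measurableSet_le (measurable_residualStatistic hp₀ (hrm.sub hp₀)) measurable_const
  calc _ ≤ ∫⁻ D in {D | residualStatistic p₀ (fun x => r x - p₀ x) D ≤ n * s / 2},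
          ENNReal.ofReal (Real.exp (n * s / 16)) * ENNReal.ofReal (likelihoodRatio p₀ q D *
            Real.exp (residualStatistic p₀ (fun x => -1 / 8 * (r x - p₀ x)) D))
          ∂(bernoulliSampleLaw PX p₀ n) := by
        refine setLIntegral_mono' hset fun D hD => ?_
        rw [← ENNReal.ofReal_mul (Real.exp_pos _).le, mul_left_comm, ← Real.exp_add,
          residualStatistic_const_mul]
        refine ENNReal.ofReal_le_ofReal
          (le_mul_of_one_le_right (likelihoodRatio_pos h₀ hq D).le (Real.one_le_exp ?_))
        linarith [Set.mem_ofPred_eq ▸ hD]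
    _ ≤ ENNReal.ofReal (Real.exp (n * s / 16)) *
          ENNReal.ofReal (Real.exp (n * (-(5 / 64) * s))) := by
        rw [lintegral_const_mul' _ _ ENNReal.ofReal_ne_top]
        gcongr
        exact (setLIntegral_le_lintegral _ _).trans hmgf
    _ = ENNReal.ofReal (Real.exp (-(n * s / 64))) := by
        rw [← ENNReal.ofReal_mul (Real.exp_pos _).le, ← Real.exp_add]
        ring_nf

theorem lintegral_inv_likelihoodRatio_le (hp₀ : Measurable p₀)
    (h₀ : ∀ x, p₀ x ∈ Set.Ioo (0 : ℝ) 1) (hqm : Measurable q) (hq : ∀ x, q x ∈ Set.Ioo (0 : ℝ) 1)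
    {κ : ℝ} (hκ : ∀ᵐ x ∂PX, (q x - p₀ x) ^ 2 ≤ κ * (q x * (1 - q x))) (n : ℕ) :
    ∫⁻ D, ENNReal.ofReal (likelihoodRatio p₀ q D)⁻¹ ∂(bernoulliSampleLaw PX p₀ n) ≤
      ENNReal.ofReal (Real.exp (n * κ)) := by
  let g (z : X × ℝ) : ℝ := (bernoulliDensity q z / bernoulliDensity p₀ z)⁻¹
  have hg : Measurable g := by
    unfold g bernoulliDensity
    fun_prop
  have hg₀ (z : X × ℝ) : 0 ≤ g z :=
    (inv_pos.2 (div_pos (bernoulliDensity_pos hq z) (bernoulliDensity_pos h₀ z))).le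
  have hmean : ∀ᵐ x ∂PX, p₀ x * g (x, 1) + (1 - p₀ x) * g (x, 0) ≤ 1 + κ := by
    filter_upwards [hκ] with x hx
    have hq₀ := (hq x).1
    have hq₁ := sub_pos.2 (hq x).2
    simp only [g, bernoulliDensity_one, bernoulliDensity_zero, inv_div]
    calc _ = 1 + (q x - p₀ x) ^ 2 / (q x * (1 - q x)) := by field_simp; ring
      _ ≤ 1 + κ := by
        gcongr
        exact (div_le_iff₀ (mul_pos hq₀ hq₁)).2 hx
  refine (lintegral_congr fun D => ?_).trans_le
    (lintegral_sample_prod_le_exp hp₀ h₀ hg hg₀ (integrable_const κ) hmean (by simp) n)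
  rw [← ENNReal.ofReal_prod_of_nonneg fun i _ => hg₀ (D i), Finset.prod_inv_distrib,
    likelihoodRatio]

end Tests

section PosteriorBound

variable {X Θ : Type*} [MeasurableSpace X] [MeasurableSpace Θ] {PX : Measure X} {p₀ : X → ℝ}
  {p : Θ → X → ℝ} {n : ℕ}

/-- The event that none of the tests of `p₀` against `p θ`, `θ ∈ S`, rejects `p₀`. -/
def acceptanceRegion (PX : Measure X) (p₀ : X → ℝ) (p : Θ → X → ℝ) (S : Finset Θ) (n : ℕ) :
    Set (Fin n → X × ℝ) :=
  {D | ∀ θ ∈ S, residualStatistic p₀ (fun x => p θ x - p₀ x) D ≤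
    n * (∫ x, (p θ x - p₀ x) ^ 2 ∂PX) / 2}

theorem measurable_of_uncurry (hp : Measurable (Function.uncurry p)) (θ : Θ) : Measurable (p θ) :=
  hp.comp measurable_prodMk_left

theorem measurableSet_acceptanceRegion (hp₀ : Measurable p₀)
    (hp : Measurable (Function.uncurry p)) (S : Finset Θ) :
    MeasurableSet (acceptanceRegion PX p₀ p S n) := by
  simp only [acceptanceRegion, Set.ofPred_forall]
  exact Finset.measurableSet_biInter S fun θ _ => measurableSet_le
    (measurable_residualStatistic hp₀ ((measurable_of_uncurry hp θ).sub hp₀)) measurable_const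

theorem measure_compl_acceptanceRegion_le [IsProbabilityMeasure PX] (hp₀ : Measurable p₀)
    (h₀ : ∀ x, p₀ x ∈ Set.Ioo (0 : ℝ) 1) (hp : Measurable (Function.uncurry p))
    (hp₁ : ∀ θ x, p θ x ∈ Set.Ioo (0 : ℝ) 1) {S : Finset Θ} {s : ℝ}
    (hS : ∀ θ ∈ S, s ≤ ∫ x, (p θ x - p₀ x) ^ 2 ∂PX) :
    bernoulliSampleLaw PX p₀ n (acceptanceRegion PX p₀ p S n)ᶜ ≤
      ENNReal.ofReal (S.card * Real.exp (-(n * s / 16))) := by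
  have hcompl : (acceptanceRegion PX p₀ p S n)ᶜ ⊆ ⋃ θ ∈ S, {D |
      n * (∫ x, (p θ x - p₀ x) ^ 2 ∂PX) / 2 < residualStatistic p₀ (fun x => p θ x - p₀ x) D} := by
    intro D hD
    simpa [acceptanceRegion] using hD
  calc bernoulliSampleLaw PX p₀ n (acceptanceRegion PX p₀ p S n)ᶜ
      ≤ ∑ θ ∈ S, bernoulliSampleLaw PX p₀ n {D | n * (∫ x, (p θ x - p₀ x) ^ 2 ∂PX) / 2 <
          residualStatistic p₀ (fun x => p θ x - p₀ x) D} :=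
        (measure_mono hcompl).trans (measure_biUnion_finset_le _ _)
    _ ≤ ∑ _θ ∈ S, ENNReal.ofReal (Real.exp (-(n * s / 16))) := by
        refine Finset.sum_le_sum fun θ hθ => (measure_lt_residualStatistic_le hp₀ h₀
          ((measurable_of_uncurry hp θ).sub hp₀) (fun x => ?_) n).trans ?_
        · rw [Pi.sub_apply, abs_le]
          constructor <;> linarith [(h₀ x).1, (h₀ x).2, (hp₁ θ x).1, (hp₁ θ x).2]
        · gcongr
          exact hS θ hθ
    _ = ENNReal.ofReal (S.card * Real.exp (-(n * s / 16))) := by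
        rw [Finset.sum_const, ENNReal.ofReal_mul (Nat.cast_nonneg _), nsmul_eq_mul,
          ENNReal.ofReal_natCast]

variable {Pr : Measure Θ}

theorem setLIntegral_acceptanceRegion_le [IsProbabilityMeasure PX] [IsProbabilityMeasure Pr]
    (hp₀ : Measurable p₀) (h₀ : ∀ x, p₀ x ∈ Set.Ioo (0 : ℝ) 1)
    (hp : Measurable (Function.uncurry p)) (hp₁ : ∀ θ x, p θ x ∈ Set.Ioo (0 : ℝ) 1)
    {A : Set Θ} (hA : MeasurableSet A) {S : Finset Θ} {s : ℝ}
    (hS : ∀ θ ∈ S, s ≤ ∫ x, (p θ x - p₀ x) ^ 2 ∂PX)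
    (hcover : ∀ θ ∈ A, ∃ θ' ∈ S, ∫ x, (p θ x - p θ' x) ^ 2 ∂PX ≤ s / 16) :
    ∫⁻ D in acceptanceRegion PX p₀ p S n,
        (∫⁻ θ in A, ENNReal.ofReal (likelihoodRatio p₀ (p θ) D) ∂Pr)
        ∂(bernoulliSampleLaw PX p₀ n) ≤ ENNReal.ofReal (Real.exp (-(n * s / 64))) := by
  have := isProbabilityMeasure_bernoulliSampleLaw (PX := PX) hp₀ h₀ n
  have hratio : Measurable fun z : (Fin n → X × ℝ) × Θ =>
      ENNReal.ofReal (likelihoodRatio p₀ (p z.2) z.1) :=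
    ((measurable_likelihoodRatio hp₀ hp).comp measurable_swap).ennreal_ofReal
  rw [lintegral_lintegral_swap hratio.aemeasurable]
  calc _ ≤ ∫⁻ _ in A, ENNReal.ofReal (Real.exp (-(n * s / 64))) ∂Pr := by
        refine setLIntegral_mono' hA fun θ hθ => ?_
        obtain ⟨θ', hθ'S, hθ'⟩ := hcover θ hθ
        refine (lintegral_mono_set fun D (hD : D ∈ acceptanceRegion PX p₀ p S n) =>
          hD θ' hθ'S).trans ((setLIntegral_likelihoodRatio_le hp₀ h₀
            (measurable_of_uncurry hp θ) (hp₁ θ) (measurable_of_uncurry hp θ') (hp₁ θ') rfl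
            (hθ'.trans (by linarith [hS θ' hθ'S])) n).trans ?_)
        gcongr
        exact hS θ' hθ'S
    _ ≤ ENNReal.ofReal (Real.exp (-(n * s / 64))) := by
        rw [setLIntegral_const]
        exact mul_le_of_le_one_right' prob_le_one

theorem measure_le_indicator_acceptanceRegion_le [IsProbabilityMeasure PX]
    [IsProbabilityMeasure Pr] (hp₀ : Measurable p₀) (h₀ : ∀ x, p₀ x ∈ Set.Ioo (0 : ℝ) 1)
    (hp : Measurable (Function.uncurry p)) (hp₁ : ∀ θ x, p θ x ∈ Set.Ioo (0 : ℝ) 1)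
    {A : Set Θ} (hA : MeasurableSet A) {S : Finset Θ} {s : ℝ}
    (hS : ∀ θ ∈ S, s ≤ ∫ x, (p θ x - p₀ x) ^ 2 ∂PX)
    (hcover : ∀ θ ∈ A, ∃ θ' ∈ S, ∫ x, (p θ x - p θ' x) ^ 2 ∂PX ≤ s / 16) {c : ℝ} (hc : 0 < c) :
    bernoulliSampleLaw PX p₀ n {D | ENNReal.ofReal c ≤
        (acceptanceRegion PX p₀ p S n).indicator
          (fun D => ∫⁻ θ in A, ENNReal.ofReal (likelihoodRatio p₀ (p θ) D) ∂Pr) D} ≤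
      ENNReal.ofReal (Real.exp (-(n * s / 64)) / c) := by
  have haccepted := measurableSet_acceptanceRegion (PX := PX) (n := n) hp₀ hp S
  have hnum : Measurable fun D : Fin n → X × ℝ =>
      ∫⁻ θ in A, ENNReal.ofReal (likelihoodRatio p₀ (p θ) D) ∂Pr := Measurable.lintegral_prod_right'
    ((measurable_likelihoodRatio hp₀ hp).comp measurable_swap).ennreal_ofReal
  refine (meas_ge_le_lintegral_div (hnum.indicator haccepted).aemeasurable
    (ENNReal.ofReal_pos.2 hc).ne' ENNReal.ofReal_ne_top).trans ?_
  rw [lintegral_indicator haccepted, ENNReal.ofReal_div_of_pos hc]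
  gcongr
  exact setLIntegral_acceptanceRegion_le hp₀ h₀ hp hp₁ hA hS hcover

theorem measure_le_setLIntegral_mul_inv [IsFiniteMeasure Pr] {f : Θ → ℝ} (hf : Measurable f)
    (hf₀ : ∀ θ, 0 < f θ) {B : Set Θ} {t : ℝ} (ht : 0 < t)
    (hlt : ∫⁻ θ in B, ENNReal.ofReal (f θ) ∂Pr < ENNReal.ofReal t * Pr B) :
    Pr B ≤ ∫⁻ θ in B, ENNReal.ofReal (t * (f θ)⁻¹) ∂Pr := by
  have hamgm (θ : Θ) : 2 ≤ t⁻¹ * f θ + t * (f θ)⁻¹ := by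
    have := hf₀ θ
    calc 2 ≤ 2 + (f θ - t) ^ 2 / (t * f θ) := le_add_of_nonneg_right (by positivity)
      _ = t⁻¹ * f θ + t * (f θ)⁻¹ := by field_simp; ring
  have htwo : 2 * Pr B ≤ ENNReal.ofReal t⁻¹ * ∫⁻ θ in B, ENNReal.ofReal (f θ) ∂Pr +
      ∫⁻ θ in B, ENNReal.ofReal (t * (f θ)⁻¹) ∂Pr := by
    rw [← lintegral_const_mul _ hf.ennreal_ofReal,
      ← lintegral_add_left (hf.ennreal_ofReal.const_mul _), ← setLIntegral_const]
    refine lintegral_mono fun θ => ?_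
    have := hf₀ θ
    rw [← ENNReal.ofReal_mul (by positivity), ← ENNReal.ofReal_add (by positivity)
      (by positivity), ← ENNReal.ofReal_ofNat]
    exact ENNReal.ofReal_le_ofReal (hamgm θ)
  have hone : ENNReal.ofReal t⁻¹ * ∫⁻ θ in B, ENNReal.ofReal (f θ) ∂Pr ≤ Pr B :=
    calc ENNReal.ofReal t⁻¹ * ∫⁻ θ in B, ENNReal.ofReal (f θ) ∂Pr
        ≤ ENNReal.ofReal t⁻¹ * (ENNReal.ofReal t * Pr B) := by gcongr
      _ = Pr B := by
        rw [← mul_assoc, ← ENNReal.ofReal_mul (by positivity), inv_mul_cancel₀ ht.ne',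
          ENNReal.ofReal_one, one_mul]
  rw [two_mul] at htwo
  exact (ENNReal.add_le_add_iff_left (measure_ne_top Pr B)).1 (htwo.trans (by gcongr))

theorem measure_setLIntegral_likelihoodRatio_lt_le [IsProbabilityMeasure PX] [IsFiniteMeasure Pr]
    (hp₀ : Measurable p₀) (h₀ : ∀ x, p₀ x ∈ Set.Ioo (0 : ℝ) 1)
    (hp : Measurable (Function.uncurry p)) (hp₁ : ∀ θ x, p θ x ∈ Set.Ioo (0 : ℝ) 1)
    {B : Set Θ} (hB : MeasurableSet B) (hB₀ : Pr B ≠ 0) {κ : ℝ}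
    (hκ : ∀ θ ∈ B, ∀ᵐ x ∂PX, (p θ x - p₀ x) ^ 2 ≤ κ * (p θ x * (1 - p θ x)))
    {t : ℝ} (ht : 0 < t) :
    bernoulliSampleLaw PX p₀ n {D | ∫⁻ θ in B, ENNReal.ofReal (likelihoodRatio p₀ (p θ) D) ∂Pr <
        ENNReal.ofReal t * Pr B} ≤ ENNReal.ofReal (t * Real.exp (n * κ)) := by
  have := isProbabilityMeasure_bernoulliSampleLaw (PX := PX) hp₀ h₀ n
  have hratio := measurable_likelihoodRatio (n := n) hp₀ hp
  have hinv : Measurable fun z : (Fin n → X × ℝ) × Θ =>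
      ENNReal.ofReal (t * (likelihoodRatio p₀ (p z.2) z.1)⁻¹) :=
    ((hratio.comp measurable_swap).inv.const_mul t).ennreal_ofReal
  have hsub : {D : Fin n → X × ℝ | ∫⁻ θ in B, ENNReal.ofReal (likelihoodRatio p₀ (p θ) D) ∂Pr <
        ENNReal.ofReal t * Pr B} ⊆
      {D | Pr B ≤ ∫⁻ θ in B, ENNReal.ofReal (t * (likelihoodRatio p₀ (p θ) D)⁻¹) ∂Pr} :=
    fun D hD => measure_le_setLIntegral_mul_inv (hratio.comp measurable_prodMk_right)
      (fun θ => likelihoodRatio_pos h₀ (hp₁ θ) D) ht hD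
  refine (measure_mono hsub).trans ((meas_ge_le_lintegral_div
    hinv.lintegral_prod_right'.aemeasurable hB₀ (measure_ne_top Pr B)).trans
      (ENNReal.div_le_of_le_mul ?_))
  rw [lintegral_lintegral_swap hinv.aemeasurable, ← setLIntegral_const]
  refine setLIntegral_mono' hB fun θ hθ => ?_
  simp only [ENNReal.ofReal_mul ht.le]
  rw [lintegral_const_mul' _ _ ENNReal.ofReal_ne_top]
  gcongr
  exact lintegral_inv_likelihoodRatio_le hp₀ h₀ (measurable_of_uncurry hp θ) (hp₁ θ) (hκ θ hθ) n

theorem le_setLIntegral_of_lt_postMass {f : Θ → ℝ} {c : ℝ} (hc : 0 < c) {A : Set Θ} {δ e : ℝ≥0∞}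
    (hδ : δ < postMass Pr (fun θ => c * f θ) A) (he : e ≤ ∫⁻ θ, ENNReal.ofReal (f θ) ∂Pr) :
    δ * e ≤ ∫⁻ θ in A, ENNReal.ofReal (f θ) ∂Pr := by
  have hmul := (ENNReal.mul_lt_of_lt_div hδ).le
  simp only [ENNReal.ofReal_mul hc.le] at hmul
  rw [lintegral_const_mul' _ _ ENNReal.ofReal_ne_top,
    lintegral_const_mul' _ _ ENNReal.ofReal_ne_top, mul_left_comm,
    ENNReal.mul_le_mul_iff_right (ENNReal.ofReal_pos.2 hc).ne' ENNReal.ofReal_ne_top] at hmul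
  exact (mul_le_mul_right he δ).trans hmul

theorem measure_lt_postMass_le [IsProbabilityMeasure PX] [IsProbabilityMeasure Pr]
    (hp₀ : Measurable p₀) (h₀ : ∀ x, p₀ x ∈ Set.Ioo (0 : ℝ) 1)
    (hp : Measurable (Function.uncurry p)) (hp₁ : ∀ θ x, p θ x ∈ Set.Ioo (0 : ℝ) 1)
    {A : Set Θ} (hA : MeasurableSet A) {S : Finset Θ} {s : ℝ}
    (hS : ∀ θ ∈ S, s ≤ ∫ x, (p θ x - p₀ x) ^ 2 ∂PX)
    (hcover : ∀ θ ∈ A, ∃ θ' ∈ S, ∫ x, (p θ x - p θ' x) ^ 2 ∂PX ≤ s / 16)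
    {B : Set Θ} (hB : MeasurableSet B) {b : ℝ} (hb : 0 < b) (hbB : ENNReal.ofReal b ≤ Pr B) {κ : ℝ}
    (hκ : ∀ θ ∈ B, ∀ᵐ x ∂PX, (p θ x - p₀ x) ^ 2 ≤ κ * (p θ x * (1 - p θ x)))
    {t δ : ℝ} (ht : 0 < t) (hδ : 0 < δ) :
    bernoulliSampleLaw PX p₀ n {D | ENNReal.ofReal δ <
        postMass Pr (fun θ => bernoulliLikelihood (p θ) D) A} ≤
      ENNReal.ofReal (S.card * Real.exp (-(n * s / 16))) +
      ENNReal.ofReal (t * Real.exp (n * κ)) +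
      ENNReal.ofReal (Real.exp (-(n * s / 64)) / (δ * (t * b))) := by
  let evidence (D : Fin n → X × ℝ) : ℝ≥0∞ :=
    ∫⁻ θ in B, ENNReal.ofReal (likelihoodRatio p₀ (p θ) D) ∂Pr
  let accepted := acceptanceRegion PX p₀ p S n
  let numerator (D : Fin n → X × ℝ) : ℝ≥0∞ :=
    ∫⁻ θ in A, ENNReal.ofReal (likelihoodRatio p₀ (p θ) D) ∂Pr
  have hsub : {D | ENNReal.ofReal δ < postMass Pr (fun θ => bernoulliLikelihood (p θ) D) A} ⊆
      acceptedᶜ ∪ {D | evidence D < ENNReal.ofReal t * Pr B} ∪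
        {D | ENNReal.ofReal (δ * (t * b)) ≤ accepted.indicator numerator D} := by
    intro D hD
    by_cases hacc : D ∈ accepted
    · rcases lt_or_ge (evidence D) (ENNReal.ofReal t * Pr B) with hev | hev
      · exact Or.inl (Or.inr hev)
      · right
        simp only [Set.mem_ofPred_eq, ← bernoulliLikelihood_mul_likelihoodRatio h₀ (p _)]
          at hD
        rw [Set.mem_ofPred_eq, Set.indicator_of_mem hacc, ENNReal.ofReal_mul hδ.le,
          ENNReal.ofReal_mul ht.le]
        exact le_setLIntegral_of_lt_postMass (bernoulliLikelihood_pos h₀ D) hD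
          ((mul_le_mul_right hbB _).trans (hev.trans (setLIntegral_le_lintegral _ _)))
    · exact Or.inl (Or.inl hacc)
  refine (measure_mono hsub).trans ((measure_union_le _ _).trans (add_le_add
    ((measure_union_le _ _).trans (add_le_add ?_ ?_)) ?_))
  · exact measure_compl_acceptanceRegion_le hp₀ h₀ hp hp₁ hS
  · exact measure_setLIntegral_likelihoodRatio_lt_le hp₀ h₀ hp hp₁ hB
      ((ENNReal.ofReal_pos.2 hb).trans_le hbB).ne' hκ ht
  · exact measure_le_indicator_acceptanceRegion_le hp₀ h₀ hp hp₁ hA hS hcover (by positivity)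

end PosteriorBound

section ParameterPerturbation

theorem continuous_lrelu (ν : ℝ) : Continuous (lrelu ν) := by
  unfold lrelu
  fun_prop

theorem continuous_hiddenState (ν : ℝ) (d r L : ℕ) (ls : List (Fin (L - 1))) :
    Continuous fun z : (ParamIdx d r L → ℝ) × (Fin d → ℝ) =>
      hiddenState ν d r L ls z.1 z.2 := by
  refine continuous_pi fun i => ?_
  induction ls using List.reverseRecOn generalizing i with
  | nil =>
    simp only [hiddenState, List.foldl_nil]
    exact (continuous_lrelu ν).comp (by fun_prop)
  | append_singleton ls l ih =>
    simp only [hiddenState_concat]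
    exact (continuous_lrelu ν).comp (by fun_prop)

theorem continuous_netOfParams (ν : ℝ) (d r L : ℕ) :
    Continuous fun z : (ParamIdx d r L → ℝ) × (Fin d → ℝ) => netOfParams ν d r L z.1 z.2 := by
  have := continuous_pi_iff.1 (continuous_hiddenState ν d r L (List.finRange (L - 1)))
  simp only [netOfParams_eq_hiddenState]
  fun_prop

@[simp]
theorem lrelu_zero (ν : ℝ) : lrelu ν 0 = 0 := by
  simp [lrelu]

variable {ν : ℝ}

theorem abs_lrelu_sub_le (hν0 : 0 ≤ ν) (hν1 : ν ≤ 1) (x y : ℝ) :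
    |lrelu ν x - lrelu ν y| ≤ |x - y| := by
  refine (abs_max_sub_max_le_max _ _ _ _).trans (max_le le_rfl ?_)
  rw [← mul_sub, abs_mul, abs_of_nonneg hν0]
  exact mul_le_of_le_one_left (abs_nonneg _) hν1

theorem abs_lrelu_le (hν0 : 0 ≤ ν) (hν1 : ν ≤ 1) (x : ℝ) : |lrelu ν x| ≤ |x| := by
  simpa using abs_lrelu_sub_le hν0 hν1 x 0

section Affine

variable {ι : Type*} [Fintype ι] {w w' h h' : ι → ℝ} {b b' κ H η : ℝ}

theorem abs_affine_le (hw : ∀ j, |w j| ≤ κ) (hb : |b| ≤ κ) (hh : ∀ j, |h j| ≤ H) (hH : 1 ≤ H) :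
    |(∑ j, w j * h j) + b| ≤ (Fintype.card ι + 1) * κ * H := by
  have hκ : 0 ≤ κ := (abs_nonneg b).trans hb
  calc |(∑ j, w j * h j) + b| ≤ ∑ j, |w j| * |h j| + |b| := by
        simp only [← abs_mul]
        exact (abs_add_le _ _).trans (by gcongr; exact Finset.abs_sum_le_sum_abs _ _)
    _ ≤ ∑ _j : ι, κ * H + κ * H := by
        gcongr with j
        · exact hw j
        · exact hh j
        · exact hb.trans (le_mul_of_one_le_right hκ hH)
    _ = (Fintype.card ι + 1) * κ * H := by
        rw [Finset.sum_const, Finset.card_univ, nsmul_eq_mul]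
        ring

theorem abs_affine_sub_le {k : ℝ} (hκ : 1 ≤ κ) (hw : ∀ j, |w j| ≤ κ)
    (hww' : ∀ j, |w j - w' j| ≤ η) (hbb' : |b - b'| ≤ η) (hk : 0 ≤ k) (hH : 1 ≤ H)
    (hh' : ∀ j, |h' j| ≤ H) (hhh' : ∀ j, |h j - h' j| ≤ k * η * H) :
    |((∑ j, w j * h j) + b) - ((∑ j, w' j * h' j) + b')| ≤
      (k + 1) * η * ((Fintype.card ι + 1) * κ * H) := by
  have hη : 0 ≤ η := (abs_nonneg _).trans hbb'
  have split : ((∑ j, w j * h j) + b) - ((∑ j, w' j * h' j) + b') =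
      (∑ j, (w j * (h j - h' j) + (w j - w' j) * h' j)) + (b - b') := by
    rw [add_sub_add_comm, ← Finset.sum_sub_distrib]
    congr 2 with j
    ring
  have hterm (j : ι) : |w j * (h j - h' j) + (w j - w' j) * h' j| ≤ κ * (k * η * H) + η * H :=
    (abs_add_le _ _).trans <| by
      rw [abs_mul, abs_mul]
      gcongr
      exacts [hw j, hhh' j, hww' j, hh' j]
  calc _ ≤ ∑ _j : ι, (κ * (k * η * H) + η * H) + η := by
        rw [split]
        exact (abs_add_le _ _).trans (add_le_add
          ((Finset.abs_sum_le_sum_abs _ _).trans (Finset.sum_le_sum fun j _ => hterm j)) hbb')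
    _ ≤ ∑ _j : ι, (κ * (k * η * H) + κ * (η * H)) + (k + 1) * (κ * (η * H)) := by
        have hηH : η * H ≤ κ * (η * H) := le_mul_of_one_le_left (by positivity) hκ
        gcongr
        calc η ≤ η * H := le_mul_of_one_le_right hη hH
          _ ≤ κ * (η * H) := hηH
          _ ≤ (k + 1) * (κ * (η * H)) :=
            le_mul_of_one_le_left (by positivity) (le_add_of_nonneg_left hk)
    _ = (k + 1) * η * ((Fintype.card ι + 1) * κ * H) := by
        rw [Finset.sum_const, Finset.card_univ, nsmul_eq_mul]
        ring

end Affine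

/-- On the cube `[−a,a]^d`, one layer of width `r` with parameters bounded by `κ` enlarges the
activations by at most this factor. -/
def layerGrowth (κ a : ℝ) (d r : ℕ) : ℝ := κ * (r + d + 1) * a

variable {d r L : ℕ} {θ θ' : ParamIdx d r L → ℝ} {κ a η : ℝ} {x : Fin d → ℝ}

theorem one_le_layerGrowth (hκ : 1 ≤ κ) (ha : 1 ≤ a) (d r : ℕ) : 1 ≤ layerGrowth κ a d r :=
  one_le_mul_of_one_le_of_one_le
    (one_le_mul_of_one_le_of_one_le hκ (le_add_of_nonneg_left (by positivity))) ha

theorem input_le_layerGrowth (hκ : 0 ≤ κ) (ha : 0 ≤ a) (d r : ℕ) :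
    (d + 1) * κ * a ≤ layerGrowth κ a d r := by
  rw [layerGrowth, mul_comm (_ + 1) κ]
  gcongr
  exact le_add_of_nonneg_left (by positivity)

theorem width_le_layerGrowth (hκ : 0 ≤ κ) (ha : 1 ≤ a) (d r : ℕ) :
    (r + 1) * κ ≤ layerGrowth κ a d r := by
  rw [mul_comm]
  refine (mul_le_mul_of_nonneg_left ?_ hκ).trans (le_mul_of_one_le_right (by positivity) ha)
  gcongr
  exact le_add_of_nonneg_right (by positivity)

theorem abs_hiddenState_le (hν0 : 0 ≤ ν) (hν1 : ν ≤ 1) (hκ : 1 ≤ κ) (ha : 1 ≤ a)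
    (hθ : ∀ i, |θ i| ≤ κ) (hx : x ∈ cube a d) (ls : List (Fin (L - 1))) (i : Fin r) :
    |hiddenState ν d r L ls θ x i| ≤ layerGrowth κ a d r ^ (ls.length + 1) := by
  have hκ0 : 0 ≤ κ := zero_le_one.trans hκ
  have hΛ := one_le_layerGrowth hκ ha d r
  induction ls using List.reverseRecOn generalizing i with
  | nil =>
    have layer_le := (abs_lrelu_le hν0 hν1 _).trans (abs_affine_le
      (fun j => hθ (Sum.inl (i, j))) (hθ (Sum.inr (Sum.inl i))) (fun j => abs_le.2 (hx j)) ha)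
    rw [Fintype.card_fin] at layer_le
    simpa [hiddenState] using
      layer_le.trans (input_le_layerGrowth hκ0 (zero_le_one.trans ha) d r)
  | append_singleton ls l ih =>
    have layer_le := (abs_lrelu_le hν0 hν1 _).trans (abs_affine_le
      (fun j => hθ (Sum.inr (Sum.inr (Sum.inl (l, i, j)))))
      (hθ (Sum.inr (Sum.inr (Sum.inr (Sum.inl (l, i)))))) ih (one_le_pow₀ hΛ))
    rw [Fintype.card_fin] at layer_le
    rw [hiddenState_concat, List.length_append, List.length_singleton, pow_succ' _ (_ + 1)]
    exact layer_le.trans (by gcongr; exact width_le_layerGrowth hκ0 ha d r)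

theorem abs_hiddenState_sub_le (hν0 : 0 ≤ ν) (hν1 : ν ≤ 1) (hκ : 1 ≤ κ) (ha : 1 ≤ a)
    (hη : 0 ≤ η) (hθ : ∀ i, |θ i| ≤ κ) (hθ' : ∀ i, |θ' i| ≤ κ)
    (hθθ' : ∀ i, |θ i - θ' i| ≤ η) (hx : x ∈ cube a d) (ls : List (Fin (L - 1))) (i : Fin r) :
    |hiddenState ν d r L ls θ x i - hiddenState ν d r L ls θ' x i| ≤
      (ls.length + 1) * η * layerGrowth κ a d r ^ (ls.length + 1) := by
  have hκ0 : 0 ≤ κ := zero_le_one.trans hκ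
  have hΛ := one_le_layerGrowth hκ ha d r
  induction ls using List.reverseRecOn generalizing i with
  | nil =>
    have layer_le := (abs_lrelu_sub_le hν0 hν1 _ _).trans (abs_affine_sub_le (k := 0) hκ
      (fun j => hθ (Sum.inl (i, j))) (fun j => hθθ' _) (hθθ' (Sum.inr (Sum.inl i))) le_rfl ha
      (fun j => abs_le.2 (hx j)) (h := x) (fun j => by simp))
    rw [Fintype.card_fin] at layer_le
    simpa [hiddenState] using layer_le.trans
      (mul_le_mul_of_nonneg_left (input_le_layerGrowth hκ0 (zero_le_one.trans ha) d r)
        (by positivity))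
  | append_singleton ls l ih =>
    have layer_le := (abs_lrelu_sub_le hν0 hν1 _ _).trans (abs_affine_sub_le hκ
      (fun j => hθ (Sum.inr (Sum.inr (Sum.inl (l, i, j))))) (fun j => hθθ' _)
      (hθθ' (Sum.inr (Sum.inr (Sum.inr (Sum.inl (l, i)))))) (by positivity) (one_le_pow₀ hΛ)
      (abs_hiddenState_le hν0 hν1 hκ ha hθ' hx ls) ih)
    rw [Fintype.card_fin] at layer_le
    rw [hiddenState_concat, hiddenState_concat, List.length_append, List.length_singleton,
      pow_succ' _ (_ + 1), Nat.cast_succ]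
    exact layer_le.trans (by gcongr; exact width_le_layerGrowth hκ0 ha d r)

theorem abs_netOfParams_sub_le (hν0 : 0 ≤ ν) (hν1 : ν ≤ 1) (hκ : 1 ≤ κ) (ha : 1 ≤ a)
    (hη : 0 ≤ η) (hθ : ∀ i, |θ i| ≤ κ) (hθ' : ∀ i, |θ' i| ≤ κ)
    (hθθ' : ∀ i, |θ i - θ' i| ≤ η) (hx : x ∈ cube a d) :
    |netOfParams ν d r L θ x - netOfParams ν d r L θ' x| ≤
      (L + 2) * η * layerGrowth κ a d r ^ (L + 2) := by
  have hΛ := one_le_layerGrowth hκ ha d r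
  rw [netOfParams_eq_hiddenState, netOfParams_eq_hiddenState]
  refine (abs_affine_sub_le hκ (fun j => hθ _) (fun j => hθθ' _) (hθθ' _) (by positivity)
    (one_le_pow₀ hΛ) (abs_hiddenState_le hν0 hν1 hκ ha hθ' hx _)
    (abs_hiddenState_sub_le hν0 hν1 hκ ha hη hθ hθ' hθθ' hx _)).trans ?_
  rw [Fintype.card_fin, List.length_finRange]
  calc _ ≤ ((L - 1 : ℕ) + 1 + 1) * η *
          (layerGrowth κ a d r * layerGrowth κ a d r ^ (L - 1 + 1)) := by
        gcongr
        exact width_le_layerGrowth (zero_le_one.trans hκ) ha d r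
    _ ≤ (L + 2) * η * layerGrowth κ a d r ^ (L + 2) := by
        rw [← pow_succ', add_assoc, one_add_one_eq_two]
        gcongr ?_ * η * ?_
        · gcongr
          exact Nat.sub_le L 1
        · exact pow_le_pow_right₀ hΛ (by lia)

end ParameterPerturbation

section Architecture

/-- One hidden layer, given by its weight matrix and bias vector. -/
def layer (ν : ℝ) {m k : ℕ} (p : (Fin k → Fin m → ℝ) × (Fin k → ℝ)) (h : Fin m → ℝ) :
    Fin k → ℝ :=
  fun i => lrelu ν ((∑ j, p.1 i j * h j) + p.2 i)

theorem layer_append_rows (ν : ℝ) {m r : ℕ} (k : ℕ) (W : Fin r → Fin m → ℝ) (b : Fin r → ℝ)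
    (h : Fin m → ℝ) :
    layer ν (Fin.append W (0 : Fin k → Fin m → ℝ), Fin.append b (0 : Fin k → ℝ)) h =
      Fin.append (layer ν (W, b) h) 0 := by
  funext i
  refine Fin.addCases (fun i => ?_) (fun i => ?_) i <;> simp [layer]

theorem layer_append_columns (ν : ℝ) {m r : ℕ} (k : ℕ) (W : Fin r → Fin m → ℝ) (b : Fin r → ℝ)
    (h : Fin m → ℝ) :
    layer ν (fun i => Fin.append (W i) (0 : Fin k → ℝ), b) (Fin.append h 0) =
      layer ν (W, b) h := by
  funext i
  simp [layer, Fin.sum_univ_add]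

theorem abs_append_zero_le {m : ℕ} (k : ℕ) {v : Fin m → ℝ} {B : ℝ} (hB : 0 ≤ B)
    (hv : ∀ i, |v i| ≤ B) (i : Fin (m + k)) : |Fin.append v (0 : Fin k → ℝ) i| ≤ B :=
  Fin.addCases (fun i => by simpa using hv i) (fun i => by simpa using hB) i

theorem abs_append_zero_rows_le {m r : ℕ} (k : ℕ) {W : Fin r → Fin m → ℝ} {B : ℝ} (hB : 0 ≤ B)
    (hW : ∀ i j, |W i j| ≤ B) (i : Fin (r + k)) (j : Fin m) :
    |Fin.append W (0 : Fin k → Fin m → ℝ) i j| ≤ B :=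
  Fin.addCases (fun i => by simpa using hW i j) (fun i => by simpa using hB) i

theorem lrelu_sub_lrelu_neg {ν : ℝ} (hν : ν ≤ 1) (y : ℝ) :
    lrelu ν y - lrelu ν (-y) = (1 + ν) * y := by
  rcases le_total 0 y with hy | hy
  · rw [lrelu_of_nonneg hν hy, lrelu_of_nonpos hν (neg_nonpos.2 hy)]
    ring
  · rw [lrelu_of_nonpos hν hy, lrelu_of_nonneg hν (neg_nonneg.2 hy)]
    ring

namespace LNet

variable {d r : ℕ} {ν B : ℝ}

/-- The activations of the last hidden layer. -/
def state (ν : ℝ) (net : LNet d r) (x : Fin d → ℝ) : Fin r → ℝ :=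
  net.hid.foldl (fun h p => layer ν p h) (layer ν (net.W0, net.b0) x)

theorem eval_eq_state (ν : ℝ) (net : LNet d r) (x : Fin d → ℝ) :
    net.eval ν x = (∑ i, net.Wout i * net.state ν x i) + net.bout := rfl

theorem state_eq_foldl_finRange (ν : ℝ) (net : LNet d r) (x : Fin d → ℝ) :
    net.state ν x = (List.finRange net.hid.length).foldl
      (fun h l => layer ν (net.hid.get l) h) (layer ν (net.W0, net.b0) x) := by
  conv_lhs => rw [state, ← net.hid.map_get_finRange, List.foldl_map]

/-- The network with `k` idle neurons, all of whose weights are zero, added to each hidden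
layer. -/
def widen (k : ℕ) (net : LNet d r) : LNet d (r + k) where
  W0 := Fin.append net.W0 0
  b0 := Fin.append net.b0 0
  hid := net.hid.map fun p => (Fin.append (fun i => Fin.append (p.1 i) 0) 0, Fin.append p.2 0)
  Wout := Fin.append net.Wout 0
  bout := net.bout

theorem bounded.widen {net : LNet d r} (hnet : net.bounded B) (k : ℕ) :
    (net.widen k).bounded B := by
  obtain ⟨hW0, hb0, hhid, hWout, hbout⟩ := hnet
  have hB : 0 ≤ B := (abs_nonneg _).trans hbout
  refine ⟨abs_append_zero_rows_le k hB hW0, abs_append_zero_le k hB hb0, ?_,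
    abs_append_zero_le k hB hWout, hbout⟩
  refine List.forall_mem_map.2 fun p hp => ⟨abs_append_zero_rows_le k hB fun i =>
    abs_append_zero_le k hB ((hhid p hp).1 i), abs_append_zero_le k hB (hhid p hp).2⟩

theorem state_widen (net : LNet d r) (k : ℕ) (x : Fin d → ℝ) :
    (net.widen k).state ν x = Fin.append (net.state ν x) 0 := by
  rw [state, widen, List.foldl_map, layer_append_rows]
  exact List.foldl_hom (fun h => Fin.append h 0) fun h p => by
    rw [layer_append_rows, layer_append_columns]

theorem eval_widen (net : LNet d r) (k : ℕ) (x : Fin d → ℝ) :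
    (net.widen k).eval ν x = net.eval ν x := by
  rw [eval_eq_state, eval_eq_state, state_widen]
  simp [widen, Fin.sum_univ_add]

/-- The vector `(1, -1, 0, …, 0)`. -/
def signs (r : ℕ) : Fin (r + 2) → ℝ := Fin.cons 1 (Fin.cons (-1) 0)

theorem abs_signs_le_one (i : Fin (r + 2)) : |signs r i| ≤ 1 := by
  refine Fin.cases ?_ (Fin.cases ?_ fun i => ?_) i <;> simp [signs]

theorem abs_signs_mul_le {y : ℝ} (hy : |y| ≤ B) (i : Fin (r + 2)) : |signs r i * y| ≤ B := by
  rw [abs_mul]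
  exact (mul_le_of_le_one_left (abs_nonneg y) (abs_signs_le_one i)).trans hy

theorem sum_signs_mul (g : ℝ → ℝ) :
    ∑ i : Fin (r + 2), signs r i * g (signs r i) = g 1 - g (-1) := by
  simp [Fin.sum_univ_succ, signs, sub_eq_add_neg]

/-- The network with one further hidden layer, holding the old output `y` and its negative. The
new output is `y`, by `lrelu_sub_lrelu_neg`. -/
def deepen (ν : ℝ) (net : LNet d (r + 2)) : LNet d (r + 2) where
  W0 := net.W0
  b0 := net.b0
  hid := net.hid ++ [(fun i j => signs r i * net.Wout j, fun i => signs r i * net.bout)]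
  Wout := fun i => signs r i * (1 + ν)⁻¹
  bout := 0

theorem bounded.deepen {net : LNet d (r + 2)} (hnet : net.bounded B) (hν : 0 ≤ ν)
    (hB : 1 ≤ B) : (net.deepen ν).bounded B := by
  obtain ⟨hW0, hb0, hhid, hWout, hbout⟩ := hnet
  have hinv : |(1 + ν)⁻¹| ≤ B := by
    rw [abs_of_nonneg (by positivity)]
    exact (inv_le_one_of_one_le₀ (le_add_of_nonneg_right hν)).trans hB
  refine ⟨hW0, hb0, fun p hp => ?_, abs_signs_mul_le hinv, ?_⟩
  · rcases List.mem_append.1 hp with hp | hp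
    · exact hhid p hp
    · rw [List.mem_singleton.1 hp]
      exact ⟨fun i j => abs_signs_mul_le (hWout j) i, abs_signs_mul_le hbout⟩
  · simpa [LNet.deepen] using zero_le_one.trans hB

theorem eval_deepen (hν0 : 0 ≤ ν) (hν1 : ν ≤ 1) (net : LNet d (r + 2)) (x : Fin d → ℝ) :
    (net.deepen ν).eval ν x = net.eval ν x := by
  let y := net.eval ν x
  have hstate (i : Fin (r + 2)) : (net.deepen ν).state ν x i = lrelu ν (signs r i * y) := by
    simp only [state, deepen, List.foldl_append, List.foldl_cons, List.foldl_nil, layer,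
      mul_assoc, ← Finset.mul_sum, ← mul_add]
    rfl
  calc (net.deepen ν).eval ν x
      = ∑ i, signs r i * ((1 + ν)⁻¹ * lrelu ν (signs r i * y)) := by
        rw [eval_eq_state]
        simp only [hstate]
        simp only [deepen, mul_assoc, add_zero]
    _ = (1 + ν)⁻¹ * (lrelu ν y - lrelu ν (-y)) := by
        rw [sum_signs_mul fun s => (1 + ν)⁻¹ * lrelu ν (s * y), one_mul, neg_one_mul, mul_sub]
    _ = y := by
        rw [lrelu_sub_lrelu_neg hν1, inv_mul_cancel_left₀ (by positivity)]

end LNet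

namespace memDNN

variable {ν B : ℝ} {d L r : ℕ} {f : (Fin d → ℝ) → ℝ}

theorem mono_bound {B' : ℝ} (hf : memDNN ν d L r B f) (hB : B ≤ B') : memDNN ν d L r B' f :=
  let ⟨net, hL, ⟨hW0, hb0, hhid, hWout, hbout⟩, heval⟩ := hf
  ⟨net, hL, ⟨fun i j => (hW0 i j).trans hB, fun i => (hb0 i).trans hB,
    fun p hp => ⟨fun i j => ((hhid p hp).1 i j).trans hB, fun i => ((hhid p hp).2 i).trans hB⟩,
    fun i => (hWout i).trans hB, hbout.trans hB⟩, heval⟩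

theorem mono_width {r' : ℕ} (hf : memDNN ν d L r B f) (hr : r ≤ r') : memDNN ν d L r' B f := by
  obtain ⟨k, rfl⟩ := Nat.exists_eq_add_of_le hr
  obtain ⟨net, hL, hnet, heval⟩ := hf
  exact ⟨net.widen k, by simpa [LNet.widen] using hL, hnet.widen k,
    fun x => (heval x).trans (net.eval_widen k x).symm⟩

theorem mono_depth {L' : ℕ} (hf : memDNN ν d L r B f) (hν0 : 0 ≤ ν) (hν1 : ν ≤ 1) (hB : 1 ≤ B)
    (hr : 2 ≤ r) (hL : L ≤ L') : memDNN ν d L' r B f := by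
  obtain ⟨r, rfl⟩ := Nat.exists_eq_add_of_le' hr
  induction L', hL using Nat.le_induction with
  | base => exact hf
  | succ L' _ ih =>
    obtain ⟨net, hL, hnet, heval⟩ := ih
    exact ⟨net.deepen ν, by simpa [LNet.deepen] using hL, hnet.deepen hν0 hB,
      fun x => (heval x).trans (net.eval_deepen hν0 hν1 x).symm⟩

theorem exists_netOfParams_eq (hf : memDNN ν d L r B f) :
    ∃ θ : ParamIdx d r L → ℝ, (∀ i, |θ i| ≤ B) ∧ netOfParams ν d r L θ = f := by
  obtain ⟨net, rfl, ⟨hW0, hb0, hhid, hWout, hbout⟩, heval⟩ := hf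
  refine ⟨fun
    | Sum.inl (i, j) => net.W0 i j
    | Sum.inr (Sum.inl i) => net.b0 i
    | Sum.inr (Sum.inr (Sum.inl (l, i, j))) => (net.hid.get l).1 i j
    | Sum.inr (Sum.inr (Sum.inr (Sum.inl (l, i)))) => (net.hid.get l).2 i
    | Sum.inr (Sum.inr (Sum.inr (Sum.inr (Sum.inl i)))) => net.Wout i
    | Sum.inr (Sum.inr (Sum.inr (Sum.inr (Sum.inr ())))) => net.bout, ?_, funext fun x => ?_⟩
  · rintro (⟨i, j⟩ | i | ⟨l, i, j⟩ | ⟨l, i⟩ | i | _)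
    exacts [hW0 i j, hb0 i, (hhid _ (List.get_mem _ l)).1 i j, (hhid _ (List.get_mem _ l)).2 i,
      hWout i, hbout]
  · rw [heval, LNet.eval_eq_state, LNet.state_eq_foldl_finRange]
    rfl

end memDNN

end Architecture

section FixedSampleSize

theorem ofReal_pow_card_le_withDensity_Icc {ι : Type*} [Fintype ι] {π : (ι → ℝ) → ℝ}
    {κ c η : ℝ} (hc : 0 ≤ c) (hη : 0 ≤ η)
    (hπ : ∀ θ : ι → ℝ, (∀ i, |θ i| ≤ κ) → c ^ Fintype.card ι ≤ π θ) {θ₀ : ι → ℝ}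
    (hθ₀ : ∀ i, |θ₀ i| ≤ κ - η) :
    ENNReal.ofReal ((c * (2 * η)) ^ Fintype.card ι) ≤
      (volume.withDensity fun θ => ENNReal.ofReal (π θ))
        (Set.Icc (fun i => θ₀ i - η) fun i => θ₀ i + η) := by
  rw [withDensity_apply _ measurableSet_Icc]
  calc ENNReal.ofReal ((c * (2 * η)) ^ Fintype.card ι)
      = ∫⁻ _ in Set.Icc (fun i => θ₀ i - η) fun i => θ₀ i + η,
          ENNReal.ofReal (c ^ Fintype.card ι) := by
        have hside (i : ι) : θ₀ i + η - (θ₀ i - η) = 2 * η := by ring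
        rw [setLIntegral_const, Real.volume_Icc_pi, mul_pow, ENNReal.ofReal_mul (by positivity),
          ENNReal.ofReal_pow (by positivity)]
        simp only [hside, Finset.prod_const, Finset.card_univ]
        rw [ENNReal.ofReal_pow (by positivity)]
    _ ≤ _ := setLIntegral_mono' measurableSet_Icc fun θ hθ =>
        ENNReal.ofReal_le_ofReal <| hπ θ fun i => by
          have := abs_le.1 (hθ₀ i)
          exact abs_le.2 ⟨by linarith [hθ.1 i], by linarith [hθ.2 i]⟩

theorem measurableSet_cube (a : ℝ) (d : ℕ) : MeasurableSet (cube a d) := by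
  have : cube a d = Set.univ.pi fun _ => Set.Icc (-a) a := by
    ext x
    simp only [cube, Set.mem_ofPred_eq, Set.mem_univ_pi]
  rw [this]
  exact MeasurableSet.univ_pi fun _ => measurableSet_Icc

theorem measurableSet_lt_l2dist {Θ : Type*} [MeasurableSpace Θ] {d : ℕ}
    {PX : Measure (Fin d → ℝ)} [SFinite PX] {p : Θ → (Fin d → ℝ) → ℝ}
    (hp : Measurable (Function.uncurry p)) {p₀ : (Fin d → ℝ) → ℝ} (hp₀ : Measurable p₀)
    (τ : ℝ) : MeasurableSet {θ | τ < l2dist d PX (p θ) p₀} := by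
  have hsq : StronglyMeasurable
      (Function.uncurry fun (θ : Θ) (x : Fin d → ℝ) => (p θ x - p₀ x) ^ 2) :=
    ((hp.sub (hp₀.comp measurable_snd)).pow_const 2).stronglyMeasurable
  exact measurableSet_lt measurable_const
    (Real.continuous_sqrt.measurable.comp hsq.integral_prod_right.measurable)

theorem sq_successProb_sub_le {X : Type*} {F : ℝ} (hF : 0 ≤ F) {f f₀ : X → ℝ} {x : X}
    (hf₀ : |f₀ x| ≤ F) {e : ℝ} (he : |f x - f₀ x| ≤ e) :
    (successProb F f x - sigmoid (f₀ x)) ^ 2 ≤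
      e ^ 2 / sigmoid (-F) ^ 2 * (successProb F f x * (1 - successProb F f x)) := by
  have hs : 0 < sigmoid (-F) := by
    rw [sigmoid_eq_real_sigmoid]
    exact Real.sigmoid_pos _
  obtain ⟨hlo, hhi⟩ := successProb_mem_Icc hF f x
  have hdiff : |successProb F f x - sigmoid (f₀ x)| ≤ e := by
    rw [← successProb_of_abs_le hf₀]
    exact (abs_successProb_sub_le F f f₀ x x).trans he
  calc (successProb F f x - sigmoid (f₀ x)) ^ 2 ≤ e ^ 2 := sq_le_sq' (abs_le.1 hdiff).1
        (abs_le.1 hdiff).2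
    _ = e ^ 2 / sigmoid (-F) ^ 2 * (sigmoid (-F) * sigmoid (-F)) := by
        field_simp
    _ ≤ _ := by
        gcongr
        · exact hs.le.trans hlo
        · exact le_sub_comm.1 hhi

theorem ae_abs_netOfParams_sub_le {ν : ℝ} (hν0 : 0 ≤ ν) (hν1 : ν ≤ 1) {d r L : ℕ} {a κ η : ℝ}
    (ha : 1 ≤ a) (hκ : 1 ≤ κ) (hη : 0 ≤ η) {PX : Measure (Fin d → ℝ)} [IsProbabilityMeasure PX]
    (hPX : PX (cube a d) = 1) {f₀ : (Fin d → ℝ) → ℝ} {θ₀ : ParamIdx d r L → ℝ}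
    (hθ₀ : ∀ i, |θ₀ i| ≤ κ - η) {e : ℝ}
    (he : ∀ x ∈ cube a d, |netOfParams ν d r L θ₀ x - f₀ x| ≤ e) {θ : ParamIdx d r L → ℝ}
    (hθ : θ ∈ Set.Icc (fun i => θ₀ i - η) fun i => θ₀ i + η) :
    ∀ᵐ x ∂PX, x ∈ cube a d ∧ |netOfParams ν d r L θ x - f₀ x| ≤
      (L + 2) * η * layerGrowth κ a d r ^ (L + 2) + e := by
  have hclose (i) : |θ i - θ₀ i| ≤ η :=
    abs_le.2 ⟨by linarith [hθ.1 i], by linarith [hθ.2 i]⟩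
  have hθκ (i) : |θ i| ≤ κ := by
    linarith [abs_sub_abs_le_abs_sub (θ i) (θ₀ i), hclose i, hθ₀ i]
  filter_upwards [(mem_ae_iff_prob_eq_one (measurableSet_cube a d)).2 hPX] with x hx
  exact ⟨hx, (abs_sub_le _ (netOfParams ν d r L θ₀ x) _).trans <| add_le_add
    (abs_netOfParams_sub_le hν0 hν1 hκ ha hη hθκ (fun i => (hθ₀ i).trans (by linarith)) hclose hx)
    (he x hx)⟩

theorem exists_finset_netOfParams_cover {ν F : ℝ} (hν1 : ν ≤ 1) (hF : 0 ≤ F)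
    {d r L n : ℕ} (PX : Measure (Fin d → ℝ)) [IsProbabilityMeasure PX] {h : ℝ} (hh : 0 < h)
    (hn : 2 ≤ n * h ^ 2)
    (hcard : ((signPatternBound (Fintype.card (ParamIdx d r L))
      (n * (r + (⌊2 * F / h⌋₊ + 1))) (L + 2) ^ (L + 2) : ℕ) : ℝ) ≤ Real.exp (n * h ^ 2))
    (A : Set (ParamIdx d r L → ℝ)) :
    ∃ S : Finset (ParamIdx d r L → ℝ), ↑S ⊆ A ∧ (S.card : ℝ) ≤ Real.exp (n * h ^ 2) ∧
      ∀ θ ∈ A, ∃ θ' ∈ S, ∫ x, (successProb F (netOfParams ν d r L θ) x -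
        successProb F (netOfParams ν d r L θ') x) ^ 2 ∂PX ≤ 4 * h ^ 2 := by
  refine exists_finset_successProb_cover PX
    (fun θ => ((continuous_netOfParams ν d r L).comp (.prodMk_right θ)).measurable) hF hh hn
    (fun x => le_trans ?_ hcard) A
  have := ncard_threshold_patterns_le d r L hν1 x
    fun k : Fin (⌊2 * F / h⌋₊ + 1) => -F + (k : ℕ) * h
  rw [Fintype.card_fin] at this
  exact_mod_cast this

/-- The three terms bound the type I error of the tests, the fluctuation of the evidence, and the
type II error divided by the evidence. -/
theorem measure_lt_postMass_bernLik_le {ν F : ℝ} (hν0 : 0 ≤ ν) (hν1 : ν ≤ 1) (hF : 0 ≤ F)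
    {d r L n : ℕ} {a κ c η : ℝ} (ha : 1 ≤ a) (hκ : 1 ≤ κ) (hc : 0 < c) (hη : 0 < η)
    {PX : Measure (Fin d → ℝ)} [IsProbabilityMeasure PX] (hPX : PX (cube a d) = 1)
    {f₀ : (Fin d → ℝ) → ℝ} (hf₀ : Measurable f₀) (hf₀F : ∀ x ∈ cube a d, |f₀ x| ≤ F)
    {Pr : Measure (ParamIdx d r L → ℝ)} [IsProbabilityMeasure Pr] {π : (ParamIdx d r L → ℝ) → ℝ}
    (hPr : Pr = volume.withDensity fun θ => ENNReal.ofReal (π θ))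
    (hπ : ∀ θ, (∀ i, |θ i| ≤ κ) → c ^ Fintype.card (ParamIdx d r L) ≤ π θ)
    {θ₀ : ParamIdx d r L → ℝ} (hθ₀ : ∀ i, |θ₀ i| ≤ κ - η) {e : ℝ}
    (he : ∀ x ∈ cube a d, |netOfParams ν d r L θ₀ x - f₀ x| ≤ e)
    {τ : ℝ} (hτ : 0 < τ) (hnτ : 2 ≤ n * (τ / 8) ^ 2)
    (hcard : ((signPatternBound (Fintype.card (ParamIdx d r L))
      (n * (r + (⌊2 * F / (τ / 8)⌋₊ + 1))) (L + 2) ^ (L + 2) : ℕ) : ℝ) ≤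
        Real.exp (n * (τ / 8) ^ 2))
    {t δ : ℝ} (ht : 0 < t) (hδ : 0 < δ) :
    Measure.pi (fun _ : Fin n => logisticLaw d PX f₀)
      {D | ENNReal.ofReal δ < postMass Pr (bernLik ν F d r L D)
        {θ | τ < l2dist d PX (fun x => sigmoid (trunc F (netOfParams ν d r L θ x)))
          fun x => sigmoid (f₀ x)}} ≤
      ENNReal.ofReal (Real.exp (n * (τ / 8) ^ 2) * Real.exp (-(n * τ ^ 2 / 16))) +
      ENNReal.ofReal (t * Real.exp (n *
        (((L + 2) * η * layerGrowth κ a d r ^ (L + 2) + e) ^ 2 / sigmoid (-F) ^ 2))) +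
      ENNReal.ofReal (Real.exp (-(n * τ ^ 2 / 64)) /
        (δ * (t * (c * (2 * η)) ^ Fintype.card (ParamIdx d r L)))) := by
  have hp₀ : Measurable fun x => sigmoid (f₀ x) :=
    lipschitzWith_sigmoid.continuous.measurable.comp hf₀
  have hp : Measurable (Function.uncurry fun θ => successProb F (netOfParams ν d r L θ)) :=
    measurable_successProb F (continuous_netOfParams ν d r L).measurable
  obtain ⟨S, hSA, hScard, hScover⟩ := exists_finset_netOfParams_cover hν1 hF PX
    (by positivity : 0 < τ / 8) hnτ hcard
    {θ | τ < l2dist d PX (successProb F (netOfParams ν d r L θ)) fun x => sigmoid (f₀ x)}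
  have hball := ofReal_pow_card_le_withDensity_Icc hc.le hη.le hπ hθ₀
  rw [← hPr] at hball
  refine (measure_lt_postMass_le
    (κ := ((L + 2) * η * layerGrowth κ a d r ^ (L + 2) + e) ^ 2 / sigmoid (-F) ^ 2) hp₀
    (fun x => ?_) hp (fun θ x => successProb_mem_Ioo F _ x)
    (measurableSet_lt_l2dist hp hp₀ τ) (fun θ hθ => ((Real.lt_sqrt hτ.le).1 (hSA hθ)).le)
    (fun θ hθ => ?_) measurableSet_Icc (by positivity) hball (fun θ hθ => ?_) ht hδ).trans ?_
  · rw [sigmoid_eq_real_sigmoid]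
    exact ⟨Real.sigmoid_pos _, Real.sigmoid_lt_one _⟩
  · obtain ⟨θ', hθ'S, hθ'⟩ := hScover θ hθ
    exact ⟨θ', hθ'S, hθ'.trans_eq (by ring)⟩
  · filter_upwards [ae_abs_netOfParams_sub_le hν0 hν1 ha hκ hη.le hPX hθ₀ he hθ] with x hx
    exact sq_successProb_sub_le hF (hf₀F x hx.1) hx.2
  · gcongr

end FixedSampleSize

section PolynomialGrowth

open Asymptotics

/-- The real sequence `f` is `O(n ^ p)` for some natural exponent `p`; this is what makes
`log (f n)` an `O(log n)`. -/
def PolyBounded (f : ℕ → ℝ) : Prop :=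
  ∃ p : ℕ, f =O[atTop] fun n : ℕ => (n : ℝ) ^ p

variable {f g : ℕ → ℝ}

theorem isBigO_natCast_pow_pow {p q : ℕ} (h : p ≤ q) :
    (fun n : ℕ => (n : ℝ) ^ p) =O[atTop] fun n : ℕ => (n : ℝ) ^ q := by
  refine IsBigO.of_bound' ?_
  filter_upwards [eventually_ge_atTop 1] with n hn
  simp only [norm_pow, RCLike.norm_natCast]
  exact pow_le_pow_right₀ (Nat.one_le_cast.2 hn) h

namespace PolyBounded

theorem of_isBigO (hg : PolyBounded g) (h : f =O[atTop] g) : PolyBounded f :=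
  hg.imp fun _ hp => h.trans hp

theorem add (hf : PolyBounded f) (hg : PolyBounded g) : PolyBounded fun n => f n + g n := by
  obtain ⟨p, hp⟩ := hf
  obtain ⟨q, hq⟩ := hg
  exact ⟨max p q, (hp.trans (isBigO_natCast_pow_pow (le_max_left _ _))).add
    (hq.trans (isBigO_natCast_pow_pow (le_max_right _ _)))⟩

theorem mul (hf : PolyBounded f) (hg : PolyBounded g) : PolyBounded fun n => f n * g n := by
  obtain ⟨p, hp⟩ := hf
  obtain ⟨q, hq⟩ := hg
  exact ⟨p + q, by simpa only [pow_add] using hp.mul hq⟩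

protected theorem const (c : ℝ) : PolyBounded fun _ => c :=
  ⟨0, by simpa only [pow_zero] using isBigO_const_const c one_ne_zero atTop⟩

protected theorem natCast : PolyBounded fun n => (n : ℝ) :=
  ⟨1, by simpa only [pow_one] using isBigO_refl _ _⟩

end PolyBounded

theorem tendsto_log_natCast_atTop : Tendsto (fun n : ℕ => Real.log n) atTop atTop :=
  Real.tendsto_log_atTop.comp tendsto_natCast_atTop_atTop

theorem isBigO_const_log_natCast (c : ℝ) :
    (fun _ : ℕ => c) =O[atTop] fun n : ℕ => Real.log n :=
  (isLittleO_const_left.2 (Or.inr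
    (tendsto_norm_atTop_atTop.comp tendsto_log_natCast_atTop))).isBigO

theorem isBigO_log_natCast_natCast : (fun n : ℕ => Real.log n) =O[atTop] fun n : ℕ => (n : ℝ) :=
  (Real.isLittleO_log_id_atTop.comp_tendsto tendsto_natCast_atTop_atTop).isBigO

theorem PolyBounded.isBigO_log (hf : PolyBounded f) (h1 : ∀ n, 1 ≤ f n) :
    (fun n => Real.log (f n)) =O[atTop] fun n : ℕ => Real.log n := by
  obtain ⟨p, hp⟩ := hf
  obtain ⟨c, hc, hbound⟩ := hp.exists_pos
  have hlog : ∀ᶠ n : ℕ in atTop, ‖Real.log (f n)‖ ≤ ‖Real.log c + p * Real.log n‖ := by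
    filter_upwards [hbound.bound, eventually_gt_atTop 0] with n hfn hn
    have hn' : (0 : ℝ) < n := Nat.cast_pos.2 hn
    have hf0 : 0 < f n := one_pos.trans_le (h1 n)
    rw [Real.norm_of_nonneg hf0.le, Real.norm_of_nonneg (by positivity)] at hfn
    rw [Real.norm_of_nonneg (Real.log_nonneg (h1 n)), ← Real.log_pow,
      ← Real.log_mul hc.ne' (by positivity)]
    exact (Real.log_le_log hf0 hfn).trans (le_abs_self _)
  exact (IsBigO.of_bound' hlog).trans
    ((isBigO_const_log_natCast _).add ((isBigO_refl _ _).const_mul_left _))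

theorem eventually_le_mul_log_rpow {D : ℕ → ℝ} (hD : ∀ n, 0 ≤ D n) {k : ℕ} {s : ℝ} (hs : k < s)
    (hg : g =O[atTop] fun n : ℕ => D n * Real.log n ^ k) {c : ℝ} (hc : 0 < c) :
    ∀ᶠ n : ℕ in atTop, g n ≤ c * (D n * Real.log n ^ s) := by
  obtain ⟨C, hC⟩ := hg.bound
  have hlog : Tendsto (fun n : ℕ => Real.log n ^ (s - k)) atTop atTop :=
    (tendsto_rpow_atTop (sub_pos.2 hs)).comp tendsto_log_natCast_atTop
  filter_upwards [hC, hlog.eventually_ge_atTop (C / c),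
    tendsto_log_natCast_atTop.eventually_gt_atTop 0] with n hgn hCn hn
  have hDn : 0 ≤ D n * Real.log n ^ k := mul_nonneg (hD n) (by positivity)
  calc g n ≤ C * (D n * Real.log n ^ k) := by
        rw [← Real.norm_of_nonneg hDn]
        exact (le_abs_self _).trans hgn
    _ ≤ c * Real.log n ^ (s - k) * (D n * Real.log n ^ k) := by
        gcongr
        exact (div_le_iff₀' hc).1 hCn
    _ = c * (D n * Real.log n ^ s) := by
        rw [Real.rpow_sub hn, Real.rpow_natCast]
        field_simp

end PolynomialGrowth

section ModelComplexity

open Asymptotics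

/-- A radius such that moving all parameters of a network, bounded by `κ`, by at most this much
changes its values on `[−a,a]^d` by at most `e`. -/
def paramRadius (κ a : ℝ) (d r L : ℕ) (e : ℝ) : ℝ :=
  e / ((L + 2) * layerGrowth κ a d r ^ (L + 2))

section ParamRadius

variable {κ a e : ℝ} (d r L : ℕ)

theorem paramRadius_mul (hκ : 1 ≤ κ) (ha : 1 ≤ a) :
    (L + 2) * paramRadius κ a d r L e * layerGrowth κ a d r ^ (L + 2) = e := by
  have := one_pos.trans_le (one_le_layerGrowth hκ ha d r)
  unfold paramRadius
  field_simp

theorem paramRadius_pos (hκ : 1 ≤ κ) (ha : 1 ≤ a) (he : 0 < e) : 0 < paramRadius κ a d r L e := by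
  have := one_pos.trans_le (one_le_layerGrowth hκ ha d r)
  unfold paramRadius
  positivity

theorem paramRadius_le (hκ : 1 ≤ κ) (ha : 1 ≤ a) (he : 0 ≤ e) : paramRadius κ a d r L e ≤ e :=
  div_le_self he <| one_le_mul_of_one_le_of_one_le (by linarith [L.cast_nonneg (α := ℝ)])
    (one_le_pow₀ (one_le_layerGrowth hκ ha d r))

theorem log_paramRadius (hκ : 1 ≤ κ) (ha : 1 ≤ a) (he : 0 < e) :
    Real.log (paramRadius κ a d r L e) =
      Real.log e - (Real.log (L + 2) + (L + 2) * Real.log (layerGrowth κ a d r)) := by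
  have := one_pos.trans_le (one_le_layerGrowth hκ ha d r)
  rw [paramRadius, Real.log_div (by positivity) (by positivity),
    Real.log_mul (by positivity) (by positivity), Real.log_pow]
  push_cast
  rfl

end ParamRadius

variable {D : ℕ → ℝ} {T L r m : ℕ → ℕ} {e : ℕ → ℝ}

theorem isBigO_log_signPatternBound_pow (hTpoly : PolyBounded fun n => (T n : ℝ))
    (hT : (fun n => (T n : ℝ)) =O[atTop] fun n => D n * Real.log n)
    (hL : (fun n => (L n : ℝ)) =O[atTop] fun n => Real.log n)
    (hm : PolyBounded fun n => (m n : ℝ)) :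
    (fun n => Real.log (signPatternBound (T n) (m n) (L n + 2) ^ (L n + 2) : ℕ))
      =O[atTop] fun n => D n * Real.log n ^ 3 := by
  have hLpoly : PolyBounded fun n => (L n : ℝ) :=
    PolyBounded.natCast.of_isBigO (hL.trans isBigO_log_natCast_natCast)
  have hbase : PolyBounded fun n => 1 + (T n : ℝ) * (m n * (L n + 2) + 2) :=
    (PolyBounded.const 1).add
      (hTpoly.mul ((hm.mul (hLpoly.add (.const 2))).add (.const 2)))
  refine (((hL.add (isBigO_const_log_natCast 2)).mul hT).mul
    (hbase.isBigO_log fun n => le_add_of_nonneg_right (by positivity))).congr (fun n => ?_)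
      fun n => by ring
  unfold signPatternBound
  push_cast
  rw [Real.log_pow, Real.log_pow]
  push_cast
  ring

theorem isBigO_log_paramRadius {κ a : ℝ} (hκ : 1 ≤ κ) (ha : 1 ≤ a) (d : ℕ)
    (hL : (fun n => (L n : ℝ)) =O[atTop] fun n => Real.log n)
    (hr : PolyBounded fun n => (r n : ℝ)) (he : ∀ᶠ n in atTop, 0 < e n)
    (hlog : (fun n => Real.log (e n)) =O[atTop] fun n => Real.log n) :
    (fun n => Real.log (paramRadius κ a d (r n) (L n) (e n))) =O[atTop]
      fun n => Real.log n ^ 2 := by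
  have hLpoly : PolyBounded fun n => (L n : ℝ) :=
    PolyBounded.natCast.of_isBigO (hL.trans isBigO_log_natCast_natCast)
  have hdepth : (fun n => Real.log ((L n : ℝ) + 2)) =O[atTop] fun n => Real.log n :=
    (hLpoly.add (.const 2)).isBigO_log fun n => by linarith [(L n).cast_nonneg (α := ℝ)]
  have hgrowth : (fun n => Real.log (layerGrowth κ a d (r n))) =O[atTop] fun n => Real.log n :=
    PolyBounded.isBigO_log
      (((PolyBounded.const κ).mul ((hr.add (.const d)).add (.const 1))).mul (.const a))
      fun n => one_le_layerGrowth hκ ha d (r n)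
  have hlogsq : (fun n : ℕ => Real.log n) =O[atTop] fun n : ℕ => Real.log n ^ 2 := by
    simpa only [one_mul, ← sq] using
      (isBigO_const_log_natCast 1).mul (isBigO_refl (fun n : ℕ => Real.log n) atTop)
  refine IsBigO.congr' ?_ (he.mono fun n hn => (log_paramRadius d (r n) (L n) hκ ha hn).symm) .rfl
  refine (hlog.trans hlogsq).sub ((hdepth.trans hlogsq).add ?_)
  simpa only [← sq] using (hL.add (isBigO_const_log_natCast 2)).mul hgrowth

theorem eventually_exp_neg_le_pow (hD : ∀ n, 0 ≤ D n)
    (hT : (fun n => (T n : ℝ)) =O[atTop] fun n => D n * Real.log n) (he : ∀ᶠ n in atTop, 0 < e n)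
    (hlog : (fun n => Real.log (e n)) =O[atTop] fun n => Real.log n ^ 2) {c : ℝ} (hc : 0 < c)
    {s : ℝ} (hs : 3 < s) :
    ∀ᶠ n in atTop, Real.exp (-(D n * Real.log n ^ s)) ≤ (c * e n) ^ T n := by
  have hconst : (fun _ : ℕ => Real.log c) =O[atTop] fun n : ℕ => Real.log n ^ 2 := by
    simpa only [mul_one, ← sq] using
      (isBigO_const_log_natCast (Real.log c)).mul (isBigO_const_log_natCast 1)
  have hexponent : (fun n => -(T n * (Real.log c + Real.log (e n)))) =O[atTop]
      fun n => D n * Real.log n ^ 3 :=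
    (hT.mul (hconst.add hlog)).neg_left.congr_right fun n => by ring
  filter_upwards [eventually_le_mul_log_rpow hD (by exact_mod_cast hs) hexponent one_pos, he]
    with n hn hen
  rw [← Real.exp_log (pow_pos (mul_pos hc hen) (T n)), Real.log_pow,
    Real.log_mul hc.ne' hen.ne']
  exact Real.exp_le_exp.2 (by linarith)

end ModelComplexity

section Rates

open Asymptotics

/-- The minimax rate `n ^ (-β / (2β + d))` for `β`-smooth functions of `d` variables. -/
def minimaxRate (β : ℝ) (d n : ℕ) : ℝ := (n : ℝ) ^ (-(β / (2 * β + d)))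

/-- The effective dimension `n * minimaxRate β d n ^ 2`, which is the order of `r_n ^ 2`. -/
def effectiveDim (β : ℝ) (d n : ℕ) : ℝ := (n : ℝ) ^ ((d : ℝ) / (2 * β + d))

variable {β : ℝ} {d n : ℕ}

theorem minimaxRate_pos (hn : 0 < n) : 0 < minimaxRate β d n :=
  Real.rpow_pos_of_pos (Nat.cast_pos.2 hn) _

theorem minimaxRate_le_one (hβ : 0 < β) (hn : 0 < n) : minimaxRate β d n ≤ 1 :=
  Real.rpow_le_one_of_one_le_of_nonpos (Nat.one_le_cast.2 hn)
    (neg_nonpos.2 (by positivity))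

theorem inv_natCast_le_minimaxRate (hβ : 0 < β) (hn : 0 < n) :
    (n : ℝ)⁻¹ ≤ minimaxRate β d n := by
  rw [← Real.rpow_neg_one]
  refine Real.rpow_le_rpow_of_exponent_le (Nat.one_le_cast.2 hn) (neg_le_neg ?_)
  rw [div_le_one (by positivity)]
  linarith [d.cast_nonneg (α := ℝ)]

theorem isBigO_log_minimaxRate (β : ℝ) (d : ℕ) :
    (fun n => Real.log (minimaxRate β d n)) =O[atTop] fun n : ℕ => Real.log n := by
  refine ((isBigO_refl (fun n : ℕ => Real.log n) atTop).const_mul_left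
    (-(β / (2 * β + d)))).congr' ?_ .rfl
  filter_upwards [eventually_gt_atTop 0] with n hn
  exact (Real.log_rpow (Nat.cast_pos.2 hn) _).symm

theorem effectiveDim_nonneg (β : ℝ) (d n : ℕ) : 0 ≤ effectiveDim β d n :=
  Real.rpow_nonneg n.cast_nonneg _

theorem one_le_effectiveDim (hβ : 0 < β) (hn : 0 < n) : 1 ≤ effectiveDim β d n :=
  Real.one_le_rpow (Nat.one_le_cast.2 hn) (by positivity)

theorem effectiveDim_le (hβ : 0 < β) (hn : 0 < n) : effectiveDim β d n ≤ n := by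
  conv_rhs => rw [← Real.rpow_one (n : ℝ)]
  refine Real.rpow_le_rpow_of_exponent_le (Nat.one_le_cast.2 hn) ?_
  rw [div_le_one (by positivity)]
  linarith

theorem polyBounded_effectiveDim (hβ : 0 < β) (d : ℕ) : PolyBounded (effectiveDim β d) := by
  refine PolyBounded.natCast.of_isBigO (IsBigO.of_bound' ?_)
  filter_upwards [eventually_gt_atTop 0] with n hn
  rw [Real.norm_of_nonneg (effectiveDim_nonneg β d n), Real.norm_natCast]
  exact effectiveDim_le hβ hn

theorem mul_sq_minimaxRate (hβ : 0 < β) (hn : 0 < n) :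
    n * minimaxRate β d n ^ 2 = effectiveDim β d n := by
  have hn' : (0 : ℝ) < n := Nat.cast_pos.2 hn
  have : 2 * β + d ≠ 0 := by positivity
  calc n * minimaxRate β d n ^ 2
      = (n : ℝ) ^ (1 : ℝ) * (n : ℝ) ^ (-(β / (2 * β + d)) * (2 : ℕ)) := by
        rw [Real.rpow_one, Real.rpow_mul_natCast hn'.le, minimaxRate]
    _ = effectiveDim β d n := by
        rw [← Real.rpow_add hn', effectiveDim]
        congr 1
        push_cast
        field_simp
        ring

/-- `n * ε_n ^ 2` for the rate `ε_n = minimaxRate β d n * (log n) ^ γ`; up to constants, all error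
exponents are of this order. -/
def errorExponent (β : ℝ) (d : ℕ) (γ : ℝ) (n : ℕ) : ℝ :=
  effectiveDim β d n * Real.log n ^ (2 * γ)

theorem mul_sq_minimaxRate_mul_log_rpow (hβ : 0 < β) (γ : ℝ) (hn : 0 < n) :
    n * (minimaxRate β d n * Real.log n ^ γ) ^ 2 = errorExponent β d γ n := by
  rw [mul_pow, ← mul_assoc, mul_sq_minimaxRate hβ hn, ← Real.rpow_mul_natCast
    (Real.log_natCast_nonneg n), mul_comm γ, errorExponent, Nat.cast_ofNat]

theorem tendsto_errorExponent (hβ : 0 < β) (d : ℕ) {γ : ℝ} (hγ : 0 < γ) :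
    Tendsto (errorExponent β d γ) atTop atTop := by
  have hlog : Tendsto (fun n : ℕ => Real.log n ^ (2 * γ)) atTop atTop :=
    (tendsto_rpow_atTop (by positivity)).comp tendsto_log_natCast_atTop
  refine tendsto_atTop_mono' _ ?_ hlog
  filter_upwards [eventually_gt_atTop 0] with n hn
  exact le_mul_of_one_le_left (Real.rpow_nonneg (Real.log_natCast_nonneg n) _)
    (one_le_effectiveDim hβ hn)

theorem eventually_inv_le_mul_minimaxRate (hβ : 0 < β) (d : ℕ) {γ : ℝ} (hγ : 0 ≤ γ) {M : ℕ → ℝ}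
    (hM : Tendsto M atTop atTop) :
    ∀ᶠ n : ℕ in atTop, (n : ℝ)⁻¹ ≤ M n * (minimaxRate β d n * Real.log n ^ γ) := by
  filter_upwards [hM.eventually_ge_atTop 1, tendsto_log_natCast_atTop.eventually_ge_atTop 1,
    eventually_gt_atTop 0] with n hMn hlog hn
  have hrate : (n : ℝ)⁻¹ ≤ minimaxRate β d n * Real.log n ^ γ :=
    (inv_natCast_le_minimaxRate hβ hn).trans
      (le_mul_of_one_le_right (minimaxRate_pos hn).le (Real.one_le_rpow hlog hγ))
  exact hrate.trans (le_mul_of_one_le_left ((inv_nonneg.2 n.cast_nonneg).trans hrate) hMn)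

theorem polyBounded_gridSize {F : ℝ} (hF : 0 ≤ F) {τ : ℕ → ℝ}
    (hτ : ∀ᶠ n : ℕ in atTop, (n : ℝ)⁻¹ ≤ τ n) :
    PolyBounded fun n => ((⌊2 * F / (τ n / 8)⌋₊ + 1 : ℕ) : ℝ) := by
  refine (((PolyBounded.const (2 * F * 8)).mul .natCast).add (.const 1)).of_isBigO
    (IsBigO.of_bound' ?_)
  filter_upwards [hτ, eventually_gt_atTop 0] with n hn hn0
  have hτ0 : 0 < τ n := (inv_pos.2 (Nat.cast_pos.2 hn0)).trans_le hn
  rw [Real.norm_of_nonneg (by positivity), Real.norm_of_nonneg (by positivity)]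
  push_cast
  gcongr
  refine (Nat.floor_le (by positivity)).trans ?_
  rw [div_div_eq_mul_div, div_eq_mul_inv]
  gcongr
  exact inv_le_of_inv_le₀ (Nat.cast_pos.2 hn0) hn

end Rates

section ModelSequences

open Asymptotics

variable {β : ℝ} {Cr CL : ℝ}

theorem isBigO_natCast_ceil {g : ℕ → ℝ} (hg : ∀ n, 0 ≤ g n) {h : ℕ → ℝ} (hgh : g =O[atTop] h)
    (h1 : (fun _ => (1 : ℝ)) =O[atTop] h) : (fun n => (⌈g n⌉₊ : ℝ)) =O[atTop] h := by
  refine (IsBigO.of_bound' (Eventually.of_forall fun n => ?_)).trans (hgh.add h1)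
  rw [Real.norm_of_nonneg (Nat.cast_nonneg _), Real.norm_of_nonneg (by linarith [hg n])]
  exact (Nat.ceil_lt_add_one (hg n)).le

theorem isBigO_Ldepth (hCL : 0 ≤ CL) :
    (fun n => (Ldepth CL n : ℝ)) =O[atTop] fun n => Real.log n :=
  isBigO_natCast_ceil (fun n => mul_nonneg hCL (Real.log_natCast_nonneg n))
    ((isBigO_refl _ _).const_mul_left _) (isBigO_const_log_natCast 1)

theorem isBigO_sq_rwidth_add_one (hβ : 0 < β) (d : ℕ) (hCr : 0 ≤ Cr) :
    (fun n => ((rwidth Cr β d n : ℝ) + 1) ^ 2) =O[atTop] effectiveDim β d := by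
  set q : ℕ → ℝ := fun n => (n : ℝ) ^ ((d : ℝ) / (2 * (2 * β + d))) with hq
  have hsq (n : ℕ) : q n ^ 2 = effectiveDim β d n := by
    rw [hq, effectiveDim, ← Real.rpow_mul_natCast n.cast_nonneg]
    congr 1
    push_cast
    field_simp
  have hone : (fun _ => (1 : ℝ)) =O[atTop] q := by
    refine IsBigO.of_bound' ?_
    filter_upwards [eventually_gt_atTop 0] with n hn
    rw [norm_one]
    exact (Real.one_le_rpow (Nat.one_le_cast.2 hn) (by positivity)).trans (le_abs_self _)
  have hr : (fun n => (rwidth Cr β d n : ℝ)) =O[atTop] q :=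
    isBigO_natCast_ceil (fun n => by positivity) ((isBigO_refl _ _).const_mul_left _) hone
  exact ((hr.add hone).pow 2).congr_right hsq

theorem polyBounded_rwidth (hβ : 0 < β) (d : ℕ) (hCr : 0 ≤ Cr) :
    PolyBounded fun n => (rwidth Cr β d n : ℝ) := by
  refine (polyBounded_effectiveDim hβ d).of_isBigO
    ((IsBigO.of_bound' (Eventually.of_forall fun n => ?_)).trans
      (isBigO_sq_rwidth_add_one hβ d hCr))
  rw [Real.norm_natCast, Real.norm_of_nonneg (by positivity)]
  nlinarith [(rwidth Cr β d n).cast_nonneg (α := ℝ)]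

theorem card_paramIdx_le (d r L : ℕ) :
    Fintype.card (ParamIdx d r L) ≤ (r + 1) ^ 2 * (L + (d + 1)) := by
  simp only [ParamIdx, Fintype.card_sum, Fintype.card_prod, Fintype.card_fin, Fintype.card_unit]
  calc r * d + (r + ((L - 1) * (r * r) + ((L - 1) * r + (r + 1))))
      ≤ r * d + (r + (L * (r * r) + (L * r + (r + 1)))) := by gcongr <;> exact Nat.sub_le _ _
    _ ≤ r * d + (r + (L * (r * r) + (L * r + (r + 1)))) +
        (L * r + L + r ^ 2 * d + r ^ 2 + r * d + d) := Nat.le_add_right _ _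
    _ = (r + 1) ^ 2 * (L + (d + 1)) := by ring

theorem isBigO_card_paramIdx (hβ : 0 < β) (d : ℕ) (hCr : 0 ≤ Cr) (hCL : 0 ≤ CL) :
    (fun n => (Fintype.card (ParamIdx d (rwidth Cr β d n) (Ldepth CL n)) : ℝ)) =O[atTop]
      fun n => effectiveDim β d n * Real.log n := by
  refine (IsBigO.of_bound' (Eventually.of_forall fun n => ?_)).trans
    ((isBigO_sq_rwidth_add_one hβ d hCr).mul
      ((isBigO_Ldepth hCL).add (isBigO_const_log_natCast (d + 1))))
  rw [Real.norm_natCast, Real.norm_of_nonneg (by positivity)]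
  exact_mod_cast card_paramIdx_le d (rwidth Cr β d n) (Ldepth CL n)

theorem polyBounded_card_paramIdx (hβ : 0 < β) (d : ℕ) (hCr : 0 ≤ Cr) (hCL : 0 ≤ CL) :
    PolyBounded fun n => (Fintype.card (ParamIdx d (rwidth Cr β d n) (Ldepth CL n)) : ℝ) :=
  ((polyBounded_effectiveDim hβ d).mul
    (PolyBounded.natCast.of_isBigO isBigO_log_natCast_natCast)).of_isBigO
      (isBigO_card_paramIdx hβ d hCr hCL)

theorem tendsto_rwidth (hβ : 0 < β) {d : ℕ} (hd : 0 < d) (hCr : 0 < Cr) :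
    Tendsto (rwidth Cr β d) atTop atTop :=
  tendsto_nat_ceil_atTop.comp (((tendsto_rpow_atTop (by positivity)).comp
    tendsto_natCast_atTop_atTop).const_mul_atTop hCr)

end ModelSequences

section Approximation

/-- The number `M` at which the approximation theorem is applied for sample size `n`, so that
`M ^ d` is of the order of the width `r_n`. -/
def resolution (β : ℝ) (d n : ℕ) : ℕ := ⌊(n : ℝ) ^ (1 / (2 * (2 * β + d)))⌋₊

variable {β : ℝ} {d n : ℕ}

theorem tendsto_resolution (hβ : 0 < β) (d : ℕ) : Tendsto (resolution β d) atTop atTop :=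
  tendsto_nat_floor_atTop.comp
    ((tendsto_rpow_atTop (by positivity)).comp tendsto_natCast_atTop_atTop)

theorem resolution_le (β : ℝ) (d n : ℕ) :
    (resolution β d n : ℝ) ≤ (n : ℝ) ^ (1 / (2 * (2 * β + d))) :=
  Nat.floor_le (by positivity)

theorem ceil_mul_resolution_pow_le_rwidth {Cr : ℝ} (hCr : 0 ≤ Cr) (β : ℝ) (d n : ℕ) :
    ⌈Cr * (resolution β d n : ℝ) ^ d⌉₊ ≤ rwidth Cr β d n := by
  refine Nat.ceil_le_ceil (mul_le_mul_of_nonneg_left ?_ hCr)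
  calc (resolution β d n : ℝ) ^ d ≤ ((n : ℝ) ^ (1 / (2 * (2 * β + d)))) ^ d := by
        gcongr
        exact resolution_le β d n
    _ = (n : ℝ) ^ ((d : ℝ) / (2 * (2 * β + d))) := by
        rw [← Real.rpow_mul_natCast n.cast_nonneg, one_div_mul_eq_div]

theorem ceil_mul_logb_resolution_le_Ldepth {CL : ℝ} (hCL : 0 ≤ CL) (hβ : 0 < β) (hd : 0 < d)
    (hn : 0 < n) (hM : 0 < resolution β d n) :
    ⌈CL * Real.logb 2 (resolution β d n)⌉₊ ≤ Ldepth CL n := by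
  refine Nat.ceil_le_ceil (mul_le_mul_of_nonneg_left ?_ hCL)
  have hd1 : (1 : ℝ) ≤ d := Nat.one_le_cast.2 hd
  have hlog2 : 1 / (2 * (2 * β + d)) ≤ Real.log 2 :=
    (div_le_iff₀ (by positivity)).2 (by nlinarith [Real.log_two_gt_d9])
  rw [Real.logb, div_le_iff₀' (Real.log_pos one_lt_two)]
  calc Real.log (resolution β d n) ≤ Real.log ((n : ℝ) ^ (1 / (2 * (2 * β + d)))) :=
        Real.log_le_log (Nat.cast_pos.2 hM) (resolution_le β d n)
    _ = 1 / (2 * (2 * β + d)) * Real.log n := Real.log_rpow (Nat.cast_pos.2 hn) _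
    _ ≤ Real.log 2 * Real.log n := mul_le_mul_of_nonneg_right hlog2 (Real.log_natCast_nonneg n)

theorem one_div_resolution_rpow_le (hβ : 0 < β) (hn : 0 < n) (hM : 0 < resolution β d n) :
    1 / (resolution β d n : ℝ) ^ (2 * β) ≤ 2 ^ (2 * β) * minimaxRate β d n := by
  set y : ℝ := (n : ℝ) ^ (1 / (2 * (2 * β + d))) with hy
  have hypos : 0 < y := Real.rpow_pos_of_pos (Nat.cast_pos.2 hn) _
  have hhalf : y / 2 ≤ resolution β d n := by
    have hfloor : y < resolution β d n + 1 := Nat.lt_floor_add_one y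
    have hM1 : (1 : ℝ) ≤ resolution β d n := Nat.one_le_cast.2 hM
    linarith
  calc 1 / (resolution β d n : ℝ) ^ (2 * β) ≤ 1 / (y / 2) ^ (2 * β) := by gcongr
    _ = 2 ^ (2 * β) * (y ^ (2 * β))⁻¹ := by
        rw [Real.div_rpow hypos.le zero_le_two, one_div_div, div_eq_mul_inv]
    _ = 2 ^ (2 * β) * minimaxRate β d n := by
        rw [hy, minimaxRate, ← Real.rpow_mul n.cast_nonneg, Real.rpow_neg n.cast_nonneg]
        congr 3
        field_simp

theorem eventually_exists_netOfParams_approx {a : ℝ} (hd : 0 < d) (hβ : 0 < β) {ν : ℝ}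
    (hν0 : 0 ≤ ν) (hν1 : ν ≤ 1) {f₀ : (Fin d → ℝ) → ℝ} {CL Cr CB c₁ : ℝ} (hCL : 0 ≤ CL)
    (hCr : 0 < Cr) (hc₁ : 0 ≤ c₁)
    (happrox : ∀ᶠ M : ℕ in atTop, ∃ g : (Fin d → ℝ) → ℝ,
      memDNN ν d ⌈CL * Real.logb 2 M⌉₊ ⌈Cr * (M : ℝ) ^ d⌉₊ CB g ∧
      ∀ x ∈ cube a d, |g x - f₀ x| ≤ c₁ / (M : ℝ) ^ (2 * β)) :
    ∀ᶠ n in atTop, ∃ θ : ParamIdx d (rwidth Cr β d n) (Ldepth CL n) → ℝ,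
      (∀ i, |θ i| ≤ max CB 1) ∧ ∀ x ∈ cube a d,
        |netOfParams ν d (rwidth Cr β d n) (Ldepth CL n) θ x - f₀ x| ≤
          c₁ * 2 ^ (2 * β) * minimaxRate β d n := by
  filter_upwards [(tendsto_resolution hβ d).eventually happrox, eventually_gt_atTop 0,
    (tendsto_resolution hβ d).eventually_gt_atTop 0,
    (tendsto_rwidth hβ hd hCr).eventually_ge_atTop 2] with n ⟨g, hg, hgf₀⟩ hn hM hr
  obtain ⟨θ, hθ, rfl⟩ := (((hg.mono_bound (le_max_left CB 1)).mono_width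
    (ceil_mul_resolution_pow_le_rwidth hCr.le β d n)).mono_depth hν0 hν1 (le_max_right CB 1) hr
    (ceil_mul_logb_resolution_le_Ldepth hCL hβ hd hn hM)).exists_netOfParams_eq
  refine ⟨θ, hθ, fun x hx => (hgf₀ x hx).trans ?_⟩
  rw [← mul_one_div, mul_assoc]
  exact mul_le_mul_of_nonneg_left (one_div_resolution_rpow_le hβ hn hM) hc₁

end Approximation

section PosteriorConcentration

variable {β Cr CL γ : ℝ}

theorem eventually_signPatternBound_le (hβ : 0 < β) (d : ℕ) (hCr : 0 ≤ Cr) (hCL : 0 ≤ CL)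
    (hγ : 3 / 2 < γ) {k : ℕ → ℕ} (hk : PolyBounded fun n => (k n : ℝ)) :
    ∀ᶠ n in atTop, ((signPatternBound (Fintype.card (ParamIdx d (rwidth Cr β d n) (Ldepth CL n)))
      (n * (rwidth Cr β d n + k n)) (Ldepth CL n + 2) ^ (Ldepth CL n + 2) : ℕ) : ℝ) ≤
      Real.exp (errorExponent β d γ n) := by
  have hm : PolyBounded fun n => ((n * (rwidth Cr β d n + k n) : ℕ) : ℝ) := by
    push_cast
    exact PolyBounded.natCast.mul ((polyBounded_rwidth hβ d hCr).add hk)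
  filter_upwards [eventually_le_mul_log_rpow (effectiveDim_nonneg β d)
    (by push_cast; linarith : ((3 : ℕ) : ℝ) < 2 * γ) (isBigO_log_signPatternBound_pow
      (polyBounded_card_paramIdx hβ d hCr hCL) (isBigO_card_paramIdx hβ d hCr hCL)
      (isBigO_Ldepth hCL) hm) one_pos] with n hn
  rw [one_mul] at hn
  exact (Real.log_le_iff_le_exp
    (Nat.cast_pos.2 (pow_pos (signPatternBound_pos _ _ _) _))).1 hn

theorem eventually_exp_neg_le_prior (hβ : 0 < β) (d : ℕ) (hCr : 0 ≤ Cr) (hCL : 0 ≤ CL)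
    (hγ : 3 / 2 < γ) {κ a c : ℝ} (hκ : 1 ≤ κ) (ha : 1 ≤ a) (hc : 0 < c) :
    ∀ᶠ n in atTop, Real.exp (-errorExponent β d γ n) ≤
      (c * 2 * paramRadius κ a d (rwidth Cr β d n) (Ldepth CL n) (minimaxRate β d n)) ^
        Fintype.card (ParamIdx d (rwidth Cr β d n) (Ldepth CL n)) := by
  have hrate : ∀ᶠ n in atTop, 0 < minimaxRate β d n :=
    (eventually_gt_atTop 0).mono fun _ => minimaxRate_pos
  exact eventually_exp_neg_le_pow (effectiveDim_nonneg β d) (isBigO_card_paramIdx hβ d hCr hCL)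
    (hrate.mono fun n => paramRadius_pos d (rwidth Cr β d n) (Ldepth CL n) hκ ha)
    (isBigO_log_paramRadius hκ ha d (isBigO_Ldepth hCL) (polyBounded_rwidth hβ d hCr) hrate
      (isBigO_log_minimaxRate β d)) (by positivity) (by linarith)

theorem eventually_mul_effectiveDim_le (β : ℝ) (d : ℕ) (hγ : 0 < γ) (C : ℝ) :
    ∀ᶠ n in atTop, C * effectiveDim β d n ≤ errorExponent β d γ n / 2 := by
  have hbigO : (fun n => C * effectiveDim β d n) =O[atTop]
      fun n : ℕ => effectiveDim β d n * Real.log n ^ 0 := by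
    simp only [pow_zero, mul_one]
    exact (Asymptotics.isBigO_refl _ _).const_mul_left C
  filter_upwards [eventually_le_mul_log_rpow (effectiveDim_nonneg β d)
    (by push_cast; positivity : ((0 : ℕ) : ℝ) < 2 * γ) hbigO one_half_pos] with n hn
  exact hn.trans_eq (one_div_mul_eq_div _ _)

theorem sum_error_terms_le {V R C δ b : ℝ} (hV : 0 ≤ V) (hR : 192 * V ≤ R) (hC : C ≤ V / 2)
    (hδ : 0 < δ) (hb : Real.exp (-V) ≤ b) :
    ENNReal.ofReal (Real.exp (R / 64) * Real.exp (-(R / 16))) +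
      ENNReal.ofReal (Real.exp (-V) * Real.exp C) +
      ENNReal.ofReal (Real.exp (-(R / 64)) / (δ * (Real.exp (-V) * b))) ≤
    ENNReal.ofReal ((2 + 1 / δ) * Real.exp (-(V / 2))) := by
  have hb0 : 0 < b := (Real.exp_pos _).trans_le hb
  have htests : Real.exp (R / 64) * Real.exp (-(R / 16)) ≤ Real.exp (-(V / 2)) := by
    rw [← Real.exp_add]
    exact Real.exp_le_exp.2 (by linarith)
  have hevidence : Real.exp (-V) * Real.exp C ≤ Real.exp (-(V / 2)) := by
    rw [← Real.exp_add]
    exact Real.exp_le_exp.2 (by linarith)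
  have hratio : Real.exp (-(R / 64)) / (δ * (Real.exp (-V) * b)) ≤
      1 / δ * Real.exp (-(V / 2)) := by
    calc Real.exp (-(R / 64)) / (δ * (Real.exp (-V) * b))
        ≤ Real.exp (-(3 * V)) / (δ * (Real.exp (-V) * Real.exp (-V))) := by
          gcongr
          linarith
      _ = 1 / δ * Real.exp (-V) := by
          rw [← Real.exp_add, mul_comm δ, ← div_div, ← Real.exp_sub]
          ring_nf
      _ ≤ 1 / δ * Real.exp (-(V / 2)) := by
          gcongr
          linarith
  rw [← ENNReal.ofReal_add (by positivity) (by positivity),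
    ← ENNReal.ofReal_add (by positivity) (by positivity)]
  exact ENNReal.ofReal_le_ofReal (by linarith)

theorem measure_lt_postMass_bernLik_le_exp {ν F : ℝ} (hν0 : 0 ≤ ν) (hν1 : ν ≤ 1) (hF : 0 ≤ F)
    {d r L n : ℕ} {a B c : ℝ} (ha : 1 ≤ a) (hB : 0 ≤ B) (hc : 0 < c)
    {PX : Measure (Fin d → ℝ)} [IsProbabilityMeasure PX] (hPX : PX (cube a d) = 1)
    {f₀ : (Fin d → ℝ) → ℝ} (hf₀ : Measurable f₀) (hf₀F : ∀ x ∈ cube a d, |f₀ x| ≤ F)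
    {Pr : Measure (ParamIdx d r L → ℝ)} [IsProbabilityMeasure Pr] {π : (ParamIdx d r L → ℝ) → ℝ}
    (hPr : Pr = volume.withDensity fun θ => ENNReal.ofReal (π θ))
    (hπ : ∀ θ, (∀ i, |θ i| ≤ B + 1) → c ^ Fintype.card (ParamIdx d r L) ≤ π θ)
    {θ₀ : ParamIdx d r L → ℝ} (hθ₀ : ∀ i, |θ₀ i| ≤ B) {e C : ℝ} (he0 : 0 < e) (he1 : e ≤ 1)
    (he : ∀ x ∈ cube a d, |netOfParams ν d r L θ₀ x - f₀ x| ≤ C * e)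
    {V τ : ℝ} (hV : 1 ≤ V) (hτ : 0 < τ) (hVτ : 192 * V ≤ n * τ ^ 2)
    (hCV : (1 + C) ^ 2 / sigmoid (-F) ^ 2 * (n * e ^ 2) ≤ V / 2)
    (hcard : ((signPatternBound (Fintype.card (ParamIdx d r L))
      (n * (r + (⌊2 * F / (τ / 8)⌋₊ + 1))) (L + 2) ^ (L + 2) : ℕ) : ℝ) ≤ Real.exp V)
    (hprior : Real.exp (-V) ≤
      (c * 2 * paramRadius (B + 1) a d r L e) ^ Fintype.card (ParamIdx d r L))
    {δ : ℝ} (hδ : 0 < δ) :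
    Measure.pi (fun _ : Fin n => logisticLaw d PX f₀)
      {D | ENNReal.ofReal δ < postMass Pr (bernLik ν F d r L D)
        {θ | τ < l2dist d PX (fun x => sigmoid (trunc F (netOfParams ν d r L θ x)))
          fun x => sigmoid (f₀ x)}} ≤
      ENNReal.ofReal ((2 + 1 / δ) * Real.exp (-(V / 2))) := by
  have hB1 : 1 ≤ B + 1 := le_add_of_nonneg_left hB
  have hradius := (paramRadius_le d r L hB1 ha he0.le).trans he1
  have hnτ : n * (τ / 8) ^ 2 = n * τ ^ 2 / 64 := by ring
  refine (measure_lt_postMass_bernLik_le hν0 hν1 hF ha hB1 hc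
    (paramRadius_pos d r L hB1 ha he0) hPX hf₀ hf₀F hPr hπ
    (fun i => (hθ₀ i).trans (by linarith)) he hτ (by linarith)
    (hcard.trans (Real.exp_le_exp.2 (by linarith))) (Real.exp_pos (-V)) hδ).trans ?_
  rw [paramRadius_mul d r L hB1 ha, ← mul_assoc c, hnτ]
  refine sum_error_terms_le (by linarith) hVτ (le_of_eq_of_le ?_ hCV) hδ hprior
  ring

theorem posterior_concentration_logistic_regression_general
    {a : ℝ} (ha : 1 ≤ a) {d : ℕ} (hd : 0 < d) {β F : ℝ} (hβ : 0 < β) (hF : 0 ≤ F)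
    {ν : ℝ} (hν0 : 0 ≤ ν) (hν1 : ν ≤ 1)
    {f₀ : (Fin d → ℝ) → ℝ} (hf₀ : Measurable f₀) (hf₀F : ∀ x ∈ cube a d, |f₀ x| ≤ F)
    {PX : Measure (Fin d → ℝ)} [IsProbabilityMeasure PX] (hPX : PX (cube a d) = 1)
    {CL Cr CB c₁ : ℝ} (hCL : 0 ≤ CL) (hCr : 0 < Cr) (hc₁ : 0 ≤ c₁)
    (happrox : ∀ᶠ M : ℕ in atTop, ∃ g : (Fin d → ℝ) → ℝ,
      memDNN ν d ⌈CL * Real.logb 2 M⌉₊ ⌈Cr * (M : ℝ) ^ d⌉₊ CB g ∧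
      ∀ x ∈ cube a d, |g x - f₀ x| ≤ c₁ / (M : ℝ) ^ (2 * β))
    {Pr : ∀ n : ℕ, Measure (ParamIdx d (rwidth Cr β d n) (Ldepth CL n) → ℝ)}
    [∀ n, IsProbabilityMeasure (Pr n)]
    {π : ∀ n : ℕ, (ParamIdx d (rwidth Cr β d n) (Ldepth CL n) → ℝ) → ℝ}
    (hPr : ∀ n, Pr n = volume.withDensity fun θ => ENNReal.ofReal (π n θ))
    (hπ : ∀ κ : ℝ, 0 < κ → ∃ c : ℝ, 0 < c ∧ ∀ n θ, (∀ i, |θ i| ≤ κ) →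
      c ^ Fintype.card (ParamIdx d (rwidth Cr β d n) (Ldepth CL n)) ≤ π n θ)
    {γ : ℝ} (hγ : 3 / 2 < γ) {M : ℕ → ℝ} (hM : Tendsto M atTop atTop) {δ : ℝ} (hδ : 0 < δ) :
    Tendsto (fun n : ℕ => Measure.pi (fun _ : Fin n => logisticLaw d PX f₀)
      {D | ENNReal.ofReal δ <
        postMass (Pr n) (bernLik ν F d (rwidth Cr β d n) (Ldepth CL n) D)
          {θ | M n * (minimaxRate β d n * Real.log n ^ γ) < l2dist d PX
            (fun x => sigmoid
              (trunc F (netOfParams ν d (rwidth Cr β d n) (Ldepth CL n) θ x)))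
            fun x => sigmoid (f₀ x)}}) atTop (nhds 0) := by
  obtain ⟨c, hc, hdensity⟩ := hπ (max CB 1 + 1) (by positivity)
  have hB1 : 1 ≤ max CB 1 + 1 := le_add_of_nonneg_left (by positivity)
  have hγ0 : 0 < γ := by linarith
  have hV := tendsto_errorExponent hβ d hγ0
  have hbound : Tendsto (fun n => ENNReal.ofReal
      ((2 + 1 / δ) * Real.exp (-(errorExponent β d γ n / 2)))) atTop (nhds 0) := by
    rw [← ENNReal.ofReal_zero, ← mul_zero (2 + 1 / δ)]
    exact ENNReal.tendsto_ofReal ((Real.tendsto_exp_neg_atTop_nhds_zero.comp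
      (hV.atTop_div_const two_pos)).const_mul _)
  have hτ := eventually_inv_le_mul_minimaxRate hβ d hγ0.le hM
  refine tendsto_of_tendsto_of_tendsto_of_le_of_le' tendsto_const_nhds hbound
    (Eventually.of_forall fun _ => zero_le) ?_
  filter_upwards [eventually_exists_netOfParams_approx hd hβ hν0 hν1 hCL hCr hc₁ happrox,
    eventually_signPatternBound_le hβ d hCr.le hCL hγ (polyBounded_gridSize hF hτ),
    eventually_exp_neg_le_prior hβ d hCr.le hCL hγ hB1 ha hc,
    eventually_mul_effectiveDim_le β d hγ0 ((1 + c₁ * 2 ^ (2 * β)) ^ 2 / sigmoid (-F) ^ 2),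
    hV.eventually_ge_atTop 1,
    hM.eventually_ge_atTop 192, hτ, eventually_gt_atTop 0]
    with n ⟨θ₀, hθ₀, happ⟩ hcard hprior hevidence hV1 hMn hτn hn
  refine measure_lt_postMass_bernLik_le_exp hν0 hν1 hF ha (by positivity) hc hPX hf₀ hf₀F (hPr n)
    (hdensity n) hθ₀ (minimaxRate_pos hn) (minimaxRate_le_one hβ hn) happ hV1
    ((inv_pos.2 (Nat.cast_pos.2 hn)).trans_le hτn) ?_ ?_ hcard hprior hδ
  · rw [mul_pow, mul_left_comm, mul_sq_minimaxRate_mul_log_rpow hβ γ hn]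
    exact mul_le_mul_of_nonneg_right (by nlinarith) (by linarith)
  · rwa [mul_sq_minimaxRate hβ hn]

end PosteriorConcentration

/-- posterior concentration for nonparametric logistic regression with fully
connected Bayesian neural networks.  Under Assumption 1 on the prior for the network
parameters, and with the architecture determined by constants `C_L, C_r` satisfying the
bounded-parameter approximation theorem, the posterior mass of
`{θ : ‖φ ∘ T_F ∘ f_{θ,ρν} − φ ∘ f₀‖_{2,P_X} > M_n ε_n}` with
`ε_n = n^{−β/(2β+d)} (log n)^γ`, `γ > 2`, converges to `0` in `P₀ⁿ`-probability. -/
theorem posterior_concentration_logistic_regression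
    (a : ℝ) (ha : 1 ≤ a) (d : ℕ) (hd : 0 < d)
    (β K F : ℝ) (hβ : 0 < β) (hK : 1 ≤ K) (hF : 1 ≤ F)
    (ν : ℝ) (hν0 : 0 ≤ ν) (hν1 : ν < 1)
    -- the true log-odds function
    (f₀ : (Fin d → ℝ) → ℝ) (hf₀ : memHolder a d β K f₀) (hf₀bd : ∀ x, |f₀ x| ≤ F)
    -- the covariate distribution, supported in the cube `[−a,a]^d`
    (PX : Measure (Fin d → ℝ)) (hPXprob : IsProbabilityMeasure PX)
    (hPXsupp : PX (cube a d) = 1)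
    -- the law of one observation `(X, Y)`:  `X ∼ P_X`, `Y | X ∼ Bernoulli(φ(f₀(X)))`
    (μD : Measure ((Fin d → ℝ) × ℝ)) (hμDprob : IsProbabilityMeasure μD)
    (hμD : μD = logisticLaw d PX f₀)
    -- the constants of the bounded-parameter approximation theorem
    (CL Cr CB c₁ : ℝ) (hCL : 0 < CL) (hCr : 0 < Cr) (hCB : 0 < CB) (hc₁ : 0 < c₁)
    (happrox : ∀ f : (Fin d → ℝ) → ℝ, memHolder a d β K f →
      ∃ M₀ : ℕ, ∀ M : ℕ, M₀ ≤ M →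
        ∃ g : (Fin d → ℝ) → ℝ,
          memDNN ν d ⌈CL * Real.logb 2 M⌉₊ ⌈Cr * (M : ℝ) ^ d⌉₊ CB g ∧
          ∀ x ∈ cube a d, |g x - f x| ≤ c₁ / (M : ℝ) ^ (2 * β))
    -- the prior on the network parameters, with density satisfying Assumption 1
    (Prθ : ∀ n : ℕ, Measure (ParamIdx d (rwidth Cr β d n) (Ldepth CL n) → ℝ))
    (hPrθprob : ∀ n, IsProbabilityMeasure (Prθ n))
    (πθ : ∀ n : ℕ, (ParamIdx d (rwidth Cr β d n) (Ldepth CL n) → ℝ) → ℝ)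
    (hπθmeas : ∀ n, Measurable (πθ n)) (hπθnn : ∀ n θ, 0 ≤ πθ n θ)
    (hπθdens : ∀ n, Prθ n = volume.withDensity fun θ => ENNReal.ofReal (πθ n θ))
    (hπθlow : ∀ κ : ℝ, 0 < κ → ∃ δκ : ℝ, 0 < δκ ∧
      ∀ n : ℕ, ∀ θ : ParamIdx d (rwidth Cr β d n) (Ldepth CL n) → ℝ,
        (∀ i, |θ i| ≤ κ) →
          δκ ^ Fintype.card (ParamIdx d (rwidth Cr β d n) (Ldepth CL n)) ≤ πθ n θ)
    -- the rate `ε_n = n^{−β/(2β+d)} (log n)^γ` with `γ > 2`, and any `M_n → ∞`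
    (γ : ℝ) (hγ : 2 < γ)
    (ε : ℕ → ℝ)
    (hε : ∀ n : ℕ, ε n = (n : ℝ) ^ (-(β / (2 * β + d))) * Real.log n ^ γ)
    (M : ℕ → ℝ) (hM : Tendsto M atTop atTop) :
    ∀ δ : ℝ, 0 < δ →
      Tendsto
        (fun n : ℕ =>
          Measure.pi (fun _ : Fin n => μD)
            {D | ENNReal.ofReal δ <
              postMass (Prθ n)
                (bernLik ν F d (rwidth Cr β d n) (Ldepth CL n) D)
                {θ | M n * ε n <
                  l2dist d PX
                    (fun x => sigmoid
                      (trunc F (netOfParams ν d (rwidth Cr β d n) (Ldepth CL n) θ x)))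
                    (fun x => sigmoid (f₀ x))}})
        atTop (nhds 0) := by
  subst hμD
  obtain rfl : ε = fun n => minimaxRate β d n * Real.log n ^ γ := funext hε
  exact fun δ hδ => posterior_concentration_logistic_regression_general ha hd hβ (by linarith) hν0
    hν1.le hf₀.1.continuous.measurable (fun x _ => hf₀bd x) hPXsupp hCL.le hCr hc₁.le
    (eventually_atTop.2 (happrox f₀ hf₀)) hπθdens hπθlow (by linarith) hM hδ
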